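/- Let K be a number field. Then the set {(a₁, a₂) ∈ K² : the equation a₁x₁² + a₂x₂² = 0 has only the trivial solution x₁ = x₂ = 0 in K} is diophantine over K. -/

import Mathlib

/-- A subset `S ⊆ K^ι` is diophantine over `K` if there are `m ∈ ℕ` and a polynomial
`f` in the variables `y_i` (`i : ι`) and `x_1, …, x_m` with coefficients in `K` such that
`a ∈ S` iff `f(a, x) = 0` has a solution `x ∈ K^m`. -/
def IsDiophantine {K : Type*} [Field K] {ι : Type*} [Fintype ι] (S : Set (ι → K)) : Prop :=
  ∃ (m : ℕ) (f : MvPolynomial (ι ⊕ Fin m) K),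
    ∀ a : ι → K, a ∈ S ↔ ∃ x : Fin m → K, MvPolynomial.eval (Sum.elim a x) f = 0

set_option autoImplicit false
set_option linter.unusedVariables false
set_option linter.unusedSectionVars false

namespace NSD
open NumberField NumberField.Units NumberField.Units.dirichletUnitTheorem Module

/-- tent function -/
noncomputable def tent (t : ℝ) : ℝ := max 0 (1 - |t|)

lemma tent_nonneg (t : ℝ) : 0 ≤ tent t := le_max_left _ _
lemma tent_le_one (t : ℝ) : tent t ≤ 1 := max_le zero_le_one (by linarith [abs_nonneg t])
lemma tent_lip (s t : ℝ) : |tent s - tent t| ≤ |s - t| := by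
  unfold tent
  have h1 := abs_max_sub_max_le_abs (1 - |s|) (1 - |t|) 0
  rw [max_comm 0, max_comm 0]
  refine h1.trans ?_
  have : 1 - |s| - (1 - |t|) = |t| - |s| := by ring
  rw [this, abs_sub_comm s t]
  exact abs_abs_sub_abs_le_abs_sub t s
lemma abs_le_of_tent_ne (t : ℝ) (h : tent t ≠ 0) : |t| ≤ 1 := by
  by_contra hc
  push Not at hc
  exact h (max_eq_left (by linarith))

lemma tent_sum (t : ℝ) : ∑ k ∈ ({-⌊t⌋, -⌊t⌋ - 1} : Finset ℤ), tent ((k : ℝ) + t) = 1 := by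
  rw [Finset.sum_pair (by omega)]
  have h1 := Int.floor_le t
  have h2 := Int.lt_floor_add_one t
  unfold tent
  push_cast
  rw [abs_of_nonneg (by linarith), abs_of_nonpos (by linarith), max_eq_right (by linarith),
    max_eq_right (by linarith)]
  ring

lemma tent_zero_of_not_mem (t : ℝ) (k : ℤ) (hk : k ∉ ({-⌊t⌋, -⌊t⌋ - 1} : Finset ℤ)) :
    tent ((k : ℝ) + t) = 0 := by
  simp only [Finset.mem_insert, Finset.mem_singleton, not_or] at hk
  have h1 := Int.floor_le t
  have h2 := Int.lt_floor_add_one t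
  unfold tent
  apply max_eq_left
  rcases lt_or_gt_of_ne hk.1 with h | h
  · have : k + 2 ≤ -⌊t⌋ := by omega
    have : (k : ℝ) + 2 ≤ -⌊t⌋ := by exact_mod_cast this
    rw [abs_of_neg (by linarith)]; linarith
  · have : -⌊t⌋ + 1 ≤ k := by omega
    have : -(⌊t⌋ : ℝ) + 1 ≤ k := by exact_mod_cast this
    rw [abs_of_nonneg (by linarith)]; linarith

lemma prod_tent_lip {ι : Type*} (s : Finset ι) (f g : ι → ℝ) :
    |∏ i ∈ s, tent (f i) - ∏ i ∈ s, tent (g i)| ≤ ∑ i ∈ s, |f i - g i| := by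
  classical
  induction s using Finset.induction_on with
  | empty => simp
  | insert a s ha ih =>
    rw [Finset.prod_insert ha, Finset.prod_insert ha, Finset.sum_insert ha]
    have e : tent (f a) * ∏ i ∈ s, tent (f i) - tent (g a) * ∏ i ∈ s, tent (g i)
      = (tent (f a) - tent (g a)) * ∏ i ∈ s, tent (f i)
        + tent (g a) * (∏ i ∈ s, tent (f i) - ∏ i ∈ s, tent (g i)) := by ring
    rw [e]
    refine (abs_add_le _ _).trans ?_
    rw [abs_mul, abs_mul]
    have hp0 : 0 ≤ ∏ i ∈ s, tent (f i) := Finset.prod_nonneg fun i _ => tent_nonneg _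
    have hp : ∏ i ∈ s, tent (f i) ≤ 1 :=
      Finset.prod_le_one (fun i _ => tent_nonneg _) (fun i _ => tent_le_one _)
    rw [abs_of_nonneg hp0, abs_of_nonneg (tent_nonneg (g a))]
    have h1 := tent_lip (f a) (g a)
    have := abs_nonneg (tent (f a) - tent (g a))
    have := abs_nonneg (∏ i ∈ s, tent (f i) - ∏ i ∈ s, tent (g i))
    have := tent_nonneg (g a)
    have := tent_le_one (g a)
    gcongr
    · nlinarith
    · nlinarith

lemma hasSum_prod_tent {r : ℕ} (t : Fin r → ℝ) :
    HasSum (fun k : Fin r → ℤ => ∏ i, tent ((k i : ℝ) + t i)) 1 := by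
  classical
  have h := Finset.prod_univ_sum (fun i : Fin r => ({-⌊t i⌋, -⌊t i⌋ - 1} : Finset ℤ))
    (fun i k => tent ((k : ℝ) + t i))
  simp only [tent_sum, Finset.prod_const_one] at h
  rw [h]
  apply hasSum_sum_of_ne_finset_zero
  intro k hk
  rw [Fintype.mem_piFinset] at hk
  push Not at hk
  obtain ⟨i, hi⟩ := hk
  exact Finset.prod_eq_zero (Finset.mem_univ i) (tent_zero_of_not_mem _ _ hi)

open scoped Classical

variable (M : Type*) [Field M] [NumberField M]

/-- real basis of log space -/
noncomputable def lb : Basis (Fin (rank M)) ℝ (logSpace M) := 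
  (basisUnitLattice M).ofZLatticeBasis ℝ _

/-- bump on log space -/
noncomputable def psi (v : logSpace M) : ℝ := ∏ i, tent ((lb M).repr v i)

lemma psi_nonneg (v) : 0 ≤ psi M v := Finset.prod_nonneg fun i _ => tent_nonneg _
lemma psi_le_one (v) : psi M v ≤ 1 :=
  Finset.prod_le_one (fun i _ => tent_nonneg _) (fun i _ => tent_le_one _)

lemma psi_lip : ∃ C : ℝ, 0 ≤ C ∧ ∀ v v', |psi M v - psi M v'| ≤ C * ‖v - v'‖ := by
  let T : logSpace M →L[ℝ] (Fin (rank M) → ℝ) :=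
    LinearMap.toContinuousLinearMap (lb M).equivFun.toLinearMap
  refine ⟨rank M * ‖T‖, by positivity, fun v v' => ?_⟩
  refine (prod_tent_lip _ _ _).trans ?_
  have : ∀ i ∈ Finset.univ, |(lb M).repr v i - (lb M).repr v' i| ≤ ‖T‖ * ‖v - v'‖ := by
    intro i _
    have h1 := T.le_opNorm (v - v')
    have h2 := norm_le_pi_norm (T (v - v')) i
    have h3 : T (v - v') i = (lb M).repr v i - (lb M).repr v' i := by
      simp [T]
    rw [h3, Real.norm_eq_abs] at h2
    exact h2.trans h1
  refine (Finset.sum_le_sum this).trans ?_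
  simp [mul_assoc]

lemma psi_supp : ∃ C : ℝ, 0 ≤ C ∧ ∀ v, psi M v ≠ 0 → ‖v‖ ≤ C := by
  refine ⟨∑ i, ‖lb M i‖, Finset.sum_nonneg fun i _ => norm_nonneg _, fun v hv => ?_⟩
  rw [psi, Finset.prod_ne_zero_iff] at hv
  conv_lhs => rw [← (lb M).sum_repr v]
  refine (norm_sum_le _ _).trans (Finset.sum_le_sum fun i hi => ?_)
  rw [norm_smul, Real.norm_eq_abs]
  have := abs_le_of_tent_ne _ (hv i hi)
  nlinarith [norm_nonneg (lb M i)]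

noncomputable def unitEquiv : torsion M × (Fin (rank M) → ℤ) ≃ (𝓞 M)ˣ :=
  Equiv.ofBijective (fun p => p.1 * ∏ i, (fundSystem M i) ^ (p.2 i)) <| by
    rw [Function.bijective_iff_existsUnique]
    intro u
    obtain ⟨p, hp, hu⟩ := exist_unique_eq_mul_prod M u
    exact ⟨p, hp.symm, fun y hy => hu y hy.symm⟩

lemma psi_unitEquiv (p : torsion M × (Fin (rank M) → ℤ)) (v : logSpace M) :
    psi M (logEmbedding M (Additive.ofMul (unitEquiv M p)) + v)
      = ∏ i, tent ((p.2 i : ℝ) + (lb M).repr v i) := by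
  have h : logEmbedding M (Additive.ofMul (unitEquiv M p)) = ∑ i, (p.2 i : ℝ) • lb M i := by
    have h0 : unitEquiv M p = p.1 * ∏ i, (fundSystem M i) ^ (p.2 i) := rfl
    rw [h0, ofMul_mul, map_add, (logEmbedding_eq_zero_iff).2 p.1.2, zero_add, ofMul_prod, map_sum]
    refine Finset.sum_congr rfl fun i _ => ?_
    rw [ofMul_zpow, map_zsmul, logEmbedding_fundSystem, ← Int.cast_smul_eq_zsmul ℝ]
    simp [lb]
  rw [h, psi]
  refine Finset.prod_congr rfl fun i _ => ?_
  simp only [map_add, Finsupp.add_apply]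
  congr 2
  rw [Basis.repr_sum_self]

lemma hasSum_psi (v : logSpace M) :
    HasSum (fun u : (𝓞 M)ˣ => psi M (logEmbedding M (Additive.ofMul u) + v)) (torsionOrder M) := by
  rw [← (unitEquiv M).hasSum_iff]
  have h1 : (fun u : (𝓞 M)ˣ => psi M (logEmbedding M (Additive.ofMul u) + v)) ∘ (unitEquiv M)
    = fun p => (1 : ℝ) * ∏ i, tent ((p.2 i : ℝ) + (lb M).repr v i) := by
    ext p
    simp [psi_unitEquiv]
  rw [h1]
  have h2 := hasSum_prod_tent (fun i => (lb M).repr v i)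
  have h3 : HasSum (fun _ : torsion M => (1 : ℝ)) (torsionOrder M) := by
    have : Fintype (torsion M) := Fintype.ofFinite _
    have := hasSum_fintype (fun _ : torsion M => (1 : ℝ))
    simpa [torsionOrder, Nat.card_eq_fintype_card] using this
  have := h3.mul h2 (summable_mul_of_summable_norm (f := fun _ : torsion M => (1 : ℝ))
    (g := fun k : Fin (rank M) → ℤ => ∏ i, tent ((k i : ℝ) + (lb M).repr v i))
    h3.summable.norm h2.summable.norm)
  simpa using this

end NSD

namespace NSD
open NumberField NumberField.Units NumberField.Units.dirichletUnitTheorem Module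
open NumberField.mixedEmbedding NumberField.mixedEmbedding.fundamentalCone NumberField.InfinitePlace
open scoped Classical

variable (M : Type*) [Field M] [NumberField M]

lemma nap_le_norm (w : InfinitePlace M) (X : mixedSpace M) : normAtPlace w X ≤ ‖X‖ := by
  rw [norm_eq_sup'_normAtPlace]
  exact Finset.le_sup' (fun w => normAtPlace w X) (Finset.mem_univ w)

lemma exists_nap_eq (X : mixedSpace M) : ∃ w : InfinitePlace M, normAtPlace w X = ‖X‖ := by
  rw [norm_eq_sup'_normAtPlace]
  obtain ⟨w, _, hw⟩ := Finset.exists_mem_eq_sup' (s := (Finset.univ : Finset (InfinitePlace M)))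
    Finset.univ_nonempty (fun w => normAtPlace w X)
  exact ⟨w, hw.symm⟩

lemma nap_sub_le (w : InfinitePlace M) (X Y : mixedSpace M) :
    |normAtPlace w (X + Y) - normAtPlace w X| ≤ normAtPlace w Y := by
  rw [abs_le]
  have h1 := normAtPlace_add_le w X Y
  have h2 := normAtPlace_add_le w (X + Y) (-Y)
  rw [normAtPlace_neg, add_neg_cancel_right] at h2
  constructor <;> linarith

lemma log_norm_eq (X : mixedSpace M) (hX : mixedEmbedding.norm X ≠ 0) :
    Real.log (mixedEmbedding.norm X) = ∑ w, (mult w : ℝ) * Real.log (normAtPlace w X) := by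
  rw [mixedEmbedding.norm_apply, Real.log_prod]
  · simp [Real.log_pow]
  · intro w _
    exact pow_ne_zero _ (mixedEmbedding.norm_ne_zero_iff.mp hX w)

lemma one_le_mult (w : InfinitePlace M) : (1 : ℝ) ≤ mult w := by
  have := mult_pos (w := w)
  exact_mod_cast this

lemma balanced : ∃ κ : ℝ, 0 < κ ∧ ∀ X : mixedSpace M, mixedEmbedding.norm X ≠ 0 →
    psi M (logMap X) ≠ 0 → ∀ w, κ * ‖X‖ ≤ normAtPlace w X := by
  obtain ⟨C, hC0, hC⟩ := psi_supp M
  set D : ℝ := Fintype.card (InfinitePlace M) * C + C with hD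
  refine ⟨Real.exp (-(2 * D)), Real.exp_pos _, fun X hX hpsi => ?_⟩
  have hb := hC _ hpsi
  have hnap : ∀ w, 0 < normAtPlace w X := fun w =>
    lt_of_le_of_ne (normAtPlace_nonneg w X) (Ne.symm (mixedEmbedding.norm_ne_zero_iff.mp hX w))
  set c : ℝ := Real.log (mixedEmbedding.norm X) * (finrank ℚ M : ℝ)⁻¹ with hc
  have hn : (finrank ℚ M : ℝ) ≠ 0 := by
    exact_mod_cast (finrank_pos (R := ℚ) (M := M)).ne'
  have h1 : ∀ w, w ≠ w₀ → |(mult w : ℝ) * (Real.log (normAtPlace w X) - c)| ≤ C := by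
    intro w hw
    have h2 := norm_le_pi_norm (logMap X) ⟨w, hw⟩
    rw [logMap_apply, Real.norm_eq_abs] at h2
    exact h2.trans hb
  have hsum : ∑ w, (mult w : ℝ) * (Real.log (normAtPlace w X) - c) = 0 := by
    simp_rw [mul_sub]
    rw [Finset.sum_sub_distrib, ← log_norm_eq M X hX, ← Finset.sum_mul]
    have : ∑ w : InfinitePlace M, (mult w : ℝ) = finrank ℚ M := by
      exact_mod_cast sum_mult_eq (K := M)
    rw [this, hc]
    field_simp
    ring
  have h2 : ∀ w, |(mult w : ℝ) * (Real.log (normAtPlace w X) - c)| ≤ D := by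
    intro w
    by_cases hw : w = w₀
    · subst hw
      rw [← Finset.add_sum_erase _ _ (Finset.mem_univ w₀)] at hsum
      rw [eq_neg_of_add_eq_zero_left hsum, abs_neg]
      refine (Finset.abs_sum_le_sum_abs _ _).trans ?_
      refine (Finset.sum_le_card_nsmul _ _ C fun w hw => h1 w (Finset.ne_of_mem_erase hw)).trans ?_
      rw [nsmul_eq_mul, hD]
      have : ((Finset.univ.erase (w₀ : InfinitePlace M)).card : ℝ) ≤ Fintype.card (InfinitePlace M) := by
        exact_mod_cast Finset.card_le_univ _
      nlinarith
    · refine (h1 w hw).trans ?_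
      rw [hD]
      have : (0 : ℝ) ≤ Fintype.card (InfinitePlace M) * C := by positivity
      linarith
  have h3 : ∀ w, |Real.log (normAtPlace w X) - c| ≤ D := by
    intro w
    refine le_trans ?_ (h2 w)
    rw [abs_mul, abs_of_pos (lt_of_lt_of_le one_pos (one_le_mult M w))]
    nlinarith [one_le_mult M w, abs_nonneg (Real.log (normAtPlace w X) - c)]
  intro w
  obtain ⟨v, hv⟩ := exists_nap_eq M X
  rw [← hv, ← Real.exp_log (hnap v), ← Real.exp_log (hnap w), ← Real.exp_add, Real.exp_le_exp]
  have := abs_le.1 (h3 v)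
  have := abs_le.1 (h3 w)
  linarith

lemma log_sub_log_le {a b : ℝ} (ha : 0 < a) (h : |b - a| ≤ a / 2) :
    |Real.log b - Real.log a| ≤ 2 * |b - a| / a := by
  have h' := abs_le.1 h
  have hb : 0 < b := by linarith
  have h1 : Real.log b - Real.log a ≤ b / a - 1 := by
    rw [← Real.log_div hb.ne' ha.ne']
    exact Real.log_le_sub_one_of_pos (by positivity)
  have h2 : Real.log a - Real.log b ≤ a / b - 1 := by
    rw [← Real.log_div ha.ne' hb.ne']
    exact Real.log_le_sub_one_of_pos (by positivity)
  have h3 : b / a - 1 = (b - a) / a := by field_simp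
  have h4 : a / b - 1 = (a - b) / b := by field_simp
  have h5 : (b - a) / a ≤ 2 * |b - a| / a := by
    gcongr; linarith [le_abs_self (b - a), abs_nonneg (b - a)]
  have h6 : (a - b) / b ≤ 2 * |b - a| / a := by
    rw [div_le_div_iff₀ hb ha]
    have := neg_le_abs (b - a)
    have := abs_nonneg (b - a)
    nlinarith
  rw [abs_le]; constructor <;> linarith

set_option maxHeartbeats 1000000 in
lemma pert : ∃ κ C : ℝ, 0 < κ ∧ 0 ≤ C ∧ ∀ X Y : mixedSpace M, mixedEmbedding.norm X ≠ 0 →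
    psi M (logMap X) ≠ 0 → ‖Y‖ ≤ κ * ‖X‖ →
    (κ * ‖X‖) ^ (finrank ℚ M) ≤ mixedEmbedding.norm X ∧
    |Real.log (mixedEmbedding.norm (X + Y)) - Real.log (mixedEmbedding.norm X)| ≤ C * (‖Y‖ / ‖X‖) ∧
    |psi M (logMap (X + Y)) - psi M (logMap X)| ≤ C * (‖Y‖ / ‖X‖) := by
  obtain ⟨κ, hκ, hbal⟩ := balanced M
  obtain ⟨L, hL0, hL⟩ := psi_lip M
  set n : ℝ := ((finrank ℚ M : ℕ) : ℝ) with hn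
  have hn1 : 1 ≤ n := by
    have : 1 ≤ finrank ℚ M := finrank_pos (R := ℚ) (M := M)
    rw [hn]
    exact_mod_cast this
  refine ⟨κ / 2, n * (2 / κ) + L * (n * (4 / κ)), by positivity, by positivity, fun X Y hX hpsi hY => ?_⟩
  have hX0 : 0 < ‖X‖ := by
    rw [norm_pos_iff]; rintro rfl; exact hX (by simp)
  have hnap : ∀ w, 0 < normAtPlace w X := fun w =>
    lt_of_lt_of_le (by positivity) (hbal X hX hpsi w)
  have hw : ∀ w, |Real.log (normAtPlace w (X + Y)) - Real.log (normAtPlace w X)|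
      ≤ 2 / κ * (‖Y‖ / ‖X‖) := by
    intro w
    have h1 := (nap_sub_le M w X Y).trans (nap_le_norm M w Y)
    have h2 := hbal X hX hpsi w
    refine (log_sub_log_le (hnap w) (by linarith)).trans ?_
    calc 2 * |normAtPlace w (X + Y) - normAtPlace w X| / normAtPlace w X
        ≤ 2 * ‖Y‖ / (κ * ‖X‖) := by gcongr
      _ = _ := by field_simp
  have hXY : mixedEmbedding.norm (X + Y) ≠ 0 := by
    rw [mixedEmbedding.norm_ne_zero_iff]
    intro w
    have h1 := abs_le.1 ((nap_sub_le M w X Y).trans (nap_le_norm M w Y))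
    have h2 := hbal X hX hpsi w
    have : 0 < κ * ‖X‖ := by positivity
    have : 0 < normAtPlace w (X + Y) := by linarith
    exact this.ne'
  have hmult : ∑ w : InfinitePlace M, (mult w : ℝ) = n := by
    rw [hn]
    exact_mod_cast sum_mult_eq (K := M)
  have hlog : |Real.log (mixedEmbedding.norm (X + Y)) - Real.log (mixedEmbedding.norm X)|
      ≤ n * (2 / κ * (‖Y‖ / ‖X‖)) := by
    rw [log_norm_eq M X hX, log_norm_eq M _ hXY, ← Finset.sum_sub_distrib]
    refine (Finset.abs_sum_le_sum_abs _ _).trans ?_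
    rw [← hmult, Finset.sum_mul]
    refine Finset.sum_le_sum fun w _ => ?_
    rw [← mul_sub, abs_mul, abs_of_nonneg (by positivity : (0:ℝ) ≤ mult w)]
    exact mul_le_mul_of_nonneg_left (hw w) (by positivity)
  have hmn : ∀ w : InfinitePlace M, (mult w : ℝ) ≤ n := by
    intro w
    rw [← hmult]
    exact Finset.single_le_sum (f := fun w : InfinitePlace M => (mult w : ℝ))
      (fun w _ => by positivity) (Finset.mem_univ w)
  have hlm : ‖logMap (X + Y) - logMap X‖ ≤ n * (4 / κ) * (‖Y‖ / ‖X‖) := by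
    rw [pi_norm_le_iff_of_nonneg (by positivity)]
    intro w
    rw [Pi.sub_apply, logMap_apply, logMap_apply, Real.norm_eq_abs, ← mul_sub, abs_mul,
      abs_of_nonneg (by positivity : (0:ℝ) ≤ mult w.1), mul_assoc n]
    refine mul_le_mul (hmn _) ?_ (abs_nonneg _) (by positivity)
    have e : Real.log (normAtPlace w.1 (X + Y)) - Real.log (mixedEmbedding.norm (X + Y)) * n⁻¹ -
      (Real.log (normAtPlace w.1 X) - Real.log (mixedEmbedding.norm X) * n⁻¹)
      = (Real.log (normAtPlace w.1 (X + Y)) - Real.log (normAtPlace w.1 X)) -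
        (Real.log (mixedEmbedding.norm (X + Y)) - Real.log (mixedEmbedding.norm X)) * n⁻¹ := by ring
    rw [e]
    refine (abs_sub _ _).trans ?_
    rw [abs_mul, abs_of_pos (by positivity : 0 < n⁻¹)]
    have h1 := hw w.1
    have h2 : |Real.log (mixedEmbedding.norm (X + Y)) - Real.log (mixedEmbedding.norm X)| * n⁻¹
      ≤ 2 / κ * (‖Y‖ / ‖X‖) := by
      rw [← div_eq_mul_inv, div_le_iff₀ (by positivity)]
      linarith
    have h3 : 4 / κ * (‖Y‖ / ‖X‖) = 2 / κ * (‖Y‖ / ‖X‖) + 2 / κ * (‖Y‖ / ‖X‖) := by ring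
    rw [h3]
    linarith
  have q0 : 0 ≤ ‖Y‖ / ‖X‖ := by positivity
  refine ⟨?_, ?_, ?_⟩
  · rw [mixedEmbedding.norm_apply, ← sum_mult_eq (K := M), ← Finset.prod_pow_eq_pow_sum]
    have hp : 0 < κ * ‖X‖ := mul_pos hκ hX0
    have hp2 : 0 ≤ κ / 2 * ‖X‖ := by linarith
    refine Finset.prod_le_prod (fun w _ => pow_nonneg hp2 _) fun w _ => ?_
    refine pow_le_pow_left₀ hp2 ?_ _
    have := hbal X hX hpsi w
    linarith
  · refine hlog.trans ?_
    have : 0 ≤ L * (n * (4 / κ)) * (‖Y‖ / ‖X‖) := by positivity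
    nlinarith
  · refine (hL _ _).trans ?_
    have h1 : L * ‖logMap (X + Y) - logMap X‖ ≤ L * (n * (4 / κ) * (‖Y‖ / ‖X‖)) := by gcongr
    have : 0 ≤ n * (2 / κ) * (‖Y‖ / ‖X‖) := by positivity
    nlinarith

/-- the summand -/
noncomputable def GG (s : ℝ) (X : mixedSpace M) : ℝ :=
  psi M (logMap X) * (mixedEmbedding.norm X) ^ (-s)

lemma GG_nonneg (s : ℝ) (X : mixedSpace M) : 0 ≤ GG M s X :=
  mul_nonneg (psi_nonneg _ _) (Real.rpow_nonneg (mixedEmbedding.norm_nonneg X) _)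

lemma rpow_neg_sub_le {a b s δ : ℝ} (ha : 1 ≤ a) (hb : 1 ≤ b) (hs : 1 ≤ s) (hs2 : s ≤ 2)
    (h : |Real.log a - Real.log b| ≤ δ) :
    |a ^ (-s) - b ^ (-s)| ≤ 2 * δ * (a⁻¹ + b⁻¹) := by
  have key : ∀ a b : ℝ, 1 ≤ a → 1 ≤ b → |Real.log a - Real.log b| ≤ δ →
      a ^ (-s) - b ^ (-s) ≤ 2 * δ * (a⁻¹ + b⁻¹) := by
    intro a b ha hb h
    have ha0 : 0 < a := by linarith
    have hb0 : 0 < b := by linarith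
    have h1 : a ^ (-s) ≤ a⁻¹ := by
      rw [← Real.rpow_neg_one]
      exact Real.rpow_le_rpow_of_exponent_le ha (by linarith)
    have h0 : 0 ≤ a ^ (-s) := by positivity
    have hbq : b ^ (-s) = a ^ (-s) * Real.exp (s * (Real.log a - Real.log b)) := by
      rw [Real.rpow_def_of_pos ha0, Real.rpow_def_of_pos hb0, ← Real.exp_add]
      congr 1; ring
    have he := Real.add_one_le_exp (s * (Real.log a - Real.log b))
    have h' := abs_le.1 h
    have hd : 0 ≤ δ := (abs_nonneg _).trans h
    have h2 : 1 - Real.exp (s * (Real.log a - Real.log b)) ≤ 2 * δ := by nlinarith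
    have h3 : 0 < b⁻¹ := by positivity
    have h4 : 0 < a⁻¹ := by positivity
    rw [hbq]
    calc a ^ (-s) - a ^ (-s) * Real.exp (s * (Real.log a - Real.log b))
        = a ^ (-s) * (1 - Real.exp (s * (Real.log a - Real.log b))) := by ring
      _ ≤ a ^ (-s) * (2 * δ) := by gcongr
      _ ≤ a⁻¹ * (2 * δ) := by gcongr
      _ ≤ 2 * δ * (a⁻¹ + b⁻¹) := by nlinarith [mul_nonneg hd h3.le]
  rw [abs_le]
  have k1 := key a b ha hb h
  have k2 := key b a hb ha (by rwa [abs_sub_comm])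
  constructor <;> linarith

lemma GG_pert : ∃ κ C : ℝ, 0 < κ ∧ 0 ≤ C ∧ ∀ X Y : mixedSpace M, ∀ s : ℝ, 1 ≤ s → s ≤ 2 →
    1 ≤ mixedEmbedding.norm X → 1 ≤ mixedEmbedding.norm (X + Y) →
    psi M (logMap X) ≠ 0 → ‖Y‖ ≤ κ * ‖X‖ →
    |GG M s (X + Y) - GG M s X| ≤ C * ‖Y‖ * (‖X‖ ^ (finrank ℚ M + 1))⁻¹ := by
  obtain ⟨κ, C, hκ, hC, H⟩ := pert M
  set E := Real.exp (C * κ) with hE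
  have hE0 : 0 < E := Real.exp_pos _
  refine ⟨κ, (C * E + 2 * C * (E + 1)) * (κ ^ (finrank ℚ M))⁻¹, hκ, by positivity,
    fun X Y s hs hs2 hX hXY hpsi hY => ?_⟩
  have hX1 : mixedEmbedding.norm X ≠ 0 := by linarith
  have hX0 : 0 < ‖X‖ := by
    rw [norm_pos_iff]; rintro rfl; exact hX1 (by simp)
  obtain ⟨h1, h2, h3⟩ := H X Y hX1 hpsi hY
  set a := mixedEmbedding.norm X
  set b := mixedEmbedding.norm (X + Y)
  have hq : ‖Y‖ / ‖X‖ ≤ κ := by rwa [div_le_iff₀ hX0]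
  have hba : b⁻¹ ≤ E * a⁻¹ := by
    have h4 : Real.log a - C * κ ≤ Real.log b := by
      have := (abs_le.1 h2).1
      nlinarith
    have h5 : a * Real.exp (-(C * κ)) ≤ b := by
      rw [← Real.exp_log (by linarith : 0 < a), ← Real.exp_add, ← Real.exp_log (by linarith : 0 < b),
        Real.exp_le_exp]
      linarith
    rw [inv_le_comm₀ (by linarith) (by positivity)]
    rw [mul_inv, inv_inv, hE, ← Real.exp_neg]
    linarith
  have ha : a⁻¹ ≤ (κ ^ (finrank ℚ M))⁻¹ * (‖X‖ ^ (finrank ℚ M))⁻¹ := by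
    rw [← mul_inv, ← mul_pow]
    gcongr
  have hbs : b ^ (-s) ≤ b⁻¹ := by
    rw [← Real.rpow_neg_one]
    exact Real.rpow_le_rpow_of_exponent_le hXY (by linarith)
  have hb0 : 0 ≤ b ^ (-s) := by positivity
  have hd := rpow_neg_sub_le hXY hX hs hs2 h2
  have e : GG M s (X + Y) - GG M s X = (psi M (logMap (X + Y)) - psi M (logMap X)) * b ^ (-s)
     + psi M (logMap X) * (b ^ (-s) - a ^ (-s)) := by
    simp only [GG]; ring
  rw [e]
  refine (abs_add_le _ _).trans ?_
  rw [abs_mul, abs_mul, abs_of_nonneg hb0, abs_of_nonneg (psi_nonneg _ _)]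
  have q0 : 0 ≤ ‖Y‖ / ‖X‖ := by positivity
  have ha0 : 0 < a⁻¹ := by positivity
  have t1 : |psi M (logMap (X + Y)) - psi M (logMap X)| * b ^ (-s) ≤ C * (‖Y‖ / ‖X‖) * (E * a⁻¹) :=
    mul_le_mul h3 (hbs.trans hba) hb0 (by positivity)
  have t2 : psi M (logMap X) * |b ^ (-s) - a ^ (-s)| ≤ 2 * (C * (‖Y‖ / ‖X‖)) * ((E + 1) * a⁻¹) := by
    calc psi M (logMap X) * |b ^ (-s) - a ^ (-s)| ≤ 1 * |b ^ (-s) - a ^ (-s)| := by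
          gcongr; exact psi_le_one _ _
      _ ≤ 2 * (C * (‖Y‖ / ‖X‖)) * (b⁻¹ + a⁻¹) := by rw [one_mul]; exact hd
      _ ≤ _ := by gcongr; linarith
  calc _ ≤ C * (‖Y‖ / ‖X‖) * (E * a⁻¹) + 2 * (C * (‖Y‖ / ‖X‖)) * ((E + 1) * a⁻¹) := add_le_add t1 t2
    _ = (C * E + 2 * C * (E + 1)) * (‖Y‖ / ‖X‖) * a⁻¹ := by ring
    _ ≤ (C * E + 2 * C * (E + 1)) * (‖Y‖ / ‖X‖) * ((κ ^ (finrank ℚ M))⁻¹ * (‖X‖ ^ (finrank ℚ M))⁻¹) := by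
        gcongr
    _ = _ := by
        rw [pow_succ, mul_inv, div_eq_mul_inv]; ring

end NSD

namespace NSD
open NumberField Ideal Filter Topology

variable (F : Type*) [Field F] [NumberField F]

lemma card_tendsto : Tendsto (fun n : ℕ => (∑ k ∈ Finset.Icc 1 n,
    (Nat.card {I : Ideal (𝓞 F) // absNorm I = k} : ℝ)) / n) atTop (𝓝 (dedekindZeta_residue F)) := by
  refine ((Ideal.tendsto_norm_le_div_atTop₀ F).comp tendsto_natCast_atTop_atTop).congr fun n ↦ ?_
  simp only [Function.comp_apply, Nat.cast_le, ← Nat.cast_sum]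
  congr
  rw [← add_left_inj 1, ← card_norm_le_eq_card_norm_le_add_one,
    show Finset.Icc 1 n = Finset.Ioc 0 n from Finset.Icc_succ_left_eq_Ioc _ _,
    show 1 = Nat.card {I : Ideal (𝓞 F) // absNorm I = 0} by simp [Ideal.absNorm_eq_zero_iff],
    Finset.sum_Ioc_add_eq_sum_Icc (n.zero_le),
    ← Finset.card_preimage_eq_sum_card_image_eq (fun k _ ↦ finite_setOfPred_absNorm_eq k)]
  simp [Set.coe_eq_subtype]

lemma coeff_summable (s : ℝ) (hs : 1 < s) :
    LSeriesSummable (fun n => ((Nat.card {I : Ideal (𝓞 F) // absNorm I = n} : ℝ) : ℂ)) s := by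
  refine LSeriesSummable_of_sum_norm_bigO_and_nonneg (r := 1) ?_ (fun n => Nat.cast_nonneg _)
    zero_le_one (by simpa using hs)
  have h := (card_tendsto F).isBigO_one ℝ
  have h2 := h.mul (Asymptotics.isBigO_refl (fun n : ℕ => (n : ℝ)) atTop)
  refine h2.congr' ?_ ?_
  · filter_upwards [eventually_ne_atTop 0] with n hn
    field_simp
  · filter_upwards with n
    simp

lemma coeff_term (s : ℝ) (hs : 1 < s) (n : ℕ) :
    LSeries.term (fun n => ((Nat.card {I : Ideal (𝓞 F) // absNorm I = n} : ℝ) : ℂ)) s n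
      = (((Nat.card {I : Ideal (𝓞 F) // absNorm I = n} : ℝ) * (n : ℝ) ^ (-s) : ℝ) : ℂ) := by
  rcases eq_or_ne n 0 with rfl | hn
  · simp [Real.zero_rpow (by linarith : -s ≠ 0)]
  · rw [LSeries.term_of_ne_zero hn, Complex.ofReal_mul, Real.rpow_neg (by positivity),
      Complex.ofReal_inv, Complex.ofReal_cpow (by positivity), div_eq_mul_inv]
    simp

lemma fiber_tsum (s : ℝ) (n : ℕ) :
    HasSum (fun y : {I : Ideal (𝓞 F) // absNorm I = n} => (absNorm y.1 : ℝ) ^ (-s))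
    ((Nat.card {I : Ideal (𝓞 F) // absNorm I = n} : ℝ) * (n : ℝ) ^ (-s)) := by
  have : Finite {I : Ideal (𝓞 F) // absNorm I = n} := finite_setOfPred_absNorm_eq n
  have : Fintype {I : Ideal (𝓞 F) // absNorm I = n} := Fintype.ofFinite _
  have h := hasSum_fintype (fun y : {I : Ideal (𝓞 F) // absNorm I = n} => (absNorm y.1 : ℝ) ^ (-s))
  convert h using 1
  rw [Finset.sum_congr rfl (fun y _ => by rw [y.2])]
  simp [Nat.card_eq_fintype_card]

lemma real_coeff_summable (s : ℝ) (hs : 1 < s) :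
    Summable fun n : ℕ => (Nat.card {I : Ideal (𝓞 F) // absNorm I = n} : ℝ) * (n : ℝ) ^ (-s) := by
  have h := coeff_summable F s hs
  rw [LSeriesSummable, funext (coeff_term F s hs)] at h
  exact Complex.summable_ofReal.1 h

lemma zsummable (s : ℝ) (hs : 1 < s) :
    Summable fun I : Ideal (𝓞 F) => (absNorm I : ℝ) ^ (-s) := by
  rw [← (Equiv.sigmaFiberEquiv (fun I : Ideal (𝓞 F) => absNorm I)).summable_iff]
  rw [summable_sigma_of_nonneg (fun x => by simp only [Function.comp]; positivity)]
  refine ⟨fun n => (fiber_tsum F s n).summable, ?_⟩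
  convert real_coeff_summable F s hs using 2 with n
  exact (fiber_tsum F s n).tsum_eq

lemma ztsum (s : ℝ) (hs : 1 < s) :
    dedekindZeta F s = ((∑' I : Ideal (𝓞 F), (absNorm I : ℝ) ^ (-s) : ℝ) : ℂ) := by
  have h1 : ∑' I : Ideal (𝓞 F), (absNorm I : ℝ) ^ (-s) =
      ∑' n : ℕ, (Nat.card {I : Ideal (𝓞 F) // absNorm I = n} : ℝ) * (n : ℝ) ^ (-s) := by
    rw [← (Equiv.sigmaFiberEquiv (fun I : Ideal (𝓞 F) => absNorm I)).tsum_eq]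
    refine (Summable.tsum_sigma ((Equiv.sigmaFiberEquiv _).summable_iff.2 (zsummable F s hs))).trans ?_
    exact tsum_congr fun n => (fiber_tsum F s n).tsum_eq
  rw [h1, Complex.ofReal_tsum, dedekindZeta, LSeries]
  refine tsum_congr fun n => ?_
  rw [← coeff_term F s hs]
  simp

/-- real zeta sum -/
noncomputable def Zt (s : ℝ) : ℝ := ∑' I : Ideal (𝓞 F), (absNorm I : ℝ) ^ (-s)

lemma zlim : Tendsto (fun s : ℝ => (s - 1) * Zt F s) (𝓝[>] 1) (𝓝 (dedekindZeta_residue F)) := by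
  have h := tendsto_sub_one_mul_dedekindZeta_nhdsGT F
  have h2 : (fun s : ℝ => ((s : ℂ) - 1) * dedekindZeta F s) =ᶠ[𝓝[>] 1]
      fun s : ℝ => (((s - 1) * Zt F s : ℝ) : ℂ) := by
    filter_upwards [self_mem_nhdsWithin] with s hs
    rw [ztsum F s hs]
    simp [Zt]
  have h3 := (Complex.continuous_re.tendsto _).comp (h.congr' h2)
  simpa [Function.comp_def] using h3

/-- two-sided bound -/
lemma zbounds : ∃ c C : ℝ, 0 < c ∧ 0 < C ∧ ∀ᶠ s in 𝓝[>] (1 : ℝ),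
    c ≤ (s - 1) * Zt F s ∧ (s - 1) * Zt F s ≤ C := by
  have hp := dedekindZeta_residue_pos F
  refine ⟨dedekindZeta_residue F / 2, dedekindZeta_residue F * 2, by positivity, by positivity, ?_⟩
  filter_upwards [(zlim F).eventually_const_le (show dedekindZeta_residue F / 2 < _ by linarith),
    (zlim F).eventually_le_const (show _ < dedekindZeta_residue F * 2 by linarith)] with s h1 h2
  exact ⟨h1, h2⟩

end NSD

namespace NSD
open NumberField NumberField.Units NumberField.Units.dirichletUnitTheorem Module
open NumberField.mixedEmbedding NumberField.mixedEmbedding.fundamentalCone NumberField.InfinitePlace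
open scoped Classical

variable (M : Type*) [Field M] [NumberField M]

/-- embedding of the ring of integers -/
noncomputable def mE : 𝓞 M →+* mixedSpace M := (mixedEmbedding M).comp (algebraMap (𝓞 M) M)

lemma mE_inj : Function.Injective (mE M) :=
  (mixedEmbedding_injective M).comp RingOfIntegers.coe_injective

lemma norm_mE (x : 𝓞 M) :
    mixedEmbedding.norm (mE M x) = (Ideal.absNorm (Ideal.span {x}) : ℝ) := by
  have h : mE M x = mixedEmbedding M (x : M) := rfl
  rw [h, norm_eq_norm, Ideal.absNorm_span_singleton, ← Algebra.coe_norm_int, Nat.cast_natAbs]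
  push_cast
  rfl

lemma one_le_norm_mE (x : 𝓞 M) (hx : x ≠ 0) : 1 ≤ mixedEmbedding.norm (mE M x) := by
  rw [norm_mE]
  have : Ideal.absNorm (Ideal.span {x}) ≠ 0 := by
    rw [Ne, Ideal.absNorm_eq_zero_iff]; simpa using hx
  exact_mod_cast Nat.one_le_iff_ne_zero.2 this

/-- weight on integers -/
noncomputable def gx (s : ℝ) (x : 𝓞 M) : ℝ := GG M s (mE M x)

lemma gx_zero (s : ℝ) (hs : 1 ≤ s) : gx M s 0 = 0 := by
  simp [gx, GG, Real.zero_rpow (by linarith : -s ≠ 0)]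

lemma gx_nonneg (s : ℝ) (x : 𝓞 M) : 0 ≤ gx M s x := GG_nonneg _ _ _

lemma gx_le_one (s : ℝ) (hs : 1 ≤ s) (x : 𝓞 M) : gx M s x ≤ 1 := by
  rcases eq_or_ne x 0 with rfl | hx
  · rw [gx_zero M s hs]; exact zero_le_one
  · have h1 : (mixedEmbedding.norm (mE M x)) ^ (-s) ≤ 1 :=
      Real.rpow_le_one_of_one_le_of_nonpos (one_le_norm_mE M x hx) (by linarith)
    exact mul_le_one₀ (psi_le_one _ _) (Real.rpow_nonneg (mixedEmbedding.norm_nonneg _) _) h1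

/-- size of an integer in the mixed space -/
noncomputable def nE (x : 𝓞 M) : ℝ := ‖mE M x‖

lemma nE_nonneg (x : 𝓞 M) : 0 ≤ nE M x := norm_nonneg (mE M x)

lemma nE_neg (x : 𝓞 M) : nE M (-x) = nE M x := by
  unfold nE; rw [map_neg]; exact norm_neg (mE M x)

lemma nE_pos (x : 𝓞 M) (hx : x ≠ 0) : 0 < nE M x :=
  norm_pos_iff.2 ((map_ne_zero_iff _ (mE_inj M)).2 hx)

lemma nE_zero : nE M 0 = 0 := by
  unfold nE; rw [map_zero]; exact norm_zero

lemma nE_add (x r : 𝓞 M) : nE M x - nE M r ≤ nE M (x + r) := by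
  have h := norm_sub_norm_le (mE M x) (mE M (-r))
  rw [← map_sub, sub_neg_eq_add] at h
  have h2 := nE_neg M r
  unfold nE at *
  linarith

lemma gx_pert0 : ∃ κ C : ℝ, 0 < κ ∧ 0 ≤ C ∧ ∀ x r : 𝓞 M, ∀ s : ℝ, 1 ≤ s → s ≤ 2 →
    x ≠ 0 → x + r ≠ 0 → gx M s x ≠ 0 → nE M r ≤ κ * nE M x →
    |gx M s (x + r) - gx M s x| ≤ C * nE M r * (nE M x ^ (finrank ℚ M + 1))⁻¹ := by
  obtain ⟨κ, C, hκ, hC, H⟩ := GG_pert M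
  refine ⟨κ, C, hκ, hC, fun x r s hs hs2 hx hxr hp hr => ?_⟩
  have := H (mE M x) (mE M r) s hs hs2 (one_le_norm_mE M x hx)
    (by rw [← map_add]; exact one_le_norm_mE M _ hxr)
    (fun h => hp (by unfold gx GG; rw [h, zero_mul])) hr
  rw [← map_add] at this
  exact this

lemma gx_pert (r : 𝓞 M) : ∃ C : ℝ, 0 ≤ C ∧ ∀ s : ℝ, 1 ≤ s → s ≤ 2 → ∀ x : 𝓞 M, x ≠ 0 →
    |gx M s (x + r) - gx M s x| ≤ C * (nE M x ^ (finrank ℚ M + 1))⁻¹ := by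
  obtain ⟨κ, C, hκ, hC, H⟩ := gx_pert0 M
  have hR0 : 0 ≤ nE M r := nE_nonneg _ _
  generalize hR : nE M r = R at *
  obtain ⟨T, hT⟩ : ∃ T : ℝ, T = (2 / κ + 2) * R + 1 := ⟨_, rfl⟩
  have hT0 : 0 < T := by rw [hT]; positivity
  generalize hm : finrank ℚ M + 1 = m at *
  refine ⟨T ^ m + C * R * 2 ^ m, by positivity, fun s hs hs2 x hx => ?_⟩
  have hx0 : 0 < nE M x := nE_pos M x hx
  have hadd := nE_add M x r
  have hH1 := H x r s hs hs2 hx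
  have hH2 := H (x + r) (-r) s hs hs2
  rw [add_neg_cancel_right, nE_neg] at hH2
  have g1 := gx_nonneg M s x
  have g2 := gx_nonneg M s (x + r)
  have g3 := gx_le_one M s hs x
  have g4 := gx_le_one M s hs (x + r)
  have g5 := nE_zero M
  rw [hR] at hadd hH1 hH2
  have hxm : 0 < (nE M x ^ m)⁻¹ := by positivity
  rcases le_or_gt (nE M x) T with h | h
  · have h1 : |gx M s (x + r) - gx M s x| ≤ 1 := by
      rw [abs_le]
      constructor <;> linarith
    have h2 : 1 ≤ T ^ m * (nE M x ^ m)⁻¹ := by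
      rw [← div_eq_mul_inv, le_div_iff₀ (by positivity), one_mul]
      exact pow_le_pow_left₀ hx0.le h _
    have : 0 ≤ C * R * 2 ^ m * (nE M x ^ m)⁻¹ := by positivity
    linarith
  · have e0 : (2 / κ + 2) * R = 2 / κ * R + 2 * R := by ring
    have hk : 2 / κ * R ≤ nE M x := by linarith
    have hk' : R ≤ κ * (nE M x / 2) := by
      have e : R = κ * ((2 / κ * R) / 2) := by field_simp
      rw [e]; gcongr
    have h2R : 2 * R ≤ nE M x := by
      have : 0 ≤ 2 / κ * R := by positivity
      linarith
    have hxr : nE M x / 2 ≤ nE M (x + r) := by linarith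
    have hxr0 : x + r ≠ 0 := by
      intro h0
      rw [h0, g5] at hxr
      linarith
    have hCR : 0 ≤ C * R := mul_nonneg hC hR0
    have hTm : 0 ≤ T ^ m := (pow_pos hT0 m).le
    have hfin : C * R * (nE M x ^ m)⁻¹ ≤ (T ^ m + C * R * 2 ^ m) * (nE M x ^ m)⁻¹ := by
      refine mul_le_mul_of_nonneg_right ?_ hxm.le
      have h2 : (1:ℝ) ≤ 2 ^ m := one_le_pow₀ (by norm_num)
      nlinarith
    by_cases hp : gx M s x = 0
    · by_cases hp2 : gx M s (x + r) = 0
      · rw [hp, hp2, sub_zero, abs_zero]; positivity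
      · have := hH2 hxr0 hx hp2 (hk'.trans (by gcongr))
        rw [abs_sub_comm] at this
        refine this.trans ?_
        calc C * R * (nE M (x + r) ^ m)⁻¹ ≤ C * R * ((nE M x / 2) ^ m)⁻¹ := by
              refine mul_le_mul_of_nonneg_left ?_ hCR
              exact inv_anti₀ (by positivity) (pow_le_pow_left₀ (by positivity) hxr _)
          _ = C * R * 2 ^ m * (nE M x ^ m)⁻¹ := by rw [div_pow, inv_div]; ring
          _ ≤ _ := mul_le_mul_of_nonneg_right (by linarith) hxm.le
    · have := hH1 hxr0 hp (hk'.trans (by gcongr; linarith))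
      exact this.trans hfin

lemma summable_mE : Summable fun x : 𝓞 M => (nE M x ^ (finrank ℚ M + 1))⁻¹ := by
  have hr : finrank ℤ (mixedEmbedding.integerLattice M) = finrank ℚ M := by
    rw [ZLattice.rank ℝ, mixedEmbedding.finrank]
  have h := ZLattice.summable_norm_pow_inv (mixedEmbedding.integerLattice M) (finrank ℚ M + 1)
    (by rw [hr]; exact Nat.lt_succ_self _)
  let f : 𝓞 M → mixedEmbedding.integerLattice M := fun x => ⟨mE M x, ⟨x, rfl⟩⟩
  have hf : Function.Injective f := fun a b hab => mE_inj M (congrArg Subtype.val hab)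
  have := h.comp_injective hf
  refine this.congr fun x => ?_
  simp [f, nE, inv_pow]

lemma ideal_equiv {R : Type*} [CommRing R] (A : Ideal R) :
    Function.Bijective (fun p : (R ⧸ A) × A => (p.2 : R) + Quotient.out p.1) := by
  have hmk : ∀ c : R ⧸ A, Ideal.Quotient.mk A (Quotient.out c) = c := fun c => Quotient.out_eq c
  constructor
  · rintro ⟨c, a⟩ ⟨c', a'⟩ h
    have h1 := congrArg (Ideal.Quotient.mk A) h
    simp only [map_add, hmk, Ideal.Quotient.eq_zero_iff_mem.2 a.2,
      Ideal.Quotient.eq_zero_iff_mem.2 a'.2, zero_add] at h1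
    subst h1
    simp only [add_left_inj] at h
    rw [Subtype.ext h]
  · intro x
    refine ⟨(Ideal.Quotient.mk A x, ⟨x - Quotient.out (Ideal.Quotient.mk A x), ?_⟩), ?_⟩
    · rw [← Ideal.Quotient.eq_zero_iff_mem, map_sub, hmk, sub_self]
    · simp

lemma diff_bound {α : Type*} (a0 : α) (f w : α → ℝ) (hw : Summable w) (C : ℝ) (hw0 : w a0 = 0)
    (h0 : |f a0| ≤ 1) (h : ∀ a, a ≠ a0 → |f a| ≤ C * w a) : |∑' a, f a| ≤ C * (∑' a, w a) + 1 := by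
  have hs1 : HasSum (fun a : α => if a = a0 then (1:ℝ) else 0) 1 := hasSum_ite_eq a0 1
  have hB := (hw.hasSum.mul_left C).add hs1
  refine tsum_of_norm_bounded (f := f) hB ?_
  intro a
  rw [Real.norm_eq_abs]
  by_cases ha : a = a0
  · subst ha; simpa [hw0] using h0
  · simpa [ha] using h a ha

lemma sum_diff_gen {α β ι : Type*} [Fintype ι] (e : ι × α → β) (he : Function.Bijective e)
    (a0 : α) (j : α → β) (hj : Function.Injective j)
    (w : α → ℝ) (hw : Summable w) (hw0 : w a0 = 0) (C : ι → ℝ) (g : β → ℝ) (hsum : Summable g)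
    (h0 : ∀ c, |g (e (c, a0)) - g (j a0)| ≤ 1)
    (h : ∀ c a, a ≠ a0 → |g (e (c, a)) - g (j a)| ≤ C c * w a) :
    |(Fintype.card ι : ℝ) * ∑' a, g (j a) - ∑' x, g x| ≤ (∑ c, C c) * (∑' a, w a) + Fintype.card ι := by
  let E : ι × α ≃ β := Equiv.ofBijective e he
  have hEs : Summable fun p : ι × α => g (e p) := E.summable_iff.2 hsum
  have hc : ∀ c : ι, Summable fun a : α => g (e (c, a)) := fun c =>
    hEs.comp_injective (Prod.mk_right_injective c)
  have hA' : Summable fun a : α => g (j a) := hsum.comp_injective hj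
  have h1 : ∑' x, g x = ∑ c : ι, ∑' a : α, g (e (c, a)) := by
    rw [← E.tsum_eq, ← tsum_fintype (L := .unconditional _)]
    exact Summable.tsum_prod hEs
  have h2 : (Fintype.card ι : ℝ) * ∑' a, g (j a) - ∑' x, g x
      = -∑ c : ι, ∑' a : α, (g (e (c, a)) - g (j a)) := by
    rw [h1]
    simp_rw [fun c => (hc c).tsum_sub hA']
    rw [Finset.sum_sub_distrib]
    simp
  rw [h2, abs_neg]
  refine (Finset.abs_sum_le_sum_abs _ _).trans ?_
  refine (Finset.sum_le_sum fun c _ => diff_bound a0 _ w hw (C c) hw0 (h0 c) (h c)).trans ?_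
  rw [Finset.sum_add_distrib, ← Finset.sum_mul]
  simp

lemma ideal_diff_gen {R : Type*} [CommRing R] (A : Ideal R) (hfin : Finite (R ⧸ A))
    (g : ℝ → R → ℝ) (w : R → ℝ) (hw : Summable w)
    (g0 : ∀ s, 1 ≤ s → g s 0 = 0) (gnn : ∀ s x, 0 ≤ g s x) (g1 : ∀ s, 1 ≤ s → ∀ x, g s x ≤ 1)
    (hw0 : w 0 = 0)
    (hg : ∀ r : R, ∃ C : ℝ, 0 ≤ C ∧ ∀ s : ℝ, 1 ≤ s → s ≤ 2 → ∀ x : R, x ≠ 0 →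
      |g s (x + r) - g s x| ≤ C * w x) : ∃ C : ℝ, ∀ s : ℝ, 1 ≤ s → s ≤ 2 →
    Summable (g s) →
    |(Nat.card (R ⧸ A) : ℝ) * ∑' a : A, g s a - ∑' x, g s x| ≤ C := by
  choose C hC0 hC using hg
  have : Fintype (R ⧸ A) := Fintype.ofFinite _
  refine ⟨(∑ c : R ⧸ A, C (Quotient.out c)) * (∑' a : A, w a) + Fintype.card (R ⧸ A),
    fun s hs hs2 hsum => ?_⟩
  rw [Nat.card_eq_fintype_card]
  refine sum_diff_gen _ (ideal_equiv A) (0 : A) (fun a => (a : R)) Subtype.val_injective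
    (fun a : A => w a) (hw.comp_injective Subtype.val_injective) (by simpa using hw0)
    (fun c => C (Quotient.out c)) (g s) hsum ?_ ?_
  · intro c
    have h4 := gnn s ((0 : A) + Quotient.out c)
    have h3 := g1 s hs ((0 : A) + Quotient.out c)
    have : g s ((0 : A) : R) = 0 := by simpa using g0 s hs
    rw [this, sub_zero, abs_of_nonneg h4]
    exact h3
  · intro c a ha
    exact hC _ s hs hs2 a (fun h => ha (Subtype.ext h))

lemma ideal_diff (A : Ideal (𝓞 M)) (hA : A ≠ ⊥) : ∃ C : ℝ, ∀ s : ℝ, 1 ≤ s → s ≤ 2 →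
    Summable (gx M s) →
    |(Ideal.absNorm A : ℝ) * ∑' a : A, gx M s a - ∑' x, gx M s x| ≤ C := by
  have h := ideal_diff_gen A (Ideal.finiteQuotientOfFreeOfNeBot A hA) (gx M) _ (summable_mE M)
    (gx_zero M) (gx_nonneg M) (gx_le_one M) (by rw [nE_zero]; simp) (gx_pert M)
  rw [Ideal.absNorm_apply, Submodule.cardQuot_apply]
  exact h

end NSD

namespace NSD
open NumberField NumberField.Units NumberField.Units.dirichletUnitTheorem Module
open NumberField.mixedEmbedding NumberField.mixedEmbedding.fundamentalCone NumberField.InfinitePlace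
open scoped Classical

variable (M : Type*) [Field M] [NumberField M]

lemma gx_mul_unit (s : ℝ) (g : 𝓞 M) (hg : g ≠ 0) (u : (𝓞 M)ˣ) :
    gx M s (g * u) = psi M (logEmbedding M (Additive.ofMul u) + logMap (mE M g)) *
      (Ideal.absNorm (Ideal.span {g}) : ℝ) ^ (-s) := by
  have h1 : mE M (g * u) = u • (mE M g) := by
    rw [map_mul, mul_comm]; rfl
  have hne : mixedEmbedding.norm (mE M g) ≠ 0 := by
    have := one_le_norm_mE M g hg
    positivity
  unfold gx GG
  rw [h1, logMap_unit_smul u hne, norm_unit_smul, norm_mE]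

lemma fiber_gx (s : ℝ) (hs : 1 < s) (I : Ideal (𝓞 M)) :
    HasSum (fun y : {x : 𝓞 M // Ideal.span {x} = I} => gx M s y.1)
      (if I.IsPrincipal then torsionOrder M * (Ideal.absNorm I : ℝ) ^ (-s) else 0) := by
  split_ifs with h
  · obtain ⟨g, hg⟩ := h
    have hg : I = Ideal.span {g} := hg
    subst hg
    by_cases hg0 : g = 0
    · subst hg0
      have : ∀ y : {x : 𝓞 M // Ideal.span {x} = Ideal.span {(0 : 𝓞 M)}}, gx M s y.1 = 0 := by
        rintro ⟨y, hy⟩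
        have : y = 0 := by simpa using hy
        simp only [this]
        exact gx_zero M s hs.le
      simp only [this]
      convert hasSum_zero
      simp [Real.zero_rpow (by linarith : -s ≠ 0)]
    · let e : (𝓞 M)ˣ → {x : 𝓞 M // Ideal.span {x} = Ideal.span {g}} :=
        fun u => ⟨g * u, by rw [Ideal.span_singleton_eq_span_singleton]; exact ⟨u⁻¹, by simp [mul_assoc]⟩⟩
      have he : Function.Bijective e := by
        constructor
        · intro u v huv
          have := congrArg Subtype.val huv
          exact Units.ext (mul_left_cancel₀ hg0 this)
        · rintro ⟨y, hy⟩
          rw [Ideal.span_singleton_eq_span_singleton] at hy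
          obtain ⟨u, hu⟩ := hy.symm
          exact ⟨u, Subtype.ext hu⟩
      rw [← (Equiv.ofBijective e he).hasSum_iff]
      have := (hasSum_psi M (logMap (mE M g))).mul_right ((Ideal.absNorm (Ideal.span {g}) : ℝ) ^ (-s))
      have hfe : (fun y : {x : 𝓞 M // Ideal.span {x} = Ideal.span {g}} => gx M s y.1) ∘
          (Equiv.ofBijective e he) = fun u => psi M (logEmbedding M (Additive.ofMul u) +
            logMap (mE M g)) * (Ideal.absNorm (Ideal.span {g}) : ℝ) ^ (-s) :=
        funext fun u => gx_mul_unit M s g hg0 u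
      rw [hfe]
      exact this
  · have : IsEmpty {x : 𝓞 M // Ideal.span {x} = I} := ⟨fun y => h ⟨y.1, y.2.symm⟩⟩
    exact hasSum_empty

lemma summable_gx (s : ℝ) (hs : 1 < s) : Summable (gx M s) := by
  rw [← (Equiv.sigmaFiberEquiv (fun x : 𝓞 M => Ideal.span {x})).summable_iff]
  rw [summable_sigma_of_nonneg (fun x => by simp only [Function.comp]; exact gx_nonneg M s _)]
  refine ⟨fun I => (fiber_gx M s hs I).summable, ?_⟩
  refine Summable.of_nonneg_of_le (fun I => tsum_nonneg fun x => gx_nonneg M s _) (fun I => ?_)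
    ((zsummable M s hs).mul_left (torsionOrder M : ℝ))
  refine ((fiber_gx M s hs I).tsum_eq).le.trans ?_
  split_ifs
  · exact le_rfl
  · positivity

lemma fiber_gx_mem (s : ℝ) (hs : 1 < s) (A I : Ideal (𝓞 M)) :
    HasSum (fun y : {x : 𝓞 M // Ideal.span {x} = I} => if y.1 ∈ A then gx M s y.1 else 0)
      (if I ≤ A ∧ I.IsPrincipal then torsionOrder M * (Ideal.absNorm I : ℝ) ^ (-s) else 0) := by
  by_cases hIA : I ≤ A
  · have : ∀ y : {x : 𝓞 M // Ideal.span {x} = I}, y.1 ∈ A := fun y =>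
      hIA (y.2.le (Ideal.mem_span_singleton_self y.1))
    simp only [this, hIA, true_and, if_true]
    exact fiber_gx M s hs I
  · have : ∀ y : {x : 𝓞 M // Ideal.span {x} = I}, y.1 ∉ A := fun y hy =>
      hIA (y.2.ge.trans ((Ideal.span_singleton_le_iff_mem A).2 hy))
    simp only [this, hIA, false_and, if_false]
    exact hasSum_zero

lemma tsum_gx_ideal (s : ℝ) (hs : 1 < s) (A : Ideal (𝓞 M)) :
    ∑' a : A, gx M s a =
      ∑' I : Ideal (𝓞 M), if I ≤ A ∧ I.IsPrincipal then
        torsionOrder M * (Ideal.absNorm I : ℝ) ^ (-s) else 0 := by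
  have h1 : ∑' a : A, gx M s a = ∑' x : 𝓞 M, if x ∈ A then gx M s x else 0 := by
    have := tsum_subtype (A : Set (𝓞 M)) (gx M s)
    refine this.trans (tsum_congr fun x => ?_)
    simp [Set.indicator_apply]
  have hsum : Summable fun x : 𝓞 M => if x ∈ A then gx M s x else 0 := by
    refine Summable.of_nonneg_of_le (fun x => ?_) (fun x => ?_) (summable_gx M s hs)
    · split_ifs
      · exact gx_nonneg M s x
      · exact le_rfl
    · split_ifs
      · exact le_rfl
      · exact gx_nonneg M s x
  rw [h1, ← (Equiv.sigmaFiberEquiv (fun x : 𝓞 M => Ideal.span {x})).tsum_eq]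
  refine (Summable.tsum_sigma ((Equiv.sigmaFiberEquiv _).summable_iff.2 hsum)).trans ?_
  exact tsum_congr fun n => (fiber_gx_mem M s hs A n).tsum_eq

/-- partial zeta function attached to the inverse class of `A` -/
noncomputable def zA (A : Ideal (𝓞 M)) (s : ℝ) : ℝ :=
  ∑' J : Ideal (𝓞 M), if (A * J).IsPrincipal then (Ideal.absNorm J : ℝ) ^ (-s) else 0

lemma summable_zA (A : Ideal (𝓞 M)) (s : ℝ) (hs : 1 < s) :
    Summable fun J : Ideal (𝓞 M) => if (A * J).IsPrincipal then (Ideal.absNorm J : ℝ) ^ (-s) else 0 := by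
  refine Summable.of_nonneg_of_le (fun x => ?_) (fun x => ?_) (zsummable M s hs)
  · split_ifs <;> positivity
  · split_ifs
    · exact le_rfl
    · positivity

lemma zA_nonneg (A : Ideal (𝓞 M)) (s : ℝ) : 0 ≤ zA M A s :=
  tsum_nonneg fun J => by split_ifs <;> positivity

lemma zA_le (A : Ideal (𝓞 M)) (s : ℝ) (hs : 1 < s) : zA M A s ≤ Zt M s := by
  refine (summable_zA M A s hs).tsum_le_tsum (fun J => ?_) (zsummable M s hs)
  split_ifs
  · exact le_rfl
  · positivity

lemma tsum_gx_ideal' (s : ℝ) (hs : 1 < s) (A : Ideal (𝓞 M)) (hA : A ≠ ⊥) :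
    ∑' a : A, gx M s a = torsionOrder M * ((Ideal.absNorm A : ℝ) ^ (-s) * zA M A s) := by
  rw [tsum_gx_ideal M s hs A, zA, ← tsum_mul_left, ← tsum_mul_left]
  have hinj : Function.Injective (fun J : Ideal (𝓞 M) => A * J) := fun a b h =>
    mul_left_cancel₀ (a := A) (by simpa using hA) h
  rw [← hinj.tsum_eq]
  · refine tsum_congr fun J => ?_
    have : A * J ≤ A := Ideal.mul_le_left
    simp only [this, true_and, map_mul, Nat.cast_mul]
    split_ifs
    · rw [Real.mul_rpow (by positivity) (by positivity)]
    · simp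
  · intro I hI
    rw [Function.mem_support] at hI
    have hIA : I ≤ A := by
      by_contra h
      exact hI (by simp [h])
    obtain ⟨J, hJ⟩ := Ideal.dvd_iff_le.2 hIA
    exact ⟨J, hJ.symm⟩

lemma zA_diff (A : Ideal (𝓞 M)) (hA : A ≠ ⊥) :
    ∃ C : ℝ, ∀ᶠ s in nhdsWithin (1:ℝ) (Set.Ioi 1), |zA M A s - zA M ⊤ s| ≤ C := by
  obtain ⟨C, hC⟩ := ideal_diff M A hA
  obtain ⟨c, C', hc, hC', hz⟩ := zbounds M
  have hN : (1:ℝ) ≤ Ideal.absNorm A := by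
    exact_mod_cast Nat.one_le_iff_ne_zero.2 (by rw [Ne, Ideal.absNorm_eq_zero_iff]; exact hA)
  set N : ℝ := (Ideal.absNorm A : ℝ) with hNdef
  have hw : (1:ℝ) ≤ torsionOrder M := by
    exact_mod_cast (torsionOrder_pos M)
  refine ⟨C + Real.log N * C', ?_⟩
  have h2 : ∀ᶠ s in nhdsWithin (1:ℝ) (Set.Ioi 1), s ≤ 2 :=
    mem_nhdsWithin_of_mem_nhds (Iic_mem_nhds (by norm_num))
  filter_upwards [hz, self_mem_nhdsWithin, h2] with s hz hs hs2
  have hs : 1 < s := hs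
  have h3 := hC s hs.le hs2 (summable_gx M s hs)
  have h4 := tsum_gx_ideal' M s hs A hA
  have h5 : ∑' x, gx M s x = torsionOrder M * zA M ⊤ s := by
    have := tsum_gx_ideal' M s hs ⊤ top_ne_bot
    simp only [Ideal.absNorm_top, Nat.cast_one, Real.one_rpow, one_mul] at this
    rw [← this]
    exact ((Equiv.Set.univ (𝓞 M)).tsum_eq (gx M s)).symm
  rw [h4, h5] at h3
  have h6 : N * (torsionOrder M * (N ^ (-s) * zA M A s)) - torsionOrder M * zA M ⊤ s
     = torsionOrder M * (N ^ (1-s) * zA M A s - zA M ⊤ s) := by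
    rw [show 1 - s = 1 + (-s) by ring, Real.rpow_add (by linarith), Real.rpow_one]; ring
  rw [h6, abs_mul, abs_of_nonneg (by linarith)] at h3
  have h7 : |N ^ (1-s) * zA M A s - zA M ⊤ s| ≤ C :=
    le_trans (le_mul_of_one_le_left (abs_nonneg _) hw) h3
  have h8 : |zA M A s - N ^ (1-s) * zA M A s| ≤ Real.log N * C' := by
    have hp : N ^ (1-s) ≤ 1 := Real.rpow_le_one_of_one_le_of_nonpos hN (by linarith)
    have hp2 : 1 + (1 - s) * Real.log N ≤ N ^ (1-s) := by
      rw [Real.rpow_def_of_pos (by linarith)]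
      have := Real.add_one_le_exp (Real.log N * (1-s))
      linarith
    have hl : 0 ≤ Real.log N := Real.log_nonneg hN
    have hz0 := zA_nonneg M A s
    have hzl := zA_le M A s hs
    rw [abs_of_nonneg (by nlinarith)]
    calc zA M A s - N ^ (1-s) * zA M A s = (1 - N ^ (1-s)) * zA M A s := by ring
      _ ≤ ((s-1) * Real.log N) * zA M A s := mul_le_mul_of_nonneg_right (by linarith) hz0
      _ ≤ ((s-1) * Real.log N) * Zt M s := mul_le_mul_of_nonneg_left hzl (mul_nonneg (by linarith) hl)
      _ = Real.log N * ((s-1) * Zt M s) := by ring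
      _ ≤ _ := mul_le_mul_of_nonneg_left hz.2 hl
  calc |zA M A s - zA M ⊤ s| = |(N ^ (1-s) * zA M A s - zA M ⊤ s) + (zA M A s - N ^ (1-s) * zA M A s)| := by
        congr 1; ring
    _ ≤ _ := (abs_add_le _ _).trans (add_le_add h7 h8)

end NSD

namespace NSD
open NumberField
open scoped Classical nonZeroDivisors

variable (M : Type*) [Field M] [NumberField M]

lemma L_bounded (Φ : Ideal (𝓞 M) → ℝ) (h1 : ∀ I, I ≠ ⊥ → Φ I = 1 ∨ Φ I = -1)
    (hm : ∀ I J, I ≠ ⊥ → J ≠ ⊥ → Φ (I * J) = Φ I * Φ J)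
    (hp : ∀ x : 𝓞 M, x ≠ 0 → Φ (Ideal.span {x}) = 1) (A0 : Ideal (𝓞 M)) (hA0 : A0 ≠ ⊥)
    (hA0' : Φ A0 = -1) :
    ∃ C : ℝ, ∀ᶠ s in nhdsWithin (1:ℝ) (Set.Ioi 1),
      |∑' I : Ideal (𝓞 M), Φ I * (Ideal.absNorm I : ℝ) ^ (-s)| ≤ C := by
  have hcl : ∀ I J : (Ideal (𝓞 M))⁰, ClassGroup.mk0 I = ClassGroup.mk0 J → Φ I = Φ J := by
    intro I J h
    obtain ⟨x, y, hx, hy, e⟩ := ClassGroup.mk0_eq_mk0_iff.1 h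
    have h2 := congrArg Φ e
    have hI : (I : Ideal (𝓞 M)) ≠ ⊥ := nonZeroDivisors.coe_ne_zero I
    have hJ : (J : Ideal (𝓞 M)) ≠ ⊥ := nonZeroDivisors.coe_ne_zero J
    rwa [hm _ _ (by simpa using hx) hI, hm _ _ (by simpa using hy) hJ, hp x hx, hp y hy, one_mul,
      one_mul] at h2
  have hsurj := ClassGroup.mk0_surjective (R := 𝓞 M)
  choose A hA using hsurj
  set φ : ClassGroup (𝓞 M) → ℝ := fun c => Φ (A c) with hφ
  have hφmk : ∀ I : (Ideal (𝓞 M))⁰, φ (ClassGroup.mk0 I) = Φ I := fun I => hcl _ _ (hA _)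
  have hne : ∀ I : (Ideal (𝓞 M))⁰, (I : Ideal (𝓞 M)) ≠ ⊥ := fun I => nonZeroDivisors.coe_ne_zero I
  have hφmul : ∀ c d, φ (c * d) = φ c * φ d := by
    intro c d
    obtain ⟨I, rfl⟩ := ClassGroup.mk0_surjective c
    obtain ⟨J, rfl⟩ := ClassGroup.mk0_surjective d
    rw [← map_mul, hφmk, hφmk, hφmk]
    exact hm _ _ (hne I) (hne J)
  have hφ1 : φ 1 = 1 := by
    have := hφmul 1 1
    rw [one_mul] at this
    rcases h1 _ (hne (A 1)) with h | h
    · exact h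
    · have h' : φ 1 = -1 := h
      rw [h'] at this; norm_num at this
  have hφinv : ∀ c, φ c * φ c = 1 := by
    intro c
    rcases h1 _ (hne (A c)) with h | h
    · have h' : φ c = 1 := h
      rw [h']; norm_num
    · have h' : φ c = -1 := h
      rw [h']; norm_num
  have hsum0 : ∑ c, φ c = 0 := by
    set c0 := ClassGroup.mk0 ⟨A0, mem_nonZeroDivisors_of_ne_zero hA0⟩ with hc0
    have h0 : φ c0 = -1 := by rw [hc0, hφmk]; exact hA0'
    have e := Equiv.sum_comp (Equiv.mulRight c0) φ
    have e2 : ∑ c, φ (Equiv.mulRight c0 c) = -∑ c, φ c := by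
      rw [← Finset.sum_neg_distrib]
      refine Finset.sum_congr rfl fun c _ => ?_
      simp [hφmul, h0]
    linarith
  have key : ∀ s : ℝ, 1 < s → ∀ J : Ideal (𝓞 M), Φ J * (Ideal.absNorm J : ℝ) ^ (-s) =
      ∑ c, φ c * (if ((A c : Ideal (𝓞 M)) * J).IsPrincipal then (Ideal.absNorm J : ℝ) ^ (-s) else 0) := by
    intro s hs J
    by_cases hJ : J = ⊥
    · subst hJ
      simp [Real.zero_rpow (by linarith : -s ≠ 0)]
    · set J' : (Ideal (𝓞 M))⁰ := ⟨J, mem_nonZeroDivisors_of_ne_zero hJ⟩ with hJ'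
      have hpr : ∀ c, ((A c : Ideal (𝓞 M)) * J).IsPrincipal ↔ c = (ClassGroup.mk0 J')⁻¹ := by
        intro c
        have : ((A c : Ideal (𝓞 M)) * J) = ((A c * J' : (Ideal (𝓞 M))⁰) : Ideal (𝓞 M)) := rfl
        rw [this, ← ClassGroup.mk0_eq_one_iff (SetLike.coe_mem _)]
        rw [show (⟨((A c * J' : (Ideal (𝓞 M))⁰) : Ideal (𝓞 M)), SetLike.coe_mem _⟩ : (Ideal (𝓞 M))⁰) = A c * J' from rfl]
        rw [map_mul, hA, eq_inv_iff_mul_eq_one]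
      simp_rw [hpr]
      rw [Finset.sum_eq_single (ClassGroup.mk0 J')⁻¹]
      · rw [if_pos rfl]
        congr 1
        have h3 : φ ((ClassGroup.mk0 J')⁻¹) * φ (ClassGroup.mk0 J') = 1 := by
          rw [← hφmul, inv_mul_cancel, hφ1]
        have h4 : φ (ClassGroup.mk0 J') = Φ J := hφmk J'
        rw [← h4]
        have h5 := hφinv (ClassGroup.mk0 J')
        have h6 : φ (ClassGroup.mk0 J') ≠ 0 := fun h => by rw [h] at h5; norm_num at h5
        exact mul_right_cancel₀ h6 (h5.trans h3.symm)
      · intro c _ hc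
        rw [if_neg hc, mul_zero]
      · intro h; exact absurd (Finset.mem_univ _) h
  choose C hC using fun c => zA_diff M (A c) (hne _)
  refine ⟨∑ c, C c, ?_⟩
  have hall := Filter.eventually_all.2 hC
  filter_upwards [hall, self_mem_nhdsWithin] with s hs1 hs
  have hs : 1 < s := hs
  have hL : ∑' I : Ideal (𝓞 M), Φ I * (Ideal.absNorm I : ℝ) ^ (-s) =
      ∑ c, φ c * (zA M (A c) s - zA M ⊤ s) := by
    rw [tsum_congr (key s hs), Summable.tsum_finsetSum]
    · simp_rw [mul_sub]
      rw [Finset.sum_sub_distrib, ← Finset.sum_mul, hsum0, zero_mul, sub_zero]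
      refine Finset.sum_congr rfl fun c _ => ?_
      rw [tsum_mul_left]; rfl
    · intro c _
      exact (summable_zA M (A c) s hs).mul_left _
  rw [hL]
  refine (Finset.abs_sum_le_sum_abs _ _).trans (Finset.sum_le_sum fun c _ => ?_)
  have : |φ c| = 1 := by
    rcases h1 _ (hne (A c)) with h | h
    · have h' : φ c = 1 := h
      rw [h']; norm_num
    · have h' : φ c = -1 := h
      rw [h']; norm_num
  rw [abs_mul, this, one_mul]
  exact hs1 c

end NSD

namespace NSD
open NumberField IsDedekindDomain Filter Topology
open scoped Classical

variable (F : Type*) [Field F] [NumberField F]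

lemma euler_partial (t : Ideal (𝓞 F) → ℝ) (ht : Summable t) (hm : ∀ I J, t (I * J) = t I * t J)
    (S : Finset (HeightOneSpectrum (𝓞 F))) :
    (∑' I, t I) * ∏ v ∈ S, (1 - t v.asIdeal) =
      ∑' I, if ∀ v ∈ S, ¬ v.asIdeal ∣ I then t I else 0 := by
  induction S using Finset.induction_on with
  | empty => simp
  | insert v S hv ih =>
    rw [Finset.prod_insert hv, mul_left_comm, ih]
    have hs : ∀ S : Finset (HeightOneSpectrum (𝓞 F)),
        Summable fun I => if ∀ v ∈ S, ¬ v.asIdeal ∣ I then t I else 0 := by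
      intro S
      refine Summable.of_norm_bounded ht.norm fun I => ?_
      split_ifs
      · exact le_rfl
      · simp
    have hs2 : Summable fun I => if (∀ v ∈ S, ¬ v.asIdeal ∣ I) ∧ v.asIdeal ∣ I then t I else 0 := by
      refine Summable.of_norm_bounded ht.norm fun I => ?_
      split_ifs
      · exact le_rfl
      · simp
    have h1 : (∑' I, if (∀ v ∈ S, ¬ v.asIdeal ∣ I) ∧ v.asIdeal ∣ I then t I else 0) =
        t v.asIdeal * ∑' I, if ∀ v ∈ S, ¬ v.asIdeal ∣ I then t I else 0 := by
      have hinj : Function.Injective (fun J : Ideal (𝓞 F) => v.asIdeal * J) := fun a b h =>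
        mul_left_cancel₀ (a := v.asIdeal) (by simpa using v.ne_bot) h
      rw [← tsum_mul_left, ← hinj.tsum_eq]
      · refine tsum_congr fun J => ?_
        have : (∀ v' ∈ S, ¬ v'.asIdeal ∣ v.asIdeal * J) ↔ ∀ v' ∈ S, ¬ v'.asIdeal ∣ J := by
          refine forall₂_congr fun v' hv' => not_congr ?_
          constructor
          · intro h
            rcases v'.prime.dvd_or_dvd h with h | h
            · exfalso
              rw [Ideal.dvd_iff_le] at h
              have := v.isMaximal.eq_of_le v'.isPrime.ne_top h
              have := HeightOneSpectrum.ext this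
              exact hv (this ▸ hv')
            · exact h
          · exact fun h => dvd_mul_of_dvd_right h _
        simp only [this, dvd_mul_right, and_true, hm]
        split_ifs <;> simp
      · intro I hI
        rw [Function.mem_support] at hI
        have hIA : v.asIdeal ∣ I := by
          by_contra h
          exact hI (by simp [h])
        obtain ⟨J, hJ⟩ := hIA
        exact ⟨J, hJ.symm⟩
    rw [sub_mul, one_mul, ← h1, ← (hs S).tsum_sub hs2]
    refine tsum_congr fun I => ?_
    simp only [Finset.forall_mem_insert]
    by_cases h1 : v.asIdeal ∣ I <;> by_cases h2 : ∀ v ∈ S, ¬ v.asIdeal ∣ I <;> simp [h1, h2]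

lemma euler_tendsto (t : Ideal (𝓞 F) → ℝ) (ht : Summable t) (hm : ∀ I J, t (I * J) = t I * t J)
    (h1 : t ⊤ = 1) (h0 : t ⊥ = 0) :
    Tendsto (fun S : Finset (HeightOneSpectrum (𝓞 F)) => (∑' I, t I) * ∏ v ∈ S, (1 - t v.asIdeal))
      atTop (𝓝 1) := by
  simp_rw [euler_partial F t ht hm]
  have e : (1:ℝ) = ∑' I : Ideal (𝓞 F), if I = ⊤ then (1:ℝ) else 0 :=
    (tsum_ite_eq (⊤ : Ideal (𝓞 F)) (fun _ => (1:ℝ))).symm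
  rw [e]
  refine tendsto_tsum_of_dominated_convergence (bound := fun I => ‖t I‖) ht.norm ?_ ?_
  · intro I
    by_cases hI : I = ⊤
    · subst hI
      simp only [if_true]
      refine tendsto_const_nhds.congr fun S => ?_
      rw [if_pos, h1]
      intro v _ h
      exact v.isPrime.ne_top (top_le_iff.1 (Ideal.dvd_iff_le.1 h))
    · rw [if_neg hI]
      by_cases hb : I = ⊥
      · subst hb
        simp [h0]
      · obtain ⟨m, hmax, hle⟩ := Ideal.exists_le_maximal I hI
        have hmb : m ≠ ⊥ := fun h => hb (le_bot_iff.1 (h ▸ hle))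
        let v : HeightOneSpectrum (𝓞 F) := ⟨m, hmax.isPrime, hmb⟩
        refine tendsto_const_nhds.congr' ?_
        filter_upwards [eventually_ge_atTop {v}] with S hS
        rw [if_neg]
        push Not
        exact ⟨v, hS (Finset.mem_singleton_self v), Ideal.dvd_iff_le.2 hle⟩
  · refine Eventually.of_forall fun S I => ?_
    split_ifs
    · exact le_rfl
    · simp

lemma summable_prime (s : ℝ) (hs : 1 < s) :
    Summable fun v : HeightOneSpectrum (𝓞 F) => (Ideal.absNorm v.asIdeal : ℝ) ^ (-s) :=
  (zsummable F s hs).comp_injective (i := fun v : HeightOneSpectrum (𝓞 F) => v.asIdeal)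
    (fun a b h => HeightOneSpectrum.ext h)

lemma two_le_norm (v : HeightOneSpectrum (𝓞 F)) : (2 : ℝ) ≤ Ideal.absNorm v.asIdeal := by
  have h0 : Ideal.absNorm v.asIdeal ≠ 0 := by
    rw [Ne, Ideal.absNorm_eq_zero_iff]; exact v.ne_bot
  have h1 : Ideal.absNorm v.asIdeal ≠ 1 := by
    rw [Ne, Ideal.absNorm_eq_one_iff]; exact v.isPrime.ne_top
  exact_mod_cast (by omega : 2 ≤ Ideal.absNorm v.asIdeal)

/-- prime sum -/
noncomputable def Pr (Φ : Ideal (𝓞 F) → ℝ) (s : ℝ) : ℝ :=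
  ∑' v : HeightOneSpectrum (𝓞 F), Φ v.asIdeal * (Ideal.absNorm v.asIdeal : ℝ) ^ (-s)

lemma euler_bound (Φ : Ideal (𝓞 F) → ℝ) (hb : ∀ I, |Φ I| ≤ 1) (h1 : Φ ⊤ = 1)
    (hm : ∀ I J, I ≠ ⊥ → J ≠ ⊥ → Φ (I * J) = Φ I * Φ J) (s : ℝ) (hs : 1 < s) :
    Real.exp (Pr F Φ s - 2 * Zt F 2) ≤ ∑' I, Φ I * (Ideal.absNorm I : ℝ) ^ (-s) ∧
    ∑' I, Φ I * (Ideal.absNorm I : ℝ) ^ (-s) ≤ Real.exp (Pr F Φ s + 2 * Zt F 2) := by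
  obtain ⟨t, htd⟩ : ∃ t : Ideal (𝓞 F) → ℝ, t = fun I => Φ I * (Ideal.absNorm I : ℝ) ^ (-s) := ⟨_, rfl⟩
  have hti : ∀ I, Φ I * (Ideal.absNorm I : ℝ) ^ (-s) = t I := fun I => by rw [htd]
  have htb : ∀ I, |t I| ≤ (Ideal.absNorm I : ℝ) ^ (-s) := fun I => by
    rw [htd]
    simp only [abs_mul]
    rw [abs_of_nonneg (a := (Ideal.absNorm I : ℝ) ^ (-s)) (by positivity)]
    exact mul_le_of_le_one_left (by positivity) (hb I)
  have h0 : t ⊥ = 0 := by simp [htd, Real.zero_rpow (by linarith : -s ≠ 0)]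
  have ht1 : t ⊤ = 1 := by simp [htd, h1]
  have htm : ∀ I J, t (I * J) = t I * t J := by
    intro I J
    by_cases hI : I = ⊥
    · subst hI; simp [h0]
    by_cases hJ : J = ⊥
    · subst hJ; simp [h0]
    simp only [htd, hm I J hI hJ, map_mul, Nat.cast_mul]
    rw [Real.mul_rpow (by positivity) (by positivity)]
    ring
  have hts : Summable t := Summable.of_norm_bounded (zsummable F s hs) htb
  have hP : Pr F Φ s = ∑' v : HeightOneSpectrum (𝓞 F), t v.asIdeal := by simp [Pr, htd]
  have hPs : Summable fun v : HeightOneSpectrum (𝓞 F) => t v.asIdeal :=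
    Summable.of_norm_bounded (summable_prime F s hs) fun v => htb _
  simp_rw [hti]
  rw [hP]
  have hlim := euler_tendsto F t hts htm ht1 h0
  set L := ∑' I, t I with hL
  set C := 2 * Zt F 2 with hC
  -- bounds on a single factor
  have htv : ∀ v : HeightOneSpectrum (𝓞 F), |t v.asIdeal| ≤ (Ideal.absNorm v.asIdeal : ℝ)⁻¹ := by
    intro v
    refine (htb _).trans ?_
    rw [← Real.rpow_neg_one]
    exact Real.rpow_le_rpow_of_exponent_le (by linarith [two_le_norm F v]) (by linarith)
  have hhalf : ∀ v : HeightOneSpectrum (𝓞 F), |t v.asIdeal| ≤ 1 / 2 := by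
    intro v
    refine (htv v).trans ?_
    rw [one_div]
    exact inv_anti₀ (by norm_num) (two_le_norm F v)
  have hpos : ∀ v : HeightOneSpectrum (𝓞 F), 0 < 1 - t v.asIdeal := by
    intro v
    have := abs_le.1 (hhalf v)
    linarith
  have hlog : ∀ v : HeightOneSpectrum (𝓞 F),
      |t v.asIdeal + Real.log (1 - t v.asIdeal)| ≤ 2 * (Ideal.absNorm v.asIdeal : ℝ) ^ (-(2:ℝ)) := by
    intro v
    have h := Real.abs_log_sub_add_sum_range_le (x := t v.asIdeal)
      (lt_of_le_of_lt (hhalf v) (by norm_num)) 1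
    simp only [Finset.sum_range_one, zero_add, pow_one, Nat.cast_zero, div_one] at h
    refine h.trans ?_
    have hn := two_le_norm F v
    have h3 : |t v.asIdeal| ^ 2 ≤ (Ideal.absNorm v.asIdeal : ℝ) ^ (-(2:ℝ)) := by
      rw [Real.rpow_neg (by positivity), Real.rpow_two, ← inv_pow]
      exact pow_le_pow_left₀ (abs_nonneg _) (htv v) 2
    have h4 := hhalf v
    rw [div_le_iff₀ (by linarith)]
    have h5 := sq_nonneg |t v.asIdeal|
    norm_num at h3 h5 ⊢
    nlinarith
  have hsum2 : ∀ S : Finset (HeightOneSpectrum (𝓞 F)),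
      ∑ v ∈ S, 2 * (Ideal.absNorm v.asIdeal : ℝ) ^ (-(2:ℝ)) ≤ C := by
    intro S
    rw [← Finset.mul_sum, hC]
    have h6 := (summable_prime F 2 (by norm_num)).sum_le_tsum S (fun v _ => by positivity)
    have h7 : ∑' v : HeightOneSpectrum (𝓞 F), (Ideal.absNorm v.asIdeal : ℝ) ^ (-(2:ℝ)) ≤ Zt F 2 :=
      Summable.tsum_le_tsum_of_inj (fun v : HeightOneSpectrum (𝓞 F) => v.asIdeal)
        (fun a b h => HeightOneSpectrum.ext h) (fun I _ => by positivity) (fun v => le_rfl)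
        (summable_prime F 2 (by norm_num)) (zsummable F 2 (by norm_num))
    linarith
  have hprod : ∀ S : Finset (HeightOneSpectrum (𝓞 F)),
      ∏ v ∈ S, (1 - t v.asIdeal) = Real.exp (∑ v ∈ S, Real.log (1 - t v.asIdeal)) := by
    intro S
    rw [Real.exp_sum]
    exact Finset.prod_congr rfl fun v _ => (Real.exp_log (hpos v)).symm
  have herr : ∀ S : Finset (HeightOneSpectrum (𝓞 F)),
      |∑ v ∈ S, t v.asIdeal + ∑ v ∈ S, Real.log (1 - t v.asIdeal)| ≤ C := by
    intro S
    rw [← Finset.sum_add_distrib]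
    exact (Finset.abs_sum_le_sum_abs _ _).trans ((Finset.sum_le_sum fun v _ => hlog v).trans (hsum2 S))
  have hPS : Tendsto (fun S : Finset (HeightOneSpectrum (𝓞 F)) => ∑ v ∈ S, t v.asIdeal) atTop
      (𝓝 (∑' v : HeightOneSpectrum (𝓞 F), t v.asIdeal)) := hPs.hasSum
  have hLpos : 0 < L := by
    by_contra hle
    push Not at hle
    have : (1:ℝ) ≤ 0 := le_of_tendsto hlim (Eventually.of_forall fun S =>
      mul_nonpos_of_nonpos_of_nonneg hle (Finset.prod_nonneg fun v _ => (hpos v).le))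
    norm_num at this
  generalize ∑' v : HeightOneSpectrum (𝓞 F), t v.asIdeal = P at *
  constructor
  · have ha : 1 ≤ L * Real.exp (-P + C) := by
      refine le_of_tendsto_of_tendsto hlim (b := atTop)
        (((Real.continuous_exp.tendsto _).comp (hPS.neg.add_const C)).const_mul L) ?_
      refine Eventually.of_forall fun S => ?_
      refine mul_le_mul_of_nonneg_left ?_ hLpos.le
      rw [hprod]
      refine Real.exp_le_exp.2 ?_
      have := abs_le.1 (herr S)
      linarith
    have : Real.exp (P - C) * Real.exp (-P + C) = 1 := by rw [← Real.exp_add]; simp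
    refine le_of_mul_le_mul_right (this.le.trans ha) (Real.exp_pos _)
  · have ha : L * Real.exp (-P - C) ≤ 1 := by
      refine le_of_tendsto_of_tendsto (b := atTop)
        (((Real.continuous_exp.tendsto _).comp (hPS.neg.sub_const C)).const_mul L) hlim ?_
      refine Eventually.of_forall fun S => ?_
      refine mul_le_mul_of_nonneg_left ?_ hLpos.le
      rw [hprod]
      refine Real.exp_le_exp.2 ?_
      have := abs_le.1 (herr S)
      linarith
    have : Real.exp (P + C) * Real.exp (-P - C) = 1 := by rw [← Real.exp_add]; simp
    refine le_of_mul_le_mul_right (ha.trans this.ge) (Real.exp_pos _)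

end NSD

namespace NSD
open NumberField IsDedekindDomain
open scoped Classical

variable (M N : Type*) [Field M] [NumberField M] [Field N] [NumberField N] [Algebra M N]

lemma absNorm_relN (I : Ideal (𝓞 N)) :
    Ideal.absNorm (Ideal.relNorm (𝓞 M) I) = Ideal.absNorm I := Ideal.absNorm_relNorm (𝓞 M) (𝓞 N) I

/-- residue degree -/
lemma exists_f (w : HeightOneSpectrum (𝓞 N)) : ∃ f : ℕ, 1 ≤ f ∧
    Ideal.relNorm (𝓞 M) w.asIdeal = (w.under (𝓞 M)).asIdeal ^ f := by
  have : w.asIdeal.LiesOver (w.under (𝓞 M)).asIdeal := ⟨rfl⟩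
  have := (w.under (𝓞 M)).isPrime
  obtain ⟨f, hf⟩ := Ideal.exists_relNorm_eq_pow_of_isPrime w.asIdeal (w.under (𝓞 M)).asIdeal
  refine ⟨f, ?_, hf⟩
  by_contra h
  have h0 : f = 0 := by omega
  have h1 := absNorm_relN M N w.asIdeal
  rw [hf, h0, pow_zero, Ideal.one_eq_top, Ideal.absNorm_top] at h1
  exact w.isPrime.ne_top (Ideal.absNorm_eq_one_iff.1 h1.symm)

/-- residue degree -/
noncomputable def fdeg (w : HeightOneSpectrum (𝓞 N)) : ℕ := (exists_f M N w).choose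

lemma one_le_fdeg (w : HeightOneSpectrum (𝓞 N)) : 1 ≤ fdeg M N w := (exists_f M N w).choose_spec.1

lemma relNorm_fdeg (w : HeightOneSpectrum (𝓞 N)) :
    Ideal.relNorm (𝓞 M) w.asIdeal = (w.under (𝓞 M)).asIdeal ^ fdeg M N w :=
  (exists_f M N w).choose_spec.2

lemma absNorm_fdeg (w : HeightOneSpectrum (𝓞 N)) :
    Ideal.absNorm w.asIdeal = Ideal.absNorm (w.under (𝓞 M)).asIdeal ^ fdeg M N w := by
  rw [← map_pow, ← relNorm_fdeg, absNorm_relN]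

lemma finrank_int : Module.finrank (𝓞 M) (𝓞 N) = Module.finrank M N :=
  (IsFractionRing.finrank_eq (𝓞 M) M (𝓞 N) N).symm

lemma sum_fdeg_le (v : HeightOneSpectrum (𝓞 M)) (W : Finset (HeightOneSpectrum (𝓞 N)))
    (hW : ∀ w ∈ W, w.under (𝓞 M) = v) : ∑ w ∈ W, fdeg M N w ≤ Module.finrank M N := by
  have h1 : ∏ w ∈ W, w.asIdeal ∣ v.asIdeal.map (algebraMap (𝓞 M) (𝓞 N)) := by
    have hinj : Function.Injective (fun w : HeightOneSpectrum (𝓞 N) => w.asIdeal) :=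
      fun a b h => HeightOneSpectrum.ext h
    rw [← Finset.prod_image (f := fun I => I) (g := fun w : HeightOneSpectrum (𝓞 N) => w.asIdeal)
      (fun a _ b _ h => hinj h)]
    refine Finset.prod_primes_dvd _ ?_ ?_
    · intro a ha
      obtain ⟨w, hw, rfl⟩ := Finset.mem_image.1 ha
      exact w.prime
    · intro a ha
      obtain ⟨w, hw, rfl⟩ := Finset.mem_image.1 ha
      rw [Ideal.dvd_iff_le, Ideal.map_le_iff_le_comap, ← hW w hw]
      exact le_rfl
  have h2 := map_dvd (Ideal.relNorm (𝓞 M)) h1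
  rw [Ideal.relNorm_algebraMap, map_prod, finrank_int,
    Finset.prod_congr rfl (fun w hw => by rw [relNorm_fdeg, hW w hw]), Finset.prod_pow_eq_pow_sum] at h2
  exact (pow_dvd_pow_iff v.prime.ne_zero v.prime.not_isUnit).1 h2

lemma card_fiber_le (v : HeightOneSpectrum (𝓞 M)) (W : Finset (HeightOneSpectrum (𝓞 N)))
    (hW : ∀ w ∈ W, w.under (𝓞 M) = v) : W.card ≤ Module.finrank M N := by
  refine le_trans ?_ (sum_fdeg_le M N v W hW)
  rw [Finset.card_eq_sum_ones]
  exact Finset.sum_le_sum fun w _ => one_le_fdeg M N w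

lemma finite_fiber (v : HeightOneSpectrum (𝓞 M)) :
    Set.Finite {w : HeightOneSpectrum (𝓞 N) | w.under (𝓞 M) = v} := by
  by_contra h
  obtain ⟨t, ht, hc⟩ := Set.Infinite.exists_subset_card_eq h (Module.finrank M N + 1)
  have := card_fiber_le M N v t (fun w hw => ht hw)
  omega

lemma exists_over (v : HeightOneSpectrum (𝓞 M)) : ∃ w : HeightOneSpectrum (𝓞 N), w.under (𝓞 M) = v := by
  have := v.isPrime
  obtain ⟨Q, hQ, hQ2⟩ := Ideal.exists_ideal_over_prime_of_isIntegral_of_isDomain (S := 𝓞 N) v.asIdeal (by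
    rw [(RingHom.injective_iff_ker_eq_bot _).1 (FaithfulSMul.algebraMap_injective (𝓞 M) (𝓞 N))]
    exact bot_le)
  refine ⟨⟨Q, hQ, ?_⟩, HeightOneSpectrum.ext hQ2⟩
  rintro rfl
  apply v.ne_bot
  rw [← hQ2, ← RingHom.ker_eq_comap_bot]
  exact (RingHom.injective_iff_ker_eq_bot _).1 (FaithfulSMul.algebraMap_injective (𝓞 M) (𝓞 N))

/-- good residue case : two primes -/
lemma two_over (d : ℕ) (θ : N) (hθ : θ ^ 2 = (d : N)) (hd : ¬ IsSquare (d : M)) [IsGalois M N]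
    (v : HeightOneSpectrum (𝓞 M)) (h2 : ((2 * d : ℕ) : 𝓞 M) ∉ v.asIdeal)
    (r : 𝓞 M) (hr : r ^ 2 - (d : 𝓞 M) ∈ v.asIdeal) :
    ∃ w w' : HeightOneSpectrum (𝓞 N), w ≠ w' ∧ w.under (𝓞 M) = v ∧ w'.under (𝓞 M) = v := by
  obtain ⟨σ, hσ⟩ : ∃ σ : N ≃ₐ[M] N, σ θ ≠ θ := by
    by_contra! hcon
    obtain ⟨y, hy⟩ := IntermediateField.mem_bot.1 ((IsGalois.mem_bot_iff_fixed θ).2 hcon)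
    apply hd
    refine ⟨y, ?_⟩
    apply (algebraMap M N).injective
    rw [map_mul, hy, map_natCast, ← hθ, sq]
  have hσ' : σ θ = -θ := by
    have h : (σ θ) ^ 2 = θ ^ 2 := by rw [← map_pow, hθ, map_natCast]
    rcases sq_eq_sq_iff_eq_or_eq_neg.1 h with h | h
    · exact absurd h hσ
    · exact h
  have hIntegral : IsIntegral ℤ θ := by
    refine IsIntegral.of_pow (n := 2) (by norm_num) ?_
    rw [hθ]
    exact_mod_cast isIntegral_algebraMap (R := ℤ) (A := N) (x := (d : ℤ))
  let t : 𝓞 N := ⟨θ, hIntegral⟩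
  let τ : 𝓞 N →+* 𝓞 N := RingOfIntegers.mapRingHom (σ : N →+* N)
  have hτt : τ t = -t := by
    apply RingOfIntegers.ext
    exact hσ'
  have hτa : ∀ x : 𝓞 M, τ (algebraMap (𝓞 M) (𝓞 N) x) = algebraMap (𝓞 M) (𝓞 N) x := by
    intro x
    apply RingOfIntegers.ext
    exact σ.commutes (x : M)
  have ht2 : t ^ 2 = (d : 𝓞 N) := by
    apply RingOfIntegers.ext
    change algebraMap (𝓞 N) N (t ^ 2) = algebraMap (𝓞 N) N (d : 𝓞 N)
    rw [map_pow, map_natCast]; exact hθ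
  obtain ⟨w, hw⟩ := exists_over M N v
  have hwi : w.asIdeal.comap (algebraMap (𝓞 M) (𝓞 N)) = v.asIdeal := by
    rw [← hw]; rfl
  have hcomap : (w.asIdeal.comap τ).comap (algebraMap (𝓞 M) (𝓞 N)) = v.asIdeal := by
    rw [← hwi]
    ext x
    simp [Ideal.mem_comap, hτa]
  have hwp := w.isPrime
  let w' : HeightOneSpectrum (𝓞 N) := ⟨w.asIdeal.comap τ, inferInstance, by
    intro hb
    rw [hb, ← RingHom.ker_eq_comap_bot, (RingHom.injective_iff_ker_eq_bot _).1
      (FaithfulSMul.algebraMap_injective (𝓞 M) (𝓞 N))] at hcomap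
    exact v.ne_bot hcomap.symm⟩
  refine ⟨w, w', ?_, hw, HeightOneSpectrum.ext hcomap⟩
  intro heq
  have hwτ : w.asIdeal = w.asIdeal.comap τ := congrArg HeightOneSpectrum.asIdeal heq
  have hpr : (t - algebraMap (𝓞 M) (𝓞 N) r) * (t + algebraMap (𝓞 M) (𝓞 N) r) ∈ w.asIdeal := by
    have h3 : algebraMap (𝓞 M) (𝓞 N) (r ^ 2 - (d : 𝓞 M)) ∈ w.asIdeal := by
      rw [← Ideal.mem_comap, hwi]; exact hr
    have h4 := w.asIdeal.neg_mem h3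
    convert h4 using 1
    rw [map_sub, map_natCast, ← ht2, map_pow]; ring
  -- in both cases `2 t` lies in `w`
  have h2t : 2 * t ∈ w.asIdeal := by
    rcases hwp.mem_or_mem hpr with h | h
    · have h5 := h
      rw [hwτ, Ideal.mem_comap, map_sub, hτt, hτa] at h5
      have := w.asIdeal.sub_mem h h5
      convert this using 1
      ring
    · have h5 := h
      rw [hwτ, Ideal.mem_comap, map_add, hτt, hτa] at h5
      have := w.asIdeal.sub_mem h h5
      convert this using 1
      ring
  apply h2
  rw [← hwi, Ideal.mem_comap, map_natCast]
  have := w.asIdeal.mul_mem_right t h2t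
  convert this using 1
  push_cast
  rw [← ht2]; ring

/-- nonresidue case: the residue degree is at least two -/
lemma fdeg_two (d : ℕ) (θ : N) (hθ : θ ^ 2 = (d : N)) (w : HeightOneSpectrum (𝓞 N))
    (hr : ¬ ∃ r : 𝓞 M, r ^ 2 - (d : 𝓞 M) ∈ (w.under (𝓞 M)).asIdeal) : 2 ≤ fdeg M N w := by
  by_contra hf
  have hf1 : fdeg M N w = 1 := by have := one_le_fdeg M N w; omega
  have hN := absNorm_fdeg M N w
  rw [hf1, pow_one] at hN
  have hIntegral : IsIntegral ℤ θ := by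
    refine IsIntegral.of_pow (n := 2) (by norm_num) ?_
    rw [hθ]
    exact_mod_cast isIntegral_algebraMap (R := ℤ) (A := N) (x := (d : ℤ))
  let t : 𝓞 N := ⟨θ, hIntegral⟩
  have ht2 : t ^ 2 = (d : 𝓞 N) := by
    apply RingOfIntegers.ext
    change algebraMap (𝓞 N) N (t ^ 2) = algebraMap (𝓞 N) N (d : 𝓞 N)
    rw [map_pow, map_natCast]; exact hθ
  let v := (w.under (𝓞 M)).asIdeal
  have hle : v ≤ w.asIdeal.comap (algebraMap (𝓞 M) (𝓞 N)) := le_rfl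
  let g : 𝓞 M ⧸ v →+* 𝓞 N ⧸ w.asIdeal := Ideal.quotientMap w.asIdeal (algebraMap (𝓞 M) (𝓞 N)) hle
  have hginj : Function.Injective g := Ideal.quotientMap_injective' le_rfl
  have hfin1 : Finite (𝓞 M ⧸ v) := Ideal.finiteQuotientOfFreeOfNeBot _ (w.under (𝓞 M)).ne_bot
  have hfin2 : Finite (𝓞 N ⧸ w.asIdeal) := Ideal.finiteQuotientOfFreeOfNeBot _ w.ne_bot
  have hcard : Nat.card (𝓞 M ⧸ v) = Nat.card (𝓞 N ⧸ w.asIdeal) := by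
    rw [Ideal.absNorm_apply, Ideal.absNorm_apply, Submodule.cardQuot_apply,
      Submodule.cardQuot_apply] at hN
    exact hN.symm
  have hbij := (Nat.bijective_iff_injective_and_card g).2 ⟨hginj, hcard⟩
  obtain ⟨c, hc⟩ := hbij.2 (Ideal.Quotient.mk _ t)
  obtain ⟨r, rfl⟩ := Ideal.Quotient.mk_surjective c
  apply hr
  refine ⟨r, ?_⟩
  change r ^ 2 - (d : 𝓞 M) ∈ v
  rw [← Ideal.Quotient.eq_zero_iff_mem]
  apply hginj
  rw [map_sub, map_pow, map_sub, map_pow, hc, ← map_pow, ht2, map_zero]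
  simp

end NSD

namespace NSD
universe u
open NumberField IsDedekindDomain Filter Topology Polynomial
open scoped Classical

lemma pr_one (F : Type*) [Field F] [NumberField F] : ∃ C : ℝ, ∀ᶠ s in 𝓝[>] (1 : ℝ),
    |Pr F (fun _ => 1) s + Real.log (s - 1)| ≤ C := by
  obtain ⟨c, C, hc, hC, h⟩ := zbounds F
  refine ⟨2 * Zt F 2 + |Real.log c| + |Real.log C|, ?_⟩
  filter_upwards [h, self_mem_nhdsWithin] with s hs hs1
  have hs1 : 1 < s := hs1
  have hp : 0 < s - 1 := by linarith
  have := euler_bound F (fun _ => 1) (by simp) rfl (by simp) s hs1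
  simp only [one_mul] at this
  obtain ⟨e1, e2⟩ := this
  change _ ≤ Zt F s at e1
  change Zt F s ≤ _ at e2
  have hz : 0 < Zt F s := (Real.exp_pos _).trans_le e1
  have l1 := (Real.le_log_iff_exp_le hz).2 e1
  have l2 := (Real.log_le_iff_le_exp hz).2 e2
  have l3 := Real.log_le_log hc hs.1
  have l4 := Real.log_le_log (by positivity) hs.2
  rw [Real.log_mul hp.ne' hz.ne'] at l3 l4
  have := abs_le.1 (le_refl |Real.log c|)
  have := abs_le.1 (le_refl |Real.log C|)
  rw [abs_le]
  constructor <;> linarith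

lemma exists_quad {M : Type u} [Field M] [NumberField M] (e : M) (he : ¬ IsSquare e) :
    ∃ (N : Type u) (_ : Field N) (_ : NumberField N) (_ : Algebra M N) (θ : N),
      θ ^ 2 = algebraMap M N e ∧ Module.finrank M N = 2 ∧ IsGalois M N := by
  have hirr : Irreducible (X ^ 2 - C e : M[X]) := by
    rw [X_pow_sub_C_irreducible_iff_of_prime Nat.prime_two]
    intro b hb
    exact he ⟨b, by rw [← hb, sq]⟩
  have : Fact (Irreducible (X ^ 2 - C e : M[X])) := ⟨hirr⟩
  have hmon : (X ^ 2 - C e : M[X]).Monic := monic_X_pow_sub_C e (by norm_num)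
  let N := AdjoinRoot (X ^ 2 - C e : M[X])
  let pb := AdjoinRoot.powerBasis' hmon
  have : Module.Finite M N := pb.finite
  have : CharZero N := charZero_of_injective_algebraMap (algebraMap M N).injective
  have : FiniteDimensional ℚ N := FiniteDimensional.trans ℚ M N
  have hfr : Module.finrank M N = 2 := by
    rw [pb.finrank, AdjoinRoot.powerBasis'_dim, natDegree_X_pow_sub_C]
  have : Algebra.IsQuadraticExtension M N := ⟨hfr⟩
  refine ⟨N, inferInstance, ⟨⟩, inferInstance, AdjoinRoot.root _, ?_, hfr, inferInstance⟩
  have := AdjoinRoot.eval₂_root (X ^ 2 - C e : M[X])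
  simp only [eval₂_sub, eval₂_pow, eval₂_X, eval₂_C, sub_eq_zero] at this
  exact this

/-- splitting character -/
noncomputable def chi (M : Type*) [Field M] [NumberField M] (d : ℕ)
    (v : HeightOneSpectrum (𝓞 M)) : ℝ := if ∃ r : 𝓞 M, r ^ 2 - (d : 𝓞 M) ∈ v.asIdeal then 1 else -1

lemma abs_chi (M : Type*) [Field M] [NumberField M] (d : ℕ)
    (v : HeightOneSpectrum (𝓞 M)) : |chi M d v| = 1 := by
  unfold chi; split_ifs <;> simp

section
variable (M N : Type*) [Field M] [NumberField M] [Field N] [NumberField N] [Algebra M N]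

lemma fiber_gen {A B : Type*} (f : A → B) (g : A → ℝ) (h : Summable g)
    (W : B → Finset A) (hW : ∀ b a, a ∈ W b ↔ f a = b) :
    Summable (fun b => ∑ a ∈ W b, g a) ∧ ∑' a, g a = ∑' b, ∑ a ∈ W b, g a := by
  have h' := h.hasSum
  rw [← (Equiv.sigmaFiberEquiv f).hasSum_iff] at h'
  have key : ∀ b, HasSum (fun w : {w // f w = b} => g w.1) (∑ a ∈ W b, g a) := by
    intro b
    have h1 : HasSum (fun w : {w // w ∈ W b} => g w.1) (∑ a ∈ W b, g a) := Finset.hasSum _ _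
    let e : {w // f w = b} ≃ {w // w ∈ W b} := Equiv.subtypeEquivRight fun a => (hW b a).symm
    rw [← e.hasSum_iff] at h1
    exact h1
  have h2 := h'.sigma key
  exact ⟨h2.summable, h2.tsum_eq.symm⟩

lemma pr_fiber (s : ℝ) (hs : 1 < s) :
    Summable (fun v : HeightOneSpectrum (𝓞 M) => ∑ w ∈ (finite_fiber M N v).toFinset,
      (Ideal.absNorm w.asIdeal : ℝ) ^ (-s)) ∧
    Pr N (fun _ => 1) s = ∑' v : HeightOneSpectrum (𝓞 M), ∑ w ∈ (finite_fiber M N v).toFinset,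
      (Ideal.absNorm w.asIdeal : ℝ) ^ (-s) := by
  have := fiber_gen (fun w : HeightOneSpectrum (𝓞 N) => w.under (𝓞 M)) _ (summable_prime N s hs)
    (fun v => (finite_fiber M N v).toFinset) (by simp)
  refine ⟨this.1, ?_⟩
  rw [← this.2]
  simp only [Pr, one_mul]

lemma norm_w_le (w : HeightOneSpectrum (𝓞 N)) (v : HeightOneSpectrum (𝓞 M)) (h : w.under (𝓞 M) = v)
    (s : ℝ) (hs : 1 < s) (k : ℕ) (hk : k ≤ fdeg M N w) :
    (Ideal.absNorm w.asIdeal : ℝ) ^ (-s) ≤ (Ideal.absNorm v.asIdeal : ℝ) ^ (-(k : ℝ)) := by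
  have h2 := two_le_norm M v
  rw [absNorm_fdeg M N w, h]
  push_cast
  rw [← Real.rpow_natCast, ← Real.rpow_mul (by positivity)]
  apply Real.rpow_le_rpow_of_exponent_le (by linarith)
  have : (k : ℝ) ≤ fdeg M N w := by exact_mod_cast hk
  nlinarith [(Nat.cast_nonneg (fdeg M N w) : (0 : ℝ) ≤ _)]

lemma fiber_est (d : ℕ) (θ : N) (hθ : θ ^ 2 = (d : N)) (hd : ¬ IsSquare (d : M)) [IsGalois M N]
    (h2 : Module.finrank M N = 2) (s : ℝ) (hs : 1 < s) (v : HeightOneSpectrum (𝓞 M)) :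
    |(∑ w ∈ (finite_fiber M N v).toFinset, (Ideal.absNorm w.asIdeal : ℝ) ^ (-s)) -
      (1 + chi M d v) * (Ideal.absNorm v.asIdeal : ℝ) ^ (-s)| ≤
      2 * (Ideal.absNorm v.asIdeal : ℝ) ^ (-(2 : ℝ)) +
        if ((2 * d : ℕ) : 𝓞 M) ∈ v.asIdeal then 4 else 0 := by
  set W := (finite_fiber M N v).toFinset with hW
  have hmem : ∀ w, w ∈ W ↔ w.under (𝓞 M) = v := by simp [hW]
  have hcard : W.card ≤ 2 := h2 ▸ card_fiber_le M N v W (fun w hw => (hmem w).1 hw)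
  have hsum : ∑ w ∈ W, fdeg M N w ≤ 2 := h2 ▸ sum_fdeg_le M N v W (fun w hw => (hmem w).1 hw)
  have hv2 := two_le_norm M v
  have hle1 : (Ideal.absNorm v.asIdeal : ℝ) ^ (-s) ≤ 1 :=
    Real.rpow_le_one_of_one_le_of_nonpos (by linarith) (by linarith)
  have hnn : 0 ≤ (Ideal.absNorm v.asIdeal : ℝ) ^ (-s) := by positivity
  have hnn2 : 0 ≤ (Ideal.absNorm v.asIdeal : ℝ) ^ (-(2:ℝ)) := by positivity
  have hWnn : 0 ≤ ∑ w ∈ W, (Ideal.absNorm w.asIdeal : ℝ) ^ (-s) :=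
    Finset.sum_nonneg fun w _ => by positivity
  have hbd : ∀ k : ℕ, (∀ w ∈ W, k ≤ fdeg M N w) → ∑ w ∈ W, (Ideal.absNorm w.asIdeal : ℝ) ^ (-s) ≤
      2 * (Ideal.absNorm v.asIdeal : ℝ) ^ (-(k:ℝ)) := by
    intro k hk
    calc _ ≤ ∑ w ∈ W, (Ideal.absNorm v.asIdeal : ℝ) ^ (-(k:ℝ)) :=
          Finset.sum_le_sum fun w hw => norm_w_le M N w v ((hmem w).1 hw) s hs k (hk w hw)
      _ = W.card * (Ideal.absNorm v.asIdeal : ℝ) ^ (-(k:ℝ)) := by simp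
      _ ≤ _ := by
        have : (W.card : ℝ) ≤ 2 := by exact_mod_cast hcard
        gcongr
  split_ifs with hbad
  · have := hbd 0 (by simp)
    simp only [Nat.cast_zero, neg_zero, Real.rpow_zero] at this
    have hc := abs_le.1 (abs_chi M d v).le
    rw [abs_le]
    constructor <;> nlinarith
  · rw [add_zero]
    by_cases hr : ∃ r : 𝓞 M, r ^ 2 - (d : 𝓞 M) ∈ v.asIdeal
    · obtain ⟨r, hr'⟩ := hr
      obtain ⟨w, w', hne, hw, hw'⟩ := two_over M N d θ hθ hd v hbad r hr'
      have hsub : ({w, w'} : Finset _) ⊆ W := by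
        intro x hx
        simp only [Finset.mem_insert, Finset.mem_singleton] at hx
        rcases hx with rfl | rfl
        · exact (hmem _).2 hw
        · exact (hmem _).2 hw'
      have hWeq : W = {w, w'} :=
        (Finset.eq_of_subset_of_card_le hsub (by rw [Finset.card_pair hne]; exact hcard)).symm
      rw [hWeq, Finset.sum_pair hne] at hsum
      have f1 := one_le_fdeg M N w
      have f2 := one_le_fdeg M N w'
      have hchi : chi M d v = 1 := if_pos ⟨r, hr'⟩
      have e1 : fdeg M N w = 1 := by omega
      have e2 : fdeg M N w' = 1 := by omega
      rw [hWeq, Finset.sum_pair hne, absNorm_fdeg M N w, absNorm_fdeg M N w', hw, hw', e1, e2, hchi]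
      simp only [pow_one]
      rw [show ∀ x : ℝ, x + x - (1 + 1) * x = 0 by intro x; ring]
      simpa using hnn2
    · have hchi : chi M d v = -1 := if_neg hr
      rw [hchi]
      have := hbd 2 (fun w hw => fdeg_two M N d θ hθ w (by rw [(hmem w).1 hw]; exact hr))
      simp only [Nat.cast_ofNat] at this
      rw [show (1 + -1 : ℝ) = 0 by ring, zero_mul, sub_zero, abs_of_nonneg hWnn]
      exact this

end

lemma finite_div (M : Type*) [Field M] [NumberField M] (n : ℕ) (hn : n ≠ 0) :
    {v : HeightOneSpectrum (𝓞 M) | (n : 𝓞 M) ∈ v.asIdeal}.Finite := by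
  have h0 : Ideal.span {(n : 𝓞 M)} ≠ 0 := by simpa using hn
  refine (Ideal.finite_factors h0).subset fun v hv => ?_
  rw [Set.mem_ofPred_eq, Ideal.dvd_span_singleton]
  exact hv

lemma chi_summable (M : Type*) [Field M] [NumberField M] (d : ℕ) (s : ℝ) (hs : 1 < s) :
    Summable fun v : HeightOneSpectrum (𝓞 M) => chi M d v * (Ideal.absNorm v.asIdeal : ℝ) ^ (-s) := by
  refine Summable.of_norm_bounded (summable_prime M s hs) fun v => ?_
  rw [norm_mul, Real.norm_eq_abs, abs_chi, one_mul, Real.norm_of_nonneg (by positivity)]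

lemma chi_sum (M : Type*) [Field M] [NumberField M] (d : ℕ) (hd : ¬ IsSquare (d : M)) :
    ∃ C : ℝ, ∀ᶠ s in 𝓝[>] (1 : ℝ), |∑' v : HeightOneSpectrum (𝓞 M),
      chi M d v * (Ideal.absNorm v.asIdeal : ℝ) ^ (-s)| ≤ C := by
  obtain ⟨N, _, _, _, θ, hθ, hfr, hgal⟩ := exists_quad (d : M) hd
  have hθ' : θ ^ 2 = (d : N) := by rw [hθ]; simp
  have hd0 : d ≠ 0 := by rintro rfl; simp at hd
  obtain ⟨C1, h1⟩ := pr_one M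
  obtain ⟨C2, h2⟩ := pr_one N
  let b : HeightOneSpectrum (𝓞 M) → ℝ := fun v => 2 * (Ideal.absNorm v.asIdeal : ℝ) ^ (-(2 : ℝ)) +
        if ((2 * d : ℕ) : 𝓞 M) ∈ v.asIdeal then 4 else 0
  have hb : Summable b := by
    refine ((summable_prime M 2 (by norm_num)).mul_left 2).add ?_
    refine summable_of_hasFiniteSupport ((finite_div M (2 * d) (by omega)).subset fun v hv => ?_)
    by_contra h
    exact hv (if_neg h)
  refine ⟨C1 + C2 + ∑' v, b v, ?_⟩
  filter_upwards [h1, h2, self_mem_nhdsWithin] with s hs1 hs2 hs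
  have hs : 1 < s := hs
  obtain ⟨sf, ef⟩ := pr_fiber M N s hs
  have sp := summable_prime M s hs
  have sc := chi_summable M d s hs
  have hdiff : Pr N (fun _ => 1) s - Pr M (fun _ => 1) s -
      ∑' v : HeightOneSpectrum (𝓞 M), chi M d v * (Ideal.absNorm v.asIdeal : ℝ) ^ (-s) =
      ∑' v : HeightOneSpectrum (𝓞 M), ((∑ w ∈ (finite_fiber M N v).toFinset,
        (Ideal.absNorm w.asIdeal : ℝ) ^ (-s)) -
        (1 + chi M d v) * (Ideal.absNorm v.asIdeal : ℝ) ^ (-s)) := by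
    rw [ef, Pr]
    simp only [one_mul]
    rw [← sf.tsum_sub sp, ← (sf.sub sp).tsum_sub sc]
    refine tsum_congr fun v => by ring
  have hle : |∑' v : HeightOneSpectrum (𝓞 M), ((∑ w ∈ (finite_fiber M N v).toFinset,
        (Ideal.absNorm w.asIdeal : ℝ) ^ (-s)) -
        (1 + chi M d v) * (Ideal.absNorm v.asIdeal : ℝ) ^ (-s))| ≤ ∑' v, b v := by
    rw [← Real.norm_eq_abs]
    exact tsum_of_norm_bounded hb.hasSum fun v => by
      rw [Real.norm_eq_abs]; exact fiber_est M N d θ hθ' hd hfr s hs v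
  rw [← hdiff] at hle
  rw [abs_le] at *
  constructor <;> linarith [hs1.1, hs1.2, hs2.1, hs2.2, hle.1, hle.2]

end NSD

namespace NSD
open NumberField IsDedekindDomain Filter Topology Polynomial
open scoped Classical

variable (M : Type*) [Field M] [NumberField M]

lemma pr_unbounded (C : ℝ) : ¬ ∀ᶠ s in 𝓝[>] (1 : ℝ), Pr M (fun _ => 1) s ≤ C := by
  intro h
  obtain ⟨C1, h1⟩ := pr_one M
  have h2 : Tendsto (fun s : ℝ => Real.log (s - 1)) (𝓝[>] 1) atBot := by
    refine Real.tendsto_log_nhdsGT_zero.comp ?_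
    refine tendsto_nhdsWithin_of_tendsto_nhds_of_eventually_within _ ?_ ?_
    · have : Tendsto (fun s : ℝ => s - 1) (𝓝 1) (𝓝 (1 - 1)) := by
        exact (continuous_id.sub continuous_const).tendsto 1
      rw [sub_self] at this
      exact this.mono_left nhdsWithin_le_nhds
    · filter_upwards [self_mem_nhdsWithin] with s hs
      have : (1 : ℝ) < s := hs
      simpa using this
  have h3 := h2.eventually (eventually_lt_atBot (-C1 - C))
  obtain ⟨s, a, b, c⟩ := (h.and (h1.and h3)).exists
  have := (abs_le.1 b).1
  linarith

lemma pr_half (Φ : Ideal (𝓞 M) → ℝ) (hb : ∀ I, |Φ I| ≤ 1) (a b : ℕ)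
    (ha : ¬ IsSquare (a : M)) (hb' : ¬ IsSquare (b : M)) (hab : ¬ IsSquare ((a * b : ℕ) : M))
    (hΦ : ∀ v : HeightOneSpectrum (𝓞 M), ((2 * (a * b) : ℕ) : 𝓞 M) ∉ v.asIdeal →
      Φ v.asIdeal = (1 + chi M a v + chi M b v - chi M (a * b) v) / 2) :
    ∃ C : ℝ, ∀ᶠ s in 𝓝[>] (1 : ℝ), |Pr M Φ s - Pr M (fun _ => 1) s / 2| ≤ C := by
  obtain ⟨C1, h1⟩ := chi_sum M a ha
  obtain ⟨C2, h2⟩ := chi_sum M b hb'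
  obtain ⟨C3, h3⟩ := chi_sum M (a * b) hab
  have hab0 : a * b ≠ 0 := by intro h; simp [h] at hab
  let B : HeightOneSpectrum (𝓞 M) → ℝ := fun v => if ((2 * (a * b) : ℕ) : 𝓞 M) ∈ v.asIdeal then 3 else 0
  have hB : Summable B := by
    refine summable_of_hasFiniteSupport ((finite_div M (2 * (a * b)) (by omega)).subset fun v hv => ?_)
    by_contra h
    exact hv (if_neg h)
  refine ⟨C1 + C2 + C3 + ∑' v, B v, ?_⟩
  filter_upwards [h1, h2, h3, self_mem_nhdsWithin] with s hs1 hs2 hs3 hs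
  have hs : 1 < s := hs
  have sp := summable_prime M s hs
  have s1 := chi_summable M a s hs
  have s2 := chi_summable M b s hs
  have s3 := chi_summable M (a * b) s hs
  have sΦ : Summable fun v : HeightOneSpectrum (𝓞 M) =>
      Φ v.asIdeal * (Ideal.absNorm v.asIdeal : ℝ) ^ (-s) := by
    refine Summable.of_norm_bounded sp fun v => ?_
    rw [norm_mul, Real.norm_eq_abs, Real.norm_of_nonneg (by positivity)]
    exact mul_le_of_le_one_left (by positivity) (hb _)
  have key := (((((sΦ.hasSum.mul_left 2).sub sp.hasSum).sub s1.hasSum).sub s2.hasSum).add s3.hasSum)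
  have hle : |2 * Pr M Φ s - Pr M (fun _ => 1) s -
      (∑' v : HeightOneSpectrum (𝓞 M), chi M a v * (Ideal.absNorm v.asIdeal : ℝ) ^ (-s)) -
      (∑' v : HeightOneSpectrum (𝓞 M), chi M b v * (Ideal.absNorm v.asIdeal : ℝ) ^ (-s)) +
      (∑' v : HeightOneSpectrum (𝓞 M), chi M (a * b) v * (Ideal.absNorm v.asIdeal : ℝ) ^ (-s))| ≤
      2 * ∑' v, B v := by
    simp only [Pr, one_mul]
    rw [← key.tsum_eq, ← Real.norm_eq_abs]
    refine tsum_of_norm_bounded (hB.hasSum.mul_left 2) fun v => ?_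
    have hv2 := two_le_norm M v
    have hle1 : (Ideal.absNorm v.asIdeal : ℝ) ^ (-s) ≤ 1 :=
      Real.rpow_le_one_of_one_le_of_nonpos (by linarith) (by linarith)
    have hnn : 0 ≤ (Ideal.absNorm v.asIdeal : ℝ) ^ (-s) := by positivity
    generalize (Ideal.absNorm v.asIdeal : ℝ) ^ (-s) = y at *
    rw [Real.norm_eq_abs]
    by_cases hv : ((2 * (a * b) : ℕ) : 𝓞 M) ∈ v.asIdeal
    · have e : B v = 3 := if_pos hv
      rw [e]
      have a1 := abs_le.1 (hb v.asIdeal)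
      have a2 := abs_le.1 (abs_chi M a v).le
      have a3 := abs_le.1 (abs_chi M b v).le
      have a4 := abs_le.1 (abs_chi M (a * b) v).le
      rw [show 2 * (Φ v.asIdeal * y) - y - chi M a v * y - chi M b v * y + chi M (a * b) v * y =
        (2 * Φ v.asIdeal - 1 - chi M a v - chi M b v + chi M (a * b) v) * y by ring, abs_mul,
        abs_of_nonneg hnn]
      have : |2 * Φ v.asIdeal - 1 - chi M a v - chi M b v + chi M (a * b) v| ≤ 6 := by
        rw [abs_le]; constructor <;> linarith
      nlinarith [abs_nonneg (2 * Φ v.asIdeal - 1 - chi M a v - chi M b v + chi M (a * b) v)]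
    · have e : B v = 0 := if_neg hv
      rw [e, hΦ v hv, mul_zero]
      apply le_of_eq
      rw [abs_eq_zero]; ring
  rw [abs_le] at *
  constructor <;> linarith [hs1.1, hs1.2, hs2.1, hs2.2, hle.1, hle.2, hs3.1, hs3.2]

theorem exists_principal_neg (Φ : Ideal (𝓞 M) → ℝ) (h0 : ∀ I, Φ I = 1 ∨ Φ I = -1)
    (hm : ∀ I J, I ≠ ⊥ → J ≠ ⊥ → Φ (I * J) = Φ I * Φ J) (a b : ℕ)
    (ha : ¬ IsSquare (a : M)) (hb' : ¬ IsSquare (b : M)) (hab : ¬ IsSquare ((a * b : ℕ) : M))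
    (hΦ : ∀ v : HeightOneSpectrum (𝓞 M), ((2 * (a * b) : ℕ) : 𝓞 M) ∉ v.asIdeal →
      Φ v.asIdeal = (1 + chi M a v + chi M b v - chi M (a * b) v) / 2) :
    ∃ x : 𝓞 M, x ≠ 0 ∧ Φ (Ideal.span {x}) = -1 := by
  by_contra hcon
  have hp : ∀ x : 𝓞 M, x ≠ 0 → Φ (Ideal.span {x}) = 1 := fun x hx =>
    (h0 _).resolve_right fun h => hcon ⟨x, hx, h⟩
  have hb : ∀ I, |Φ I| ≤ 1 := fun I => by rcases h0 I with h | h <;> simp [h]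
  have htop : Φ ⊤ = 1 := by
    have := hp 1 one_ne_zero
    rwa [Ideal.span_singleton_one] at this
  obtain ⟨C, hC⟩ := pr_half M Φ hb a b ha hb' hab hΦ
  by_cases hall : ∀ I, I ≠ ⊥ → Φ I = 1
  · have : Pr M Φ = Pr M (fun _ => 1) := by
      funext s
      refine tsum_congr fun v => ?_
      rw [hall _ v.ne_bot]
    rw [this] at hC
    refine pr_unbounded M (2 * C) ?_
    filter_upwards [hC] with s hs
    linarith [(abs_le.1 hs).2]
  · push Not at hall
    obtain ⟨A0, hA0, hA⟩ := hall
    obtain ⟨D, hD⟩ := L_bounded M Φ (fun I _ => h0 I) hm hp A0 hA0 ((h0 _).resolve_left hA)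
    refine pr_unbounded M (2 * (C + (Real.log D + 2 * Zt M 2))) ?_
    filter_upwards [hC, hD, self_mem_nhdsWithin] with s hs hs2 hs1
    have hs1 : 1 < s := hs1
    have e := (euler_bound M Φ hb htop hm s hs1).1.trans ((le_abs_self _).trans hs2)
    have := (Real.le_log_iff_exp_le ((Real.exp_pos _).trans_le e)).2 e
    linarith [(abs_le.1 hs).1]

end NSD

namespace NSD
universe u
open NumberField IsDedekindDomain
open scoped Classical

lemma leg_neg_one (q : ℕ) [Fact q.Prime] (hq : q % 8 = 1) : legendreSym q (-1) = 1 := by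
  rw [legendreSym.at_neg_one (by rintro rfl; omega)]
  exact ZMod.χ₄_nat_one_mod_four (by omega)

lemma leg_two (q : ℕ) [Fact q.Prime] (hq : q % 8 = 1) : legendreSym q 2 = 1 := by
  rw [legendreSym.at_two (by rintro rfl; omega), ZMod.χ₈_nat_eq_if_mod_eight, if_neg (by omega),
    if_pos (Or.inl hq)]

lemma ff_leg (k : Type*) [Field k] [Fintype k] (q : ℕ) [Fact q.Prime] (hq : q % 8 = 1)
    (h2 : (2 : k) ≠ 0) (hq0 : (q : k) ≠ 0) :
    quadraticChar k (q : k) = legendreSym q (Fintype.card k : ℤ) := by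
  have c2 : ringChar k ≠ 2 := by
    intro h
    apply h2
    have := (ringChar.spec k 2).2 (by rw [h])
    exact_mod_cast this
  have cq : ringChar k ≠ q := by
    intro h
    apply hq0
    exact (ringChar.spec k q).2 (by rw [h])
  rw [quadraticChar_odd_prime c2 (by rintro rfl; omega) cq, map_mul]
  have hodd : Fintype.card k % 2 = 1 := FiniteField.odd_card_of_char_ne_two c2
  have h1 : quadraticChar (ZMod q) ((ZMod.χ₄ (Fintype.card k : ZMod 4) : ℤ) : ZMod q) = 1 := by
    have h4 : Fintype.card k % 4 = 1 ∨ Fintype.card k % 4 = 3 := by omega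
    rcases h4 with h | h
    · rw [ZMod.χ₄_nat_one_mod_four h]; simp
    · rw [ZMod.χ₄_nat_three_mod_four h]
      exact leg_neg_one q hq
  rw [h1, one_mul]
  simp [legendreSym]

section
variable (F : Type u) [Field F] [NumberField F]

lemma chi_quad (v : HeightOneSpectrum (𝓞 F)) : ∃ (k : Type u) (_ : Field k) (_ : Fintype k) (φ : 𝓞 F →+* k),
    Function.Surjective φ ∧ (∀ x, φ x = 0 ↔ x ∈ v.asIdeal) ∧ Fintype.card k = Ideal.absNorm v.asIdeal := by
  have := v.isMaximal
  let := Ideal.Quotient.field v.asIdeal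
  have : Finite (𝓞 F ⧸ v.asIdeal) := inferInstance
  let := Fintype.ofFinite (𝓞 F ⧸ v.asIdeal)
  refine ⟨𝓞 F ⧸ v.asIdeal, inferInstance, inferInstance, Ideal.Quotient.mk _, Ideal.Quotient.mk_surjective,
    fun x => Ideal.Quotient.eq_zero_iff_mem, ?_⟩
  rw [Ideal.absNorm_apply, Submodule.cardQuot_apply, Nat.card_eq_fintype_card]

lemma chi_eq_quad (v : HeightOneSpectrum (𝓞 F)) {k : Type*} [Field k] [Fintype k] (φ : 𝓞 F →+* k)
    (hs : Function.Surjective φ) (h0 : ∀ x, φ x = 0 ↔ x ∈ v.asIdeal) (d : ℕ)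
    (hd : (d : 𝓞 F) ∉ v.asIdeal) : chi F d v = (quadraticChar k (d : k) : ℝ) := by
  have hd' : (d : k) ≠ 0 := by rw [← map_natCast φ, Ne, h0]; exact hd
  have : (∃ r : 𝓞 F, r ^ 2 - (d : 𝓞 F) ∈ v.asIdeal) ↔ IsSquare (d : k) := by
    constructor
    · rintro ⟨r, hr⟩
      rw [← h0, map_sub, map_natCast, sub_eq_zero, map_pow] at hr
      exact ⟨φ r, by rw [← hr, sq]⟩
    · rintro ⟨s, hs'⟩
      obtain ⟨r, rfl⟩ := hs s
      refine ⟨r, ?_⟩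
      rw [← h0, map_sub, map_natCast, sub_eq_zero, map_pow, hs', sq]
  unfold chi
  split_ifs with h
  · rw [(quadraticChar_one_iff_isSquare hd').2 (this.1 h)]; simp
  · rw [quadraticChar_neg_one_iff_not_isSquare.2 (fun h' => h (this.2 h'))]; simp

lemma chi_leg (v : HeightOneSpectrum (𝓞 F)) (q : ℕ) [Fact q.Prime] (hq : q % 8 = 1)
    (h2 : (2 : 𝓞 F) ∉ v.asIdeal) (hqv : (q : 𝓞 F) ∉ v.asIdeal) :
    chi F q v = (legendreSym q (Ideal.absNorm v.asIdeal : ℤ) : ℝ) := by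
  obtain ⟨k, _, _, φ, hs, h0, hc⟩ := chi_quad F v
  rw [chi_eq_quad F v φ hs h0 q hqv, ff_leg k q hq, hc]
  · intro h; exact h2 ((h0 2).1 (by rw [map_ofNat]; exact h))
  · intro h; exact hqv ((h0 q).1 (by simpa using h))

lemma chi_mul (v : HeightOneSpectrum (𝓞 F)) (a b : ℕ) (ha : (a : 𝓞 F) ∉ v.asIdeal)
    (hb : (b : 𝓞 F) ∉ v.asIdeal) : chi F (a * b) v = chi F a v * chi F b v := by
  obtain ⟨k, _, _, φ, hs, h0, hc⟩ := chi_quad F v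
  rw [chi_eq_quad F v φ hs h0 _ ha, chi_eq_quad F v φ hs h0 _ hb, chi_eq_quad F v φ hs h0]
  · push_cast; rw [map_mul]; push_cast; rfl
  · push_cast
    intro h
    exact (v.isPrime.mem_or_mem h).elim ha hb

lemma norm_pow_of_mem (v : HeightOneSpectrum (𝓞 F)) (p : ℕ) (hp : p.Prime)
    (h : (p : 𝓞 F) ∈ v.asIdeal) : ∃ f : ℕ, 0 < f ∧ Ideal.absNorm v.asIdeal = p ^ f := by
  obtain ⟨k, _, _, φ, hs, h0, hc⟩ := chi_quad F v
  have : Fact p.Prime := ⟨hp⟩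
  have hp0 : (p : k) = 0 := by rw [← map_natCast φ, h0]; exact h
  have : CharP k p := by
    have h1 := (ringChar.spec k p).1 hp0
    have h2 := (Nat.dvd_prime hp).1 h1
    rcases h2 with h2 | h2
    · have := ringChar.charP k
      rw [h2] at this
      exact absurd this (fun h => CharP.false_of_nontrivial_of_char_one (R := k))
    · rw [← h2]; exact ringChar.charP k
  obtain ⟨n, _, hn⟩ := FiniteField.card k p
  exact ⟨n, n.pos, by rw [← hc, hn]⟩
end

/-- local character -/
noncomputable def ph (a b : ℕ) [Fact a.Prime] [Fact b.Prime] (m : ℕ) : ℝ :=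
  if legendreSym a m = -1 ∧ legendreSym b m = -1 then -1 else 1

section
variable (a b : ℕ) [Fact a.Prime] [Fact b.Prime]

lemma leg_tri (q : ℕ) [Fact q.Prime] (m : ℤ) :
    legendreSym q m = 0 ∨ legendreSym q m = 1 ∨ legendreSym q m = -1 := by
  by_cases h : (m : ZMod q) = 0
  · left; exact (legendreSym.eq_zero_iff q m).2 h
  · right; exact legendreSym.eq_one_or_neg_one q h

lemma leg_pow (q : ℕ) [Fact q.Prime] (m : ℤ) (f : ℕ) : legendreSym q (m ^ f) = legendreSym q m ^ f := by
  induction f with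
  | zero => simp [legendreSym.at_one]
  | succ n ih => rw [pow_succ, legendreSym.mul, ih, pow_succ]

lemma ph_one_or (m : ℕ) : ph a b m = 1 ∨ ph a b m = -1 := by
  unfold ph; split_ifs <;> simp

lemma ph_comm (m : ℕ) : ph a b m = ph b a m := by
  unfold ph; simp only [and_comm]

lemma ph_eq_one {m : ℕ} (h : legendreSym a m ≠ -1) : ph a b m = 1 := by
  unfold ph; rw [if_neg]; tauto

lemma ph_pow (m f : ℕ) (hf : 1 ≤ f) : ph a b (m ^ f) = ph a b m ^ f := by
  unfold ph
  push_cast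
  rw [leg_pow, leg_pow]
  rcases Nat.even_or_odd f with h | h
  · have : ∀ x : ℤ, x ^ f ≠ -1 := fun x hx => by
      have := h.pow_nonneg x
      omega
    rw [if_neg (fun h => this _ h.1)]
    split_ifs
    · rw [h.neg_one_pow]
    · simp
  · have : ∀ q : ℕ, ∀ _ : Fact q.Prime, legendreSym q m ^ f = legendreSym q m := by
      intro q _
      rcases leg_tri q m with h' | h' | h' <;> rw [h']
      · exact zero_pow (by omega)
      · simp
      · exact h.neg_one_pow
    rw [this a, this b]
    split_ifs
    · exact h.neg_one_pow.symm
    · simp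

variable (F : Type*) [Field F] [NumberField F]

/-- the global character on ideals -/
noncomputable def Ph (I : Ideal (𝓞 F)) : ℝ :=
  ((UniqueFactorizationMonoid.normalizedFactors I).map (fun P => ph a b (Ideal.absNorm P))).prod

lemma Ph_one_or (I : Ideal (𝓞 F)) : Ph a b F I = 1 ∨ Ph a b F I = -1 := by
  unfold Ph
  refine Multiset.prod_induction (fun x : ℝ => x = 1 ∨ x = -1) _ ?_ (Or.inl rfl) ?_
  · rintro x y (rfl | rfl) (rfl | rfl) <;> simp
  · intro x hx
    rw [Multiset.mem_map] at hx
    obtain ⟨P, _, rfl⟩ := hx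
    exact ph_one_or a b _

lemma Ph_mul (I J : Ideal (𝓞 F)) (hI : I ≠ ⊥) (hJ : J ≠ ⊥) :
    Ph a b F (I * J) = Ph a b F I * Ph a b F J := by
  unfold Ph
  rw [UniqueFactorizationMonoid.normalizedFactors_mul hI hJ, Multiset.map_add, Multiset.prod_add]

lemma Ph_prime (P : Ideal (𝓞 F)) (hP : Prime P) : Ph a b F P = ph a b (Ideal.absNorm P) := by
  unfold Ph
  rw [UniqueFactorizationMonoid.normalizedFactors_irreducible hP.irreducible]
  simp

lemma Ph_one : Ph a b F 1 = 1 := by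
  unfold Ph
  rw [UniqueFactorizationMonoid.normalizedFactors_one]
  rfl

lemma Ph_pow (I : Ideal (𝓞 F)) (hI : I ≠ ⊥) (n : ℕ) : Ph a b F (I ^ n) = Ph a b F I ^ n := by
  induction n with
  | zero => rw [pow_zero, pow_zero, Ph_one]
  | succ n ih => rw [pow_succ, Ph_mul a b F _ _ (pow_ne_zero n hI) hI, ih, pow_succ]

lemma Ph_sq (I : Ideal (𝓞 F)) : Ph a b F I ^ 2 = 1 := by
  rcases Ph_one_or a b F I with h | h <;> rw [h] <;> norm_num

lemma Ph_chi (ha : a % 8 = 1) (hb : b % 8 = 1) (v : HeightOneSpectrum (𝓞 F))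
    (h : ((2 * (a * b) : ℕ) : 𝓞 F) ∉ v.asIdeal) :
    Ph a b F v.asIdeal = (1 + chi F a v + chi F b v - chi F (a * b) v) / 2 := by
  have h2 : (2 : 𝓞 F) ∉ v.asIdeal := fun h' => h (by
    push_cast; exact Ideal.mul_mem_right _ _ h')
  have ha' : (a : 𝓞 F) ∉ v.asIdeal := fun h' => h (by
    push_cast; exact Ideal.mul_mem_left _ _ (Ideal.mul_mem_right _ _ h'))
  have hb' : (b : 𝓞 F) ∉ v.asIdeal := fun h' => h (by
    push_cast; exact Ideal.mul_mem_left _ _ (Ideal.mul_mem_left _ _ h'))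
  rw [Ph_prime a b F _ v.prime, chi_mul F v a b ha' hb']
  have ca := chi_leg F v a ha h2 ha'
  have cb := chi_leg F v b hb h2 hb'
  unfold ph
  have hA : chi F a v = 1 ∨ chi F a v = -1 := by unfold chi; split_ifs <;> simp
  have hB : chi F b v = 1 ∨ chi F b v = -1 := by unfold chi; split_ifs <;> simp
  have iA : legendreSym a (Ideal.absNorm v.asIdeal : ℤ) = -1 ↔ chi F a v = -1 := by
    rw [ca]; norm_cast
  have iB : legendreSym b (Ideal.absNorm v.asIdeal : ℤ) = -1 ↔ chi F b v = -1 := by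
    rw [cb]; norm_cast
  simp only [iA, iB]
  rcases hA with h | h <;> rcases hB with h' | h' <;> rw [h, h'] <;> norm_num

lemma Ph_relNorm (N : Type*) [Field N] [NumberField N] [Algebra F N] (I : Ideal (𝓞 N)) (hI : I ≠ ⊥) :
    Ph a b F (Ideal.relNorm (𝓞 F) I) = Ph a b N I := by
  revert hI
  refine UniqueFactorizationMonoid.induction_on_prime I ?_ ?_ ?_
  · intro h; exact absurd rfl h
  · intro x hx _
    rw [Ideal.isUnit_iff] at hx
    rw [hx, Ideal.relNorm_top, ← Ideal.one_eq_top, ← Ideal.one_eq_top, Ph_one, Ph_one]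
  · intro A P hA hP ih _
    let w : HeightOneSpectrum (𝓞 N) := ⟨P, Ideal.isPrime_of_prime hP, hP.ne_zero⟩
    have e : Ideal.relNorm (𝓞 F) P = (w.under (𝓞 F)).asIdeal ^ fdeg F N w := relNorm_fdeg F N w
    have e2 : Ideal.absNorm P = Ideal.absNorm (w.under (𝓞 F)).asIdeal ^ fdeg F N w := absNorm_fdeg F N w
    have hn : Ideal.relNorm (𝓞 F) A ≠ ⊥ := by
      rw [Ne, Ideal.relNorm_eq_bot_iff]; exact hA
    rw [map_mul, e, Ph_mul a b F _ _ (pow_ne_zero _ (w.under (𝓞 F)).ne_bot) hn, ih hA,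
      Ph_mul a b N _ _ hP.ne_zero hA, Ph_pow a b F _ (w.under (𝓞 F)).ne_bot,
      Ph_prime a b F _ (w.under (𝓞 F)).prime, Ph_prime a b N _ hP, e2, ph_pow a b _ _ (one_le_fdeg F N w)]

end
end NSD

namespace NSD
open NumberField IsDedekindDomain
open scoped Classical

/-- the norm of `x ^ 2 - D y ^ 2` is again of this shape -/
lemma norm_shape (R : Type*) [CommRing R] [Module.Free ℤ R] [Module.Finite ℤ R] (D : ℤ) (x y : R) :
    ∃ X Y : ℤ, Algebra.norm ℤ (x ^ 2 - D * y ^ 2) = X ^ 2 - D * Y ^ 2 := by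
  let bs := Module.Free.chooseBasis ℤ R
  let A := Algebra.leftMulMatrix bs x
  let B := Algebra.leftMulMatrix bs y
  have hAB : A * B = B * A := by
    simp only [A, B]
    rw [← map_mul, ← map_mul, mul_comm]
  let f : ℤ →+* ℤ√D := Int.castRingHom _
  let P := f.mapMatrix A + (Zsqrtd.sqrtd : ℤ√D) • f.mapMatrix B
  let Q := f.mapMatrix A - (Zsqrtd.sqrtd : ℤ√D) • f.mapMatrix B
  have hs : (Zsqrtd.sqrtd : ℤ√D) * Zsqrtd.sqrtd = f D := by
    ext <;> simp [f]
  have hPQ : P * Q = f.mapMatrix (Algebra.leftMulMatrix bs (x ^ 2 - D * y ^ 2)) := by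
    have h1 : Algebra.leftMulMatrix bs (x ^ 2 - D * y ^ 2) = A * A - D • (B * B) := by
      rw [show x ^ 2 - D * y ^ 2 = x * x - D • (y * y) by rw [zsmul_eq_mul]; ring]
      simp only [map_sub, map_mul, map_zsmul, A, B]
    rw [h1]
    simp only [P, Q, add_mul, mul_sub, Matrix.smul_mul, Matrix.mul_smul, smul_smul, hs]
    have h2 : f.mapMatrix A * f.mapMatrix B = f.mapMatrix B * f.mapMatrix A := by
      rw [← map_mul, hAB, map_mul]
    rw [h2, map_sub, map_mul]
    have h3 : f.mapMatrix (D • (B * B)) = f D • (f.mapMatrix B * f.mapMatrix B) := by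
      rw [← map_mul f.mapMatrix B B]
      generalize B * B = Z
      refine Matrix.ext fun i j => ?_
      change f (D • Z i j) = f D • f (Z i j)
      rw [smul_eq_mul, smul_eq_mul, map_mul]
    rw [h3]
    abel
  have hQ : Q.det = star P.det := by
    have := RingHom.map_det (starRingEnd (ℤ√D)) P
    change star P.det = _ at this
    rw [this]
    congr 1
    have hst : star (Zsqrtd.sqrtd : ℤ√D) = - Zsqrtd.sqrtd := by ext <;> simp
    have hsf : ∀ z : ℤ, star (f z) = f z := by intro z; ext <;> simp [f]
    refine Matrix.ext fun i j => ?_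
    change f (A i j) - Zsqrtd.sqrtd * f (B i j) = star (f (A i j) + Zsqrtd.sqrtd * f (B i j))
    rw [star_add, star_mul, hst, hsf, hsf]
    ring
  refine ⟨P.det.re, P.det.im, ?_⟩
  rw [Algebra.norm_eq_matrix_det bs]
  have e := congrArg Matrix.det hPQ
  rw [Matrix.det_mul, hQ, ← Zsqrtd.norm_eq_mul_conj, ← RingHom.map_det] at e
  have : P.det.norm = (Algebra.leftMulMatrix bs (x ^ 2 - D * y ^ 2)).det := by
    have h := congrArg Zsqrtd.re e
    simpa [f] using h
  rw [← this, Zsqrtd.norm_def]; ring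

/-- tame part of the Legendre symbol -/
noncomputable def tl (q : ℕ) [Fact q.Prime] (n : ℕ) : ℤ :=
  legendreSym q ((n / q ^ n.factorization q : ℕ) : ℤ)

section
variable (q : ℕ) [Fact q.Prime]

lemma tl_mul (m n : ℕ) : tl q (m * n) = tl q m * tl q n := by
  unfold tl
  rw [Nat.ordCompl_mul]
  push_cast
  rw [legendreSym.mul]

lemma tl_not_dvd (n : ℕ) (h : ¬ q ∣ n) : tl q n = legendreSym q n := by
  unfold tl
  rw [Nat.factorization_eq_zero_of_not_dvd h]; simp

lemma tl_self : tl q q = 1 := by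
  have hp : q.Prime := Fact.out
  unfold tl
  rw [hp.factorization_self, pow_one, Nat.div_self hp.pos]
  simp [legendreSym.at_one]

lemma tl_one : tl q 1 = 1 := by
  unfold tl
  simp [legendreSym.at_one]

lemma tl_sq (n : ℕ) (hn : n ≠ 0) : tl q n = 1 ∨ tl q n = -1 := by
  have hp : q.Prime := Fact.out
  unfold tl
  apply legendreSym.eq_one_or_neg_one
  have := Nat.not_dvd_ordCompl hp hn
  rwa [Int.cast_natCast, Ne, ZMod.natCast_eq_zero_iff]

lemma tl_pow (n k : ℕ) : tl q (n ^ k) = tl q n ^ k := by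
  induction k with
  | zero => simp [tl_one]
  | succ k ih => rw [pow_succ, tl_mul, ih, pow_succ]

lemma tl_sq_mul (m n : ℕ) (h : m ≠ 0) : tl q (m ^ 2 * n) = tl q n := by
  rw [tl_mul, tl_pow]
  rcases tl_sq q m h with h | h <;> rw [h] <;> simp

lemma leg_natAbs (hq : q % 8 = 1) (z : ℤ) : legendreSym q (z.natAbs : ℤ) = legendreSym q z := by
  rcases Int.natAbs_eq z with h | h
  · rw [← h]
  · conv_rhs => rw [h, neg_eq_neg_one_mul, legendreSym.mul, leg_neg_one q hq, one_mul]

lemma leg_cong (x y : ℤ) (h : (q : ℤ) ∣ x - y) : legendreSym q x = legendreSym q y := by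
  rw [legendreSym.mod q x, legendreSym.mod q y]
  congr 1
  exact Int.emod_eq_emod_iff_emod_sub_eq_zero.2 (Int.emod_eq_zero_of_dvd h)

lemma tl_cong_sq (hq : q % 8 = 1) (z x : ℤ) (hx : ¬ (q : ℤ) ∣ x) (h : (q : ℤ) ∣ z - x ^ 2) :
    tl q z.natAbs = 1 := by
  have hp : Prime (q : ℤ) := Nat.prime_iff_prime_int.1 Fact.out
  have hz : ¬ (q : ℤ) ∣ z := fun h' => hx (hp.dvd_of_dvd_pow (n := 2) (by
    have := dvd_sub h' h; rwa [sub_sub_cancel] at this))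
  rw [tl_not_dvd q _ (by rwa [← Int.natCast_dvd_natCast, Int.dvd_natAbs]), leg_natAbs q hq,
    leg_cong q _ _ h, legendreSym.sq_one' q]
  rwa [Ne, ZMod.intCast_zmod_eq_zero_iff_dvd]

lemma tl_form (hq : q % 8 = 1) (b : ℕ) (hb : b % q = 1) (n : ℕ) : ∀ X Y : ℤ,
    X.natAbs + Y.natAbs ≤ n → X ^ 2 - ((q * b : ℕ) : ℤ) * Y ^ 2 ≠ 0 →
    tl q (X ^ 2 - ((q * b : ℕ) : ℤ) * Y ^ 2).natAbs = 1 := by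
  have hqp : q.Prime := Fact.out
  have hb' : (q : ℤ) ∣ b - 1 := by
    have h := Nat.div_add_mod b q
    rw [hb] at h
    refine ⟨(b / q : ℕ), ?_⟩
    have h' : ((q * (b / q) + 1 : ℕ) : ℤ) = b := by rw [h]
    rw [← h']
    push_cast
    ring
  induction n with
  | zero =>
    intro X Y h h0
    have hX : X = 0 := by omega
    have hY : Y = 0 := by omega
    simp [hX, hY] at h0
  | succ n ih =>
    intro X Y h h0
    by_cases hX : (q : ℤ) ∣ X
    · obtain ⟨X1, rfl⟩ := hX
      have e : ((q : ℤ) * X1) ^ 2 - ((q * b : ℕ) : ℤ) * Y ^ 2 = q * (q * X1 ^ 2 - b * Y ^ 2) := by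
        push_cast; ring
      by_cases hY : (q : ℤ) ∣ Y
      · obtain ⟨Y1, rfl⟩ := hY
        have e2 : ((q : ℤ) * X1) ^ 2 - ((q * b : ℕ) : ℤ) * (q * Y1) ^ 2 =
          (q : ℤ) ^ 2 * (X1 ^ 2 - ((q * b : ℕ) : ℤ) * Y1 ^ 2) := by ring
        have e3 : X1 ^ 2 - ((q * b : ℕ) : ℤ) * Y1 ^ 2 ≠ 0 := by
          intro h'; rw [e2, h', mul_zero] at h0; exact h0 rfl
        rw [e2, Int.natAbs_mul, Int.natAbs_pow, Int.natAbs_natCast, tl_sq_mul q _ _ hqp.ne_zero]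
        refine ih X1 Y1 ?_ e3
        rw [Int.natAbs_mul, Int.natAbs_mul, Int.natAbs_natCast] at h
        have h2 := hqp.two_le
        have : 1 ≤ X1.natAbs + Y1.natAbs := by
          by_contra h'
          have hX : X1 = 0 := by omega
          have hY : Y1 = 0 := by omega
          simp [hX, hY] at e3
        nlinarith
      · rw [e, Int.natAbs_mul, tl_mul, Int.natAbs_natCast, tl_self, one_mul]
        rw [← Int.natAbs_neg]
        apply tl_cong_sq q hq _ Y hY
        obtain ⟨c, hc⟩ := hb'
        refine ⟨c * Y ^ 2 - X1 ^ 2, ?_⟩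
        have : (b : ℤ) = q * c + 1 := by linarith
        rw [this]; ring
    · apply tl_cong_sq q hq _ X hX
      refine ⟨-(b * Y ^ 2), ?_⟩
      push_cast; ring

end
end NSD

namespace NSD
open NumberField IsDedekindDomain
open scoped Classical
open UniqueFactorizationMonoid

section
variable (F : Type*) [Field F] [NumberField F]

lemma anis_mod (v : HeightOneSpectrum (𝓞 F)) (d : ℕ) (hd : chi F d v ≠ 1) (x y : 𝓞 F)
    (h : x ^ 2 - d * y ^ 2 ∈ v.asIdeal) : x ∈ v.asIdeal ∧ y ∈ v.asIdeal := by
  have hy : y ∈ v.asIdeal := by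
    by_contra hy
    obtain ⟨z, hz⟩ := v.isMaximal.exists_inv hy
    obtain ⟨i, hi, e⟩ := hz
    apply hd
    refine if_pos ⟨x * z, ?_⟩
    have : (x * z) ^ 2 - (d : 𝓞 F) = z ^ 2 * (x ^ 2 - d * y ^ 2) - d * (1 + z * y) * i := by
      have : i = 1 - z * y := by rw [← e]; ring
      rw [this]; ring
    rw [this]
    exact sub_mem (Ideal.mul_mem_left _ _ h) (Ideal.mul_mem_left _ _ hi)
  refine ⟨?_, hy⟩
  apply v.isPrime.mem_of_pow_mem 2
  have : x ^ 2 = (x ^ 2 - d * y ^ 2) + d * y * y := by ring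
  rw [this]
  exact add_mem h (Ideal.mul_mem_left _ _ hy)

lemma anis_pow (v : HeightOneSpectrum (𝓞 F)) (d : ℕ) (hd : chi F d v ≠ 1) (k : ℕ) : ∀ x y : 𝓞 F,
    x ^ 2 - d * y ^ 2 ∈ v.asIdeal ^ (2 * k + 1) →
    x ∈ v.asIdeal ^ (k + 1) ∧ y ∈ v.asIdeal ^ (k + 1) := by
  induction k with
  | zero =>
    intro x y h
    simpa using anis_mod F v d hd x y (by simpa using h)
  | succ k ih =>
    intro x y h
    obtain ⟨hx, hy⟩ := ih x y (Ideal.pow_le_pow_right (by omega) h)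
    have := v.isPrime
    obtain ⟨a, ha, ha'⟩ := Ideal.exists_mem_pow_notMem_pow_succ v.asIdeal v.ne_bot v.isPrime.ne_top (k + 1)
    obtain ⟨x', e, he, hxe⟩ := Ideal.exists_mul_add_mem_pow_succ v.ne_bot a x ha ha' hx
    obtain ⟨y', e', he', hye⟩ := Ideal.exists_mul_add_mem_pow_succ v.ne_bot a y ha ha' hy
    have hm : ∀ s ∈ v.asIdeal ^ (k + 1), ∀ t ∈ v.asIdeal ^ (k + 1 + 1), s * t ∈ v.asIdeal ^ (2 * (k + 1) + 1) := by
      intro s hs t ht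
      rw [show 2 * (k + 1) + 1 = (k + 1) + (k + 1 + 1) by ring, pow_add]
      exact Ideal.mul_mem_mul hs ht
    have hle : v.asIdeal ^ (k + 1 + 1) ≤ v.asIdeal ^ (k + 1) := Ideal.pow_le_pow_right (by omega)
    have h3 : a ^ 2 * (x' ^ 2 - d * y' ^ 2) ∈ v.asIdeal ^ (2 * (k + 1) + 1) := by
      have : a ^ 2 * (x' ^ 2 - d * y' ^ 2) = (x ^ 2 - d * y ^ 2) - (2 * x' * (a * e) + e * e)
          + d * (2 * y' * (a * e') + e' * e') := by
        rw [← hxe, ← hye]; ring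
      rw [this]
      refine add_mem (sub_mem h (add_mem (Ideal.mul_mem_left _ _ (hm a ha e he)) (hm e (hle he) e he)))
        (Ideal.mul_mem_left _ _ (add_mem (Ideal.mul_mem_left _ _ (hm a ha e' he')) (hm e' (hle he') e' he')))
    have h4 : x' ^ 2 - d * y' ^ 2 ∈ v.asIdeal := by
      have hA : v.asIdeal ^ (k + 1) ∣ Ideal.span {a} := by
        rwa [Ideal.dvd_span_singleton]
      obtain ⟨A, hA⟩ := hA
      have hA' : ¬ v.asIdeal ∣ A := by
        rintro ⟨A', rfl⟩
        apply ha'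
        rw [← Ideal.dvd_span_singleton, hA, pow_succ _ (k + 1), ← mul_assoc]
        exact dvd_mul_right _ _
      have h5 : v.asIdeal ^ (2 * (k + 1) + 1) ∣ Ideal.span {a} ^ 2 * Ideal.span {x' ^ 2 - d * y' ^ 2} := by
        rw [Ideal.span_singleton_pow, Ideal.span_singleton_mul_span_singleton, Ideal.dvd_span_singleton]
        exact h3
      rw [hA, mul_pow, ← pow_mul, mul_comm (k + 1) 2, pow_succ, mul_assoc] at h5
      have h6 := (mul_dvd_mul_iff_left (pow_ne_zero _ v.ne_bot)).1 h5
      rcases v.prime.dvd_or_dvd h6 with h | h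
      · exact absurd (v.prime.dvd_of_dvd_pow h) hA'
      · rwa [Ideal.dvd_span_singleton] at h
    obtain ⟨hx', hy'⟩ := anis_mod F v d hd x' y' h4
    constructor
    · rw [← hxe]
      refine add_mem ?_ he
      rw [pow_succ]
      exact Ideal.mul_mem_mul ha hx'
    · rw [← hye]
      refine add_mem ?_ he'
      rw [pow_succ]
      exact Ideal.mul_mem_mul ha hy'

lemma count_even (v : HeightOneSpectrum (𝓞 F)) (d : ℕ) (hd : chi F d v ≠ 1) (x y : 𝓞 F)
    (h0 : x ^ 2 - d * y ^ 2 ≠ 0) :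
    Even (Multiset.count v.asIdeal (normalizedFactors (Ideal.span {x ^ 2 - d * y ^ 2}))) := by
  have hs : Ideal.span {x ^ 2 - d * y ^ 2} ≠ 0 := by simpa using h0
  have key : ∀ n, v.asIdeal ^ n ∣ Ideal.span {x ^ 2 - d * y ^ 2} ↔
      n ≤ Multiset.count v.asIdeal (normalizedFactors (Ideal.span {x ^ 2 - d * y ^ 2})) := by
    intro n
    rw [pow_dvd_iff_le_emultiplicity, emultiplicity_eq_count_normalizedFactors v.irreducible hs,
      normalize_eq]
    norm_cast
  by_contra hodd
  rw [Nat.not_even_iff_odd] at hodd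
  obtain ⟨k, hk⟩ := hodd
  have h1 := (key (2 * k + 1)).2 hk.ge
  rw [Ideal.dvd_span_singleton] at h1
  obtain ⟨hx, hy⟩ := anis_pow F v d hd k x y h1
  have h2 : v.asIdeal ^ (2 * k + 2) ∣ Ideal.span {x ^ 2 - d * y ^ 2} := by
    rw [Ideal.dvd_span_singleton, show 2 * k + 2 = (k + 1) + (k + 1) by ring, pow_add, sq, sq]
    exact sub_mem (Ideal.mul_mem_mul hx hx) (Ideal.mul_mem_left _ _ (Ideal.mul_mem_mul hy hy))
  have := (key _).1 h2
  omega

variable (a b : ℕ) [Fact a.Prime] [Fact b.Prime]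

lemma ph_two (ha : a % 8 = 1) (f : ℕ) : ph a b (2 ^ f) = 1 := by
  apply ph_eq_one
  push_cast
  rw [leg_pow, leg_two a ha]; simp

lemma ph_self (f : ℕ) (hf : 0 < f) : ph a b (a ^ f) = 1 := by
  apply ph_eq_one
  push_cast
  rw [leg_pow, (legendreSym.eq_zero_iff a a).2 (by simp), zero_pow hf.ne']; simp

lemma Ph_norm_left (ha : a % 8 = 1) (x y : 𝓞 F) (h0 : x ^ 2 - a * y ^ 2 ≠ 0) :
    Ph a b F (Ideal.span {x ^ 2 - a * y ^ 2}) = 1 := by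
  unfold Ph
  rw [Finset.prod_multiset_map_count]
  refine Finset.prod_eq_one fun P hP => ?_
  rw [Multiset.mem_toFinset] at hP
  have hPp := prime_of_normalized_factor P hP
  let v : HeightOneSpectrum (𝓞 F) := ⟨P, Ideal.isPrime_of_prime hPp, hPp.ne_zero⟩
  by_cases h2 : (2 : 𝓞 F) ∈ P
  · obtain ⟨f, hf, e⟩ := norm_pow_of_mem F v 2 Nat.prime_two h2
    change Ideal.absNorm P = _ at e
    rw [e, ph_two a b ha, one_pow]
  by_cases hav : (a : 𝓞 F) ∈ P
  · obtain ⟨f, hf, e⟩ := norm_pow_of_mem F v a Fact.out hav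
    change Ideal.absNorm P = _ at e
    rw [e, ph_self a b f hf, one_pow]
  by_cases hc : chi F a v = 1
  · have := chi_leg F v a ha h2 hav
    change _ = ((legendreSym a (Ideal.absNorm P)) : ℝ) at this
    rw [hc] at this
    have : legendreSym a (Ideal.absNorm P) = 1 := by exact_mod_cast this.symm
    rw [ph_eq_one a b (by rw [this]; norm_num), one_pow]
  · obtain ⟨k, hk⟩ := count_even F v a hc x y h0
    change Multiset.count P _ = _ at hk
    rw [hk, ← two_mul, pow_mul]
    rcases ph_one_or a b (Ideal.absNorm P) with h | h <;> rw [h] <;> simp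

lemma Ph_comm (I : Ideal (𝓞 F)) : Ph a b F I = Ph b a F I := by
  unfold Ph
  congr 2
  funext P
  exact ph_comm a b _

lemma Ph_norm_prod (ha : a % 8 = 1) (hb : b % 8 = 1) (hba : b % a = 1) (x y : 𝓞 F)
    (h0 : x ^ 2 - (a * b : ℕ) * y ^ 2 ≠ 0) :
    Ph a b F (Ideal.span {x ^ 2 - (a * b : ℕ) * y ^ 2}) = 1 := by
  have hs : Ideal.span {x ^ 2 - (a * b : ℕ) * y ^ 2} ≠ ⊥ := by simpa using h0
  have hap : a.Prime := Fact.out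
  have hbp : b.Prime := Fact.out
  have hab : ¬ a ∣ b := fun h => by rw [Nat.dvd_iff_mod_eq_zero] at h; omega
  have hlegb : legendreSym a b = 1 := by
    rw [leg_cong a b 1, legendreSym.at_one]
    refine ⟨(b / a : ℕ), ?_⟩
    have h := Nat.div_add_mod b a
    rw [hba] at h
    have h' : ((a * (b / a) + 1 : ℕ) : ℤ) = b := by rw [h]
    rw [← h']
    push_cast
    ring
  have key : Ph a b F (Ideal.span {x ^ 2 - (a * b : ℕ) * y ^ 2}) =
      (tl a (Ideal.absNorm (Ideal.span {x ^ 2 - (a * b : ℕ) * y ^ 2})) : ℝ) := by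
    let T : ℕ →* ℝ := ⟨⟨fun n => (tl a n : ℝ), by simp [tl_one]⟩, by
      intro m n
      change ((tl a (m * n) : ℤ) : ℝ) = (tl a m : ℝ) * (tl a n : ℝ)
      rw [tl_mul]; push_cast; rfl⟩
    have e1 : (tl a (Ideal.absNorm (Ideal.span {x ^ 2 - (a * b : ℕ) * y ^ 2})) : ℝ) =
        ((normalizedFactors (Ideal.span {x ^ 2 - (a * b : ℕ) * y ^ 2})).map
          (fun P => (tl a (Ideal.absNorm P) : ℝ))).prod := by
      conv_lhs => rw [← Ideal.prod_normalizedFactors_eq_self hs]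
      rw [map_multiset_prod]
      change T _ = _
      rw [map_multiset_prod, Multiset.map_map]
      rfl
    rw [e1]
    unfold Ph
    rw [Finset.prod_multiset_map_count, Finset.prod_multiset_map_count]
    refine Finset.prod_congr rfl fun P hP => ?_
    rw [Multiset.mem_toFinset] at hP
    have hPp := prime_of_normalized_factor P hP
    let v : HeightOneSpectrum (𝓞 F) := ⟨P, Ideal.isPrime_of_prime hPp, hPp.ne_zero⟩
    by_cases h2 : (2 : 𝓞 F) ∈ P
    · obtain ⟨f, hf, e⟩ := norm_pow_of_mem F v 2 Nat.prime_two h2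
      change Ideal.absNorm P = _ at e
      rw [e, ph_two a b ha, tl_pow, tl_not_dvd a 2, Nat.cast_ofNat, leg_two a ha]
      · simp
      · intro h
        have := Nat.le_of_dvd (by norm_num) h
        have := hap.two_le
        omega
    by_cases hav : (a : 𝓞 F) ∈ P
    · obtain ⟨f, hf, e⟩ := norm_pow_of_mem F v a Fact.out hav
      change Ideal.absNorm P = _ at e
      rw [e, ph_self a b f hf, tl_pow, tl_self]; simp
    by_cases hbv : (b : 𝓞 F) ∈ P
    · obtain ⟨f, hf, e⟩ := norm_pow_of_mem F v b Fact.out hbv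
      change Ideal.absNorm P = _ at e
      rw [e, ph_comm, ph_self b a f hf, tl_pow, tl_not_dvd a b hab, hlegb]; simp
    have hn0 : Ideal.absNorm P ≠ 0 := by
      rw [Ne, Ideal.absNorm_eq_zero_iff]; exact hPp.ne_zero
    by_cases hc : chi F (a * b) v = 1
    · congr 1
      rw [chi_mul F v a b hav hbv] at hc
      have ca := chi_leg F v a ha h2 hav
      have cb := chi_leg F v b hb h2 hbv
      change _ = ((legendreSym a (Ideal.absNorm P)) : ℝ) at ca
      change _ = ((legendreSym b (Ideal.absNorm P)) : ℝ) at cb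
      rw [ca, cb] at hc
      have hc : legendreSym a (Ideal.absNorm P) * legendreSym b (Ideal.absNorm P) = 1 := by exact_mod_cast hc
      have hnd : ¬ a ∣ Ideal.absNorm P := by
        intro h
        rw [(legendreSym.eq_zero_iff a _).2 (by
          rw [Int.cast_natCast, ZMod.natCast_eq_zero_iff]; exact h)] at hc
        simp at hc
      rw [tl_not_dvd a _ hnd]
      unfold ph
      rcases leg_tri a (Ideal.absNorm P) with h | h | h
      · rw [h] at hc; simp at hc
      · rw [h] at hc ⊢; simp
      · rw [h] at hc ⊢
        have : legendreSym b (Ideal.absNorm P) = -1 := by linarith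
        rw [this]; simp
    · obtain ⟨k, hk⟩ := count_even F v (a * b) hc x y h0
      change Multiset.count P _ = _ at hk
      rw [hk, ← two_mul, pow_mul, pow_mul]
      congr 1
      rcases ph_one_or a b (Ideal.absNorm P) with h | h <;>
        rcases tl_sq a (Ideal.absNorm P) hn0 with h' | h' <;> rw [h, h'] <;> simp
  rw [key, Ideal.absNorm_span_singleton]
  obtain ⟨X, Y, hXY⟩ := norm_shape (𝓞 F) ((a * b : ℕ) : ℤ) x y
  rw [Int.cast_natCast] at hXY
  have hne : Algebra.norm ℤ (x ^ 2 - (a * b : ℕ) * y ^ 2) ≠ 0 := by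
    rw [Ne, Algebra.norm_eq_zero_iff]; exact h0
  rw [hXY] at hne ⊢
  rw [tl_form a ha b hba _ X Y le_rfl hne]
  simp

end
end NSD

namespace NSD
open NumberField IsDedekindDomain
open scoped Classical

/-- products of values of the three norm forms -/
def inV (K : Type*) [Field K] (a b : ℕ) (m : K) : Prop :=
  ∃ x1 y1 x2 y2 x3 y3 : K, m = (x1 ^ 2 - a * y1 ^ 2) * (x2 ^ 2 - b * y2 ^ 2) *
    (x3 ^ 2 - (a * b : ℕ) * y3 ^ 2)

section
variable (K : Type*) [Field K] [NumberField K]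

lemma common_den (l : Fin 6 → K) : ∃ (D : 𝓞 K) (n : Fin 6 → 𝓞 K), D ≠ 0 ∧ ∀ i, (n i : K) = D * l i := by
  obtain ⟨D, hD⟩ := IsLocalization.exist_integer_multiples_of_finset (nonZeroDivisors (𝓞 K)) (Finset.univ.image l)
  have : ∀ i, ∃ n : 𝓞 K, (n : K) = (D : 𝓞 K) * l i := by
    intro i
    obtain ⟨n, hn⟩ := hD (l i) (Finset.mem_image_of_mem l (Finset.mem_univ i))
    refine ⟨n, ?_⟩
    rw [Algebra.smul_def] at hn
    exact hn
  choose n hn using this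
  exact ⟨D, n, nonZeroDivisors.ne_zero D.2, hn⟩

variable (a b : ℕ) [Fact a.Prime] [Fact b.Prime]

lemma Ph_inV (ha : a % 8 = 1) (hb : b % 8 = 1) (hba : b % a = 1) (m : 𝓞 K) (hm : m ≠ 0)
    (h : inV K a b (m : K)) : Ph a b K (Ideal.span {m}) = 1 := by
  obtain ⟨x1, y1, x2, y2, x3, y3, h⟩ := h
  obtain ⟨D, n, hD, hn⟩ := common_den K ![x1, y1, x2, y2, x3, y3]
  have h0 := hn 0
  have h1 := hn 1
  have h2 := hn 2
  have h3 := hn 3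
  have h4 := hn 4
  have h5 := hn 5
  simp only [Fin.isValue, Matrix.cons_val] at h0 h1 h2 h3 h4 h5
  have e : D ^ 6 * m = (n 0 ^ 2 - a * n 1 ^ 2) * (n 2 ^ 2 - b * n 3 ^ 2) *
      (n 4 ^ 2 - (a * b : ℕ) * n 5 ^ 2) := by
    apply RingOfIntegers.ext
    change algebraMap (𝓞 K) K _ = algebraMap (𝓞 K) K _
    simp only [map_mul, map_sub, map_pow, map_natCast]
    change (D : K) ^ 6 * (m : K) = ((n 0 : K) ^ 2 - a * (n 1 : K) ^ 2) * ((n 2 : K) ^ 2 - b * (n 3 : K) ^ 2) *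
      ((n 4 : K) ^ 2 - (a * b : ℕ) * (n 5 : K) ^ 2)
    rw [h0, h1, h2, h3, h4, h5, h]
    push_cast
    ring
  have hne : D ^ 6 * m ≠ 0 := mul_ne_zero (pow_ne_zero _ hD) hm
  rw [e] at hne
  have n3 := right_ne_zero_of_mul hne
  have n1 := left_ne_zero_of_mul (left_ne_zero_of_mul hne)
  have n2 := right_ne_zero_of_mul (left_ne_zero_of_mul hne)
  have e2 := congrArg (fun z => Ph a b K (Ideal.span {z})) e
  simp only [← Ideal.span_singleton_mul_span_singleton, ← Ideal.span_singleton_pow] at e2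
  have sp : ∀ z : 𝓞 K, z ≠ 0 → Ideal.span {z} ≠ ⊥ := fun z hz => by simpa using hz
  rw [Ph_mul a b K _ _ (pow_ne_zero _ (sp D hD)) (sp m hm), Ph_pow a b K _ (sp D hD),
    Ph_mul a b K _ _ (mul_ne_zero (sp _ n1) (sp _ n2)) (sp _ n3), Ph_mul a b K _ _ (sp _ n1) (sp _ n2),
    Ph_norm_left K a b ha _ _ n1, Ph_comm K a b (Ideal.span {n 2 ^ 2 - _}), Ph_norm_left K b a hb _ _ n2,
    Ph_norm_prod K a b ha hb hba _ _ n3, pow_mul _ 2 3, Ph_sq] at e2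
  simpa using e2

end

section
variable {K N : Type*} [Field K] [Field N] [Algebra K N] [CharZero K] (e : K) (θ : N)

lemma quad_indep (hθ : θ ^ 2 = algebraMap K N e) (he : ¬ IsSquare e) (u v : K) (h : algebraMap K N u + algebraMap K N v * θ = 0) : u = 0 ∧ v = 0 := by
  have hv : v = 0 := by
    by_contra hv
    apply he
    refine ⟨u / v, ?_⟩
    apply (algebraMap K N).injective
    have hv' : algebraMap K N v ≠ 0 := by simpa using hv
    have : θ = - (algebraMap K N u / algebraMap K N v) := by
      field_simp
      linear_combination h
    rw [← hθ, this]
    simp only [map_mul, map_div₀]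
    ring
  refine ⟨?_, hv⟩
  rw [hv] at h
  simpa using h

lemma quad_basis (hθ : θ ^ 2 = algebraMap K N e) (hf : Module.finrank K N = 2) (he : ¬ IsSquare e) 
    : ∃ B : Module.Basis (Fin 2) K N, B 0 = 1 ∧ B 1 = θ := by
  have hli : LinearIndependent K ![(1 : N), θ] := by
    rw [LinearIndependent.pair_iff]
    intro s t h
    apply quad_indep e θ hθ he s t
    rw [← h, Algebra.smul_def, Algebra.smul_def, mul_one]
  refine ⟨basisOfLinearIndependentOfCardEqFinrank hli (by simp [hf]), ?_, ?_⟩ <;> simp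

lemma quad_norm (hθ : θ ^ 2 = algebraMap K N e) (hf : Module.finrank K N = 2) (he : ¬ IsSquare e) 
    (x : N) : ∃ w t : K, Algebra.norm K x = w ^ 2 - e * t ^ 2 := by
  obtain ⟨B, hB0, hB1⟩ := quad_basis e θ hθ hf he
  have hx := B.sum_repr x
  rw [Fin.sum_univ_two] at hx
  refine ⟨B.repr x 0, B.repr x 1, ?_⟩
  generalize B.repr x 0 = w at *
  generalize B.repr x 1 = t at *
  have m0 : x * B 0 = w • B 0 + t • B 1 := by rw [hx, hB0, mul_one]
  have m1 : x * B 1 = (e * t) • B 0 + w • B 1 := by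
    rw [← hx, hB0, hB1, Algebra.smul_def, Algebra.smul_def, Algebra.smul_def, Algebra.smul_def, map_mul]
    linear_combination (algebraMap K N t) * hθ
  rw [Algebra.norm_eq_matrix_det B, Matrix.det_fin_two]
  simp only [Algebra.leftMulMatrix_eq_repr_mul, m0, m1, map_add, map_smul, Module.Basis.repr_self]
  simp
  ring

lemma quad_square (hθ : θ ^ 2 = algebraMap K N e) (hf : Module.finrank K N = 2) (he : ¬ IsSquare e) 
    (k : K) (h : IsSquare (algebraMap K N k)) : IsSquare k ∨ IsSquare (k * e) := by
  obtain ⟨B, hB0, hB1⟩ := quad_basis e θ hθ hf he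
  obtain ⟨x, hk⟩ := h
  have hx := B.sum_repr x
  rw [Fin.sum_univ_two, hB0, hB1, Algebra.smul_def, Algebra.smul_def, mul_one] at hx
  generalize B.repr x 0 = w at *
  generalize B.repr x 1 = t at *
  have key := quad_indep e θ hθ he (w ^ 2 + t ^ 2 * e - k) (2 * w * t) (by
    simp only [map_sub, map_add, map_mul, map_pow, map_ofNat]
    rw [hk, ← hx]
    linear_combination (-(algebraMap K N t)^2) * hθ)
  obtain ⟨k1, k2⟩ := key
  simp only [mul_eq_zero, OfNat.ofNat_ne_zero, false_or] at k2
  rcases k2 with h | h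
  · right
    refine ⟨t * e, ?_⟩
    rw [h] at k1
    linear_combination (-e) * k1
  · left
    refine ⟨w, ?_⟩
    rw [h] at k1
    linear_combination (-1) * k1
end

lemma sq_cancel {K : Type*} [Field K] (x y : K) (hy : y ≠ 0) (h : IsSquare (y ^ 2 * x)) : IsSquare x := by
  obtain ⟨r, hr⟩ := h
  refine ⟨r / y, ?_⟩
  field_simp
  linear_combination hr

theorem exists_notV (K : Type*) [Field K] [NumberField K] (a b : ℕ) [Fact a.Prime] [Fact b.Prime]
    (ha : a % 8 = 1) (hb : b % 8 = 1) (hba : b % a = 1)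
    (na : ¬ IsSquare (a : K)) (nb : ¬ IsSquare (b : K)) (nab : ¬ IsSquare ((a * b : ℕ) : K))
    (α : K) (h1 : ¬ IsSquare α) (h2 : ¬ IsSquare (a * α)) (h3 : ¬ IsSquare (b * α))
    (h4 : ¬ IsSquare ((a * b : ℕ) * α)) :
    ∃ w t : K, w ^ 2 - a * α * t ^ 2 ≠ 0 ∧ ¬ inV K a b (w ^ 2 - a * α * t ^ 2) := by
  obtain ⟨N, _, _, _, θ, hθ, hf, hgal⟩ := exists_quad (a * α : K) h2
  have ha0 : (a : K) ≠ 0 := by intro h; rw [h] at na; exact na (IsSquare.zero)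
  have A1 : ¬ IsSquare (a : N) := by
    rw [← map_natCast (algebraMap K N)]
    intro h
    rcases quad_square _ θ hθ hf h2 _ h with h | h
    · exact na h
    · exact h1 (sq_cancel α a ha0 (by convert h using 1; ring))
  have A2 : ¬ IsSquare (b : N) := by
    rw [← map_natCast (algebraMap K N)]
    intro h
    rcases quad_square _ θ hθ hf h2 _ h with h | h
    · exact nb h
    · exact h4 (by convert h using 1; push_cast; ring)
  have A3 : ¬ IsSquare ((a * b : ℕ) : N) := by
    rw [← map_natCast (algebraMap K N)]
    intro h
    rcases quad_square _ θ hθ hf h2 _ h with h | h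
    · exact nab h
    · exact h3 (sq_cancel (b * α) a ha0 (by convert h using 1; push_cast; ring))
  obtain ⟨x, hx, hPx⟩ := exists_principal_neg N (Ph a b N) (Ph_one_or a b N) (Ph_mul a b N) a b A1 A2 A3
    (fun v hv => Ph_chi a b N ha hb v hv)
  have hn := Ph_relNorm a b K N (Ideal.span {x}) (by simpa using hx)
  rw [Ideal.relNorm_singleton, hPx] at hn
  have hnx : ((Algebra.intNorm (𝓞 K) (𝓞 N) x : 𝓞 K) : K) = Algebra.norm K (x : N) :=
    Algebra.algebraMap_intNorm (L := N) x
  obtain ⟨w, t, hwt⟩ := quad_norm _ θ hθ hf h2 (x : N)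
  have hx0 : (x : N) ≠ 0 := by simpa using hx
  have hne : Algebra.norm K (x : N) ≠ 0 := by
    have : FiniteDimensional K N := Module.finite_of_finrank_pos (by omega)
    rw [Ne, Algebra.norm_eq_zero_iff]; exact hx0
  refine ⟨w, t, by rw [← hwt]; exact hne, ?_⟩
  intro hV
  rw [← hwt, ← hnx] at hV
  have := Ph_inV K a b ha hb hba _ (by
    intro h; rw [h] at hnx; exact hne (by rw [← hnx]; simp)) hV
  rw [this] at hn
  norm_num at hn

end NSD

namespace NSD
open NumberField IsDedekindDomain
open scoped Classical

section
variable {K : Type*} [Field K] (a b : ℕ)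

lemma inV_mul {m n : K} (hm : inV K a b m) (hn : inV K a b n) : inV K a b (m * n) := by
  obtain ⟨x1, y1, x2, y2, x3, y3, rfl⟩ := hm
  obtain ⟨x1', y1', x2', y2', x3', y3', rfl⟩ := hn
  refine ⟨x1 * x1' + a * y1 * y1', x1 * y1' + x1' * y1, x2 * x2' + b * y2 * y2', x2 * y2' + x2' * y2,
    x3 * x3' + (a * b : ℕ) * y3 * y3', x3 * y3' + x3' * y3, ?_⟩
  ring

lemma inV_sq (x : K) : inV K a b (x ^ 2) := ⟨x, 0, 1, 0, 1, 0, by ring⟩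

lemma inV_one : inV K a b (1 : K) := by simpa using inV_sq a b (1 : K)

lemma inV_inv {m : K} (hm : inV K a b m) : inV K a b m⁻¹ := by
  by_cases h : m = 0
  · subst h; simpa using hm
  · have := inV_mul a b hm (inV_sq a b m⁻¹)
    convert this using 1
    field_simp

lemma inV_form (d : ℕ) (hd : d = a ∨ d = b ∨ d = a * b) (x y : K) : inV K a b (x ^ 2 - d * y ^ 2) := by
  rcases hd with rfl | rfl | rfl
  · exact ⟨x, y, 1, 0, 1, 0, by ring⟩
  · exact ⟨1, 0, x, y, 1, 0, by ring⟩
  · exact ⟨1, 0, 1, 0, x, y, by ring⟩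
end

section
universe u
variable (K : Type u) [Field K] [NumberField K]

lemma norm_bd : ∃ c0 : ℝ, 0 ≤ c0 ∧ ∀ (c : Module.Free.ChooseBasisIndex ℤ (𝓞 K) → ℤ) (B : ℕ), (∀ i, |c i| ≤ (B : ℤ)) →
    ∀ σ : K →ₐ[ℚ] ℂ, ‖σ ((∑ i, c i • RingOfIntegers.basis K i : 𝓞 K) : K)‖ ≤ c0 * B := by
  refine ⟨∑ i, ∑ σ : K →ₐ[ℚ] ℂ, ‖σ (RingOfIntegers.basis K i : K)‖, by positivity, fun c B hc σ => ?_⟩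
  have : ((∑ i, c i • RingOfIntegers.basis K i : 𝓞 K) : K) = ∑ i, (c i : K) * (RingOfIntegers.basis K i : K) := by
    change algebraMap (𝓞 K) K _ = _
    rw [map_sum]
    refine Finset.sum_congr rfl fun i _ => ?_
    rw [zsmul_eq_mul, map_mul, map_intCast]
  rw [this, map_sum, Finset.sum_mul]
  refine (norm_sum_le _ _).trans (Finset.sum_le_sum fun i _ => ?_)
  rw [map_mul, map_intCast, norm_mul, mul_comm]
  have h1 : ‖((c i : ℤ) : ℂ)‖ ≤ B := by
    rw [Complex.norm_intCast]
    exact_mod_cast hc i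
  refine mul_le_mul ?_ h1 (norm_nonneg _) (by positivity)
  exact Finset.single_le_sum (f := fun σ : K →ₐ[ℚ] ℂ => ‖σ (RingOfIntegers.basis K i : K)‖) (fun _ _ => norm_nonneg _) (Finset.mem_univ σ)

lemma abs_norm_le (z : 𝓞 K) (D : ℝ) (h : ∀ σ : K →ₐ[ℚ] ℂ, ‖σ (z : K)‖ ≤ D) :
    (Ideal.absNorm (Ideal.span {z}) : ℝ) ≤ D ^ Module.finrank ℚ K := by
  rw [Ideal.absNorm_span_singleton]
  have h1 : (((Algebra.norm ℤ z).natAbs : ℕ) : ℝ) = ‖algebraMap ℚ ℂ (Algebra.norm ℚ (z : K))‖ := by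
    rw [← Algebra.coe_norm_int]
    simp [Nat.cast_natAbs]
  rw [h1, Algebra.norm_eq_prod_embeddings ℚ ℂ, norm_prod]
  refine (Finset.prod_le_prod (fun _ _ => norm_nonneg _) (fun σ _ => h σ)).trans ?_
  rw [Finset.prod_const, Finset.card_univ, AlgHom.card]

lemma pigeon (a b : ℕ) : ∃ C : ℕ, ∀ v : HeightOneSpectrum (𝓞 K), ∀ (d : ℕ), d ≤ a + b + a * b → ∀ r : 𝓞 K,
    r ^ 2 - (d : 𝓞 K) ∈ v.asIdeal → ∃ x y : 𝓞 K, (x ≠ 0 ∨ y ≠ 0) ∧ x ^ 2 - d * y ^ 2 ∈ v.asIdeal ∧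
      Ideal.absNorm (Ideal.span {x ^ 2 - d * y ^ 2}) ≤ C * Ideal.absNorm v.asIdeal := by
  obtain ⟨c0, hc0, hbd⟩ := norm_bd K
  set n := Module.finrank ℚ K with hn
  have hnpos : 0 < n := Module.finrank_pos
  set C1 : ℝ := c0 ^ 2 * (1 + (a + b + a * b : ℕ)) with hC1
  obtain ⟨C, hC⟩ := exists_nat_ge (C1 ^ n)
  refine ⟨C, fun v d hd r hr => ?_⟩
  obtain ⟨k, _, _, φ, hs, h0, hc⟩ := chi_quad K v
  set N := Ideal.absNorm v.asIdeal with hN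
  have hex : ∃ B : ℕ, N < (B + 1) ^ (2 * n) := ⟨N, lt_of_lt_of_le (Nat.lt_succ_self N) (Nat.le_self_pow (by omega) _)⟩
  set B := Nat.find hex with hB
  have hB1 : N < (B + 1) ^ (2 * n) := Nat.find_spec hex
  have hB2 : B ^ (2 * n) ≤ N := by
    rcases Nat.eq_zero_or_pos B with h | h
    · rw [h, zero_pow (by omega)]; exact Nat.zero_le _
    · have := Nat.find_min hex (m := B - 1) (by omega)
      rw [Nat.sub_add_cancel h] at this
      omega
  let ι := Module.Free.ChooseBasisIndex ℤ (𝓞 K)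
  have hι : Fintype.card ι = n := by
    rw [hn, ← RingOfIntegers.rank, Module.finrank_eq_card_chooseBasisIndex]
  let E : (ι → Fin (B + 1)) → 𝓞 K := fun c => ∑ i, ((c i : ℕ) : ℤ) • RingOfIntegers.basis K i
  let f : (ι → Fin (B + 1)) × (ι → Fin (B + 1)) → k := fun p => φ (E p.1 - r * E p.2)
  have hcard : Fintype.card k < Fintype.card ((ι → Fin (B + 1)) × (ι → Fin (B + 1))) := by
    rw [hc, Fintype.card_prod, Fintype.card_fun, Fintype.card_fin, hι, ← pow_add, ← two_mul]
    exact hB1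
  obtain ⟨p, q, hpq, hfe⟩ := Fintype.exists_ne_map_eq_of_card_lt f hcard
  let c1 : ι → ℤ := fun i => ((p.1 i : ℕ) : ℤ) - ((q.1 i : ℕ) : ℤ)
  let c2 : ι → ℤ := fun i => ((p.2 i : ℕ) : ℤ) - ((q.2 i : ℕ) : ℤ)
  have hx : (∑ i, c1 i • RingOfIntegers.basis K i) = E p.1 - E q.1 := by
    rw [← Finset.sum_sub_distrib]; exact Finset.sum_congr rfl fun i _ => sub_smul _ _ _
  have hy : (∑ i, c2 i • RingOfIntegers.basis K i) = E p.2 - E q.2 := by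
    rw [← Finset.sum_sub_distrib]; exact Finset.sum_congr rfl fun i _ => sub_smul _ _ _
  have hc1 : ∀ i, |c1 i| ≤ (B : ℤ) := fun i => by
    have h1 := (p.1 i).isLt; have h2 := (q.1 i).isLt
    rw [abs_le]; constructor <;> simp only [c1] <;> omega
  have hc2 : ∀ i, |c2 i| ≤ (B : ℤ) := fun i => by
    have h1 := (p.2 i).isLt; have h2 := (q.2 i).isLt
    rw [abs_le]; constructor <;> simp only [c2] <;> omega
  set x := (∑ i, c1 i • RingOfIntegers.basis K i) with hxdef
  set y := (∑ i, c2 i • RingOfIntegers.basis K i) with hydef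
  refine ⟨x, y, ?_, ?_, ?_⟩
  · by_contra hcon
    push Not at hcon
    apply hpq
    have li := (RingOfIntegers.basis K).linearIndependent
    rw [Fintype.linearIndependent_iff] at li
    have e1 := li c1 hcon.1
    have e2 := li c2 hcon.2
    ext i
    · have := e1 i; simp only [c1] at this; omega
    · have := e2 i; simp only [c2] at this; omega
  · have h1 : x - r * y ∈ v.asIdeal := by
      rw [← h0, hx, hy]
      have : E p.1 - E q.1 - r * (E p.2 - E q.2) = (E p.1 - r * E p.2) - (E q.1 - r * E q.2) := by ring
      rw [this, map_sub, sub_eq_zero]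
      exact hfe
    have : x ^ 2 - d * y ^ 2 = (x + r * y) * (x - r * y) + y ^ 2 * (r ^ 2 - d) := by ring
    rw [this]
    exact add_mem (Ideal.mul_mem_left _ _ h1) (Ideal.mul_mem_left _ _ hr)
  · have key : ∀ σ : K →ₐ[ℚ] ℂ, ‖σ ((x ^ 2 - d * y ^ 2 : 𝓞 K) : K)‖ ≤ C1 * (B : ℝ) ^ 2 := by
      intro σ
      have e : ((x ^ 2 - d * y ^ 2 : 𝓞 K) : K) = (x : K) ^ 2 - d * (y : K) ^ 2 := by
        change algebraMap (𝓞 K) K _ = _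
        simp only [map_sub, map_mul, map_pow, map_natCast]
      rw [e, map_sub, map_mul, map_pow, map_pow, map_natCast]
      refine (norm_sub_le _ _).trans ?_
      rw [norm_mul, norm_pow, norm_pow, Complex.norm_natCast]
      have b1 := hbd c1 B hc1 σ
      have b2 := hbd c2 B hc2 σ
      have s1 : ‖σ (x : K)‖ ^ 2 ≤ (c0 * B) ^ 2 := pow_le_pow_left₀ (norm_nonneg _) b1 2
      have s2 : ‖σ (y : K)‖ ^ 2 ≤ (c0 * B) ^ 2 := pow_le_pow_left₀ (norm_nonneg _) b2 2
      have hd' : (d : ℝ) ≤ ((a + b + a * b : ℕ) : ℝ) := by exact_mod_cast hd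
      have : (d : ℝ) * ‖σ (y : K)‖ ^ 2 ≤ ((a + b + a * b : ℕ) : ℝ) * (c0 * B) ^ 2 :=
        mul_le_mul hd' s2 (by positivity) (by positivity)
      rw [hC1]
      calc _ ≤ (c0 * B) ^ 2 + ((a + b + a * b : ℕ) : ℝ) * (c0 * B) ^ 2 := add_le_add s1 this
        _ = _ := by ring
    have := abs_norm_le K _ _ key
    rw [mul_pow, ← pow_mul, ← hn] at this
    have h2 : ((B ^ (2 * n) : ℕ) : ℝ) ≤ N := by exact_mod_cast hB2
    push_cast at h2
    have h3 : C1 ^ n * (B : ℝ) ^ (2 * n) ≤ C * N := mul_le_mul hC h2 (by positivity) (by positivity)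
    exact_mod_cast this.trans h3
end
end NSD

namespace NSD
open NumberField IsDedekindDomain
open scoped Classical

section
universe u
variable (K : Type u) [Field K] [NumberField K]

lemma units_sq : ∃ U : Set (𝓞 K)ˣ, U.Finite ∧ ∀ u : (𝓞 K)ˣ, ∃ g ∈ U, ∃ w : (𝓞 K)ˣ, u = g * w ^ 2 := by
  let F : (Units.torsion K) × (Fin (Units.rank K) → Fin 2) → (𝓞 K)ˣ := fun p =>
    p.1 * ∏ i, (Units.fundSystem K i) ^ (((p.2 i : ℕ)) : ℤ)
  refine ⟨Set.range F, Set.finite_range F, fun u => ?_⟩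
  obtain ⟨⟨ζ, e⟩, he, -⟩ := Units.exist_unique_eq_mul_prod K u
  refine ⟨F (ζ, fun i => ⟨(e i % 2).toNat, by omega⟩), ⟨_, rfl⟩, ∏ i, (Units.fundSystem K i) ^ (e i / 2), ?_⟩
  rw [he]
  simp only [F]
  rw [mul_assoc, ← Finset.prod_pow, ← Finset.prod_mul_distrib]
  congr 1
  refine Finset.prod_congr rfl fun i _ => ?_
  rw [← zpow_natCast, ← zpow_mul, ← zpow_add]
  congr 1
  push_cast
  omega

lemma form_ne (d : ℕ) (hd : ¬ IsSquare (d : K)) (x y : 𝓞 K) (h : x ≠ 0 ∨ y ≠ 0) : x ^ 2 - d * y ^ 2 ≠ 0 := by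
  intro h0
  have e : (x : K) ^ 2 - d * (y : K) ^ 2 = 0 := by
    have := congrArg (algebraMap (𝓞 K) K) h0
    simpa only [map_sub, map_mul, map_pow, map_natCast, map_zero] using this
  by_cases hy : y = 0
  · subst hy
    simp at h h0
    exact h h0
  · apply hd
    have hy' : (y : K) ≠ 0 := by simpa using hy
    refine ⟨(x : K) / y, ?_⟩
    field_simp
    linear_combination -e

variable (a b : ℕ) 

lemma prime_n (na : ¬IsSquare (a:K)) (nb : ¬IsSquare (b:K)) (nab : ¬IsSquare ((a*b:ℕ):K)) :
    ∃ C : ℕ, ∀ v : HeightOneSpectrum (𝓞 K), (a : 𝓞 K) ∉ v.asIdeal → (b : 𝓞 K) ∉ v.asIdeal →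
      ∃ z : 𝓞 K, z ≠ 0 ∧ inV K a b (z : K) ∧ z ∈ v.asIdeal ∧
        Ideal.absNorm (Ideal.span {z}) ≤ C * Ideal.absNorm v.asIdeal := by
  obtain ⟨C, hC⟩ := pigeon K a b
  refine ⟨C, fun v ha hb => ?_⟩
  have : ∃ d : ℕ, (d = a ∨ d = b ∨ d = a * b) ∧ ∃ r : 𝓞 K, r ^ 2 - (d : 𝓞 K) ∈ v.asIdeal := by
    by_contra hcon
    push Not at hcon
    have h1 : chi K a v = -1 := if_neg (by push Not; exact hcon a (by simp))
    have h2 : chi K b v = -1 := if_neg (by push Not; exact hcon b (by simp))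
    have h3 : chi K (a * b) v = -1 := if_neg (by push Not; exact hcon (a * b) (by simp))
    have := chi_mul K v a b ha hb
    rw [h1, h2, h3] at this
    norm_num at this
  obtain ⟨d, hd, r, hr⟩ := this
  have hns : ¬ IsSquare (d : K) := by rcases hd with rfl | rfl | rfl <;> assumption
  obtain ⟨x, y, hxy, hm, hN⟩ := hC v d (by rcases hd with rfl | rfl | rfl <;> nlinarith) r hr
  refine ⟨_, form_ne K d hns x y hxy, ?_, hm, hN⟩
  have e : ((x ^ 2 - d * y ^ 2 : 𝓞 K) : K) = (x : K) ^ 2 - d * (y : K) ^ 2 := by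
    change algebraMap (𝓞 K) K _ = _
    simp only [map_sub, map_mul, map_pow, map_natCast]
  rw [e]
  exact inV_form a b d hd _ _

lemma absNorm_pos (I : Ideal (𝓞 K)) (hI : I ≠ 0) : 0 < Ideal.absNorm I := by
  rw [Nat.pos_iff_ne_zero, Ne, Ideal.absNorm_eq_zero_iff]
  exact hI

lemma smooth (C : ℕ) (T : Finset (HeightOneSpectrum (𝓞 K)))
    (hT : ∀ v : HeightOneSpectrum (𝓞 K), Ideal.absNorm v.asIdeal ≤ C → v ∈ T) (I : Ideal (𝓞 K)) :
    I ≠ 0 → Ideal.absNorm I ≤ C → ∃ e : HeightOneSpectrum (𝓞 K) → ℕ, I = ∏ v ∈ T, v.asIdeal ^ e v := by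
  refine UniqueFactorizationMonoid.induction_on_prime I ?_ ?_ ?_
  · intro h; exact absurd rfl h
  · intro J hJ _ _
    refine ⟨0, ?_⟩
    rw [Ideal.isUnit_iff, ← Ideal.one_eq_top] at hJ
    simp [hJ, -Ideal.one_eq_top]
  · intro J p hJ hp ih h0 hN
    rw [map_mul] at hN
    have p1 := absNorm_pos K J hJ
    have p2 := absNorm_pos K p hp.ne_zero
    obtain ⟨e, he⟩ := ih hJ (by nlinarith)
    let v : HeightOneSpectrum (𝓞 K) := ⟨p, Ideal.isPrime_of_prime hp, hp.ne_zero⟩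
    have hv : v ∈ T := hT v (by change Ideal.absNorm p ≤ C; nlinarith)
    refine ⟨fun w => e w + if w = v then 1 else 0, ?_⟩
    simp only [pow_add, Finset.prod_mul_distrib, ← he]
    rw [mul_comm]
    congr 1
    have : ∀ w ∈ T, w.asIdeal ^ (if w = v then 1 else 0) = if w = v then w.asIdeal else 1 := by
      intro w _; split_ifs <;> simp
    rw [Finset.prod_congr rfl this, Finset.prod_ite_eq' T v, if_pos hv]

lemma ideal_mod (ha0 : a ≠ 0) (hb0 : b ≠ 0) (na : ¬IsSquare (a:K)) (nb : ¬IsSquare (b:K)) (nab : ¬IsSquare ((a*b:ℕ):K)) :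
    ∃ T : Finset (HeightOneSpectrum (𝓞 K)), ∀ I : Ideal (𝓞 K), I ≠ 0 → ∃ (n : 𝓞 K) (J : Ideal (𝓞 K))
      (e : HeightOneSpectrum (𝓞 K) → ℕ), n ≠ 0 ∧ J ≠ 0 ∧ inV K a b (n : K) ∧
      I * Ideal.span {n} = J ^ 2 * ∏ v ∈ T, v.asIdeal ^ e v := by
  obtain ⟨C, hC⟩ := prime_n K a b na nb nab
  have fin1 : {v : HeightOneSpectrum (𝓞 K) | Ideal.absNorm v.asIdeal ≤ C}.Finite := by
    refine Set.Finite.of_finite_image (f := HeightOneSpectrum.asIdeal)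
      ((Ideal.finite_setOfPred_absNorm_le (S := 𝓞 K) C).subset ?_) ?_
    · rintro _ ⟨v, hv, rfl⟩; exact hv
    · intro v _ w _ h; exact HeightOneSpectrum.ext h
  have fin := (fin1.union (finite_div K a ha0)).union (finite_div K b hb0)
  set T := fin.toFinset with hTdef
  have hTm : ∀ v, v ∈ T ↔ (Ideal.absNorm v.asIdeal ≤ C ∨ (a : 𝓞 K) ∈ v.asIdeal) ∨ (b : 𝓞 K) ∈ v.asIdeal := by
    intro v; rw [hTdef, Set.Finite.mem_toFinset]; rfl
  refine ⟨T, fun I => ?_⟩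
  refine UniqueFactorizationMonoid.induction_on_prime I ?_ ?_ ?_
  · intro h; exact absurd rfl h
  · intro J hJ _
    rw [Ideal.isUnit_iff, ← Ideal.one_eq_top] at hJ
    refine ⟨1, 1, 0, one_ne_zero, one_ne_zero, ?_, ?_⟩
    · simpa using inV_one a b (K := K)
    · rw [Ideal.span_singleton_one, ← Ideal.one_eq_top]
      simp [hJ, -Ideal.one_eq_top]
  · intro A p hA hp ih _
    obtain ⟨n, J, e, hn, hJ, hV, hI⟩ := ih hA
    let v : HeightOneSpectrum (𝓞 K) := ⟨p, Ideal.isPrime_of_prime hp, hp.ne_zero⟩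
    have main : ∃ (n' : 𝓞 K) (J' : Ideal (𝓞 K)) (e' : HeightOneSpectrum (𝓞 K) → ℕ),
      n' ≠ 0 ∧ J' ≠ 0 ∧ inV K a b (n' : K) ∧ p * Ideal.span {n'} = J' ^ 2 * ∏ v ∈ T, v.asIdeal ^ e' v := by
      by_cases hv : v ∈ T
      · refine ⟨1, 1, fun w => if w = v then 1 else 0, one_ne_zero, one_ne_zero, ?_, ?_⟩
        · simpa using inV_one a b (K := K)
        · have : ∀ w ∈ T, w.asIdeal ^ (if w = v then 1 else 0) = if w = v then w.asIdeal else 1 := by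
            intro w _; split_ifs <;> simp
          rw [Finset.prod_congr rfl this, Finset.prod_ite_eq' T v, if_pos hv]
          rw [Ideal.span_singleton_one, ← Ideal.one_eq_top]
          simp [v, -Ideal.one_eq_top]
      · have hv' := hv
        rw [hTm] at hv'
        push Not at hv'
        obtain ⟨z, hz0, hzV, hzv, hzN⟩ := hC v hv'.1.2 hv'.2
        have hdvd : p ∣ Ideal.span {z} := Ideal.dvd_span_singleton.2 hzv
        obtain ⟨D, hD⟩ := hdvd
        have hs0 : Ideal.span {z} ≠ 0 := by simpa using hz0
        have hD0 : D ≠ 0 := by rintro rfl; exact hs0 (by rw [hD, mul_zero])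
        have hDN : Ideal.absNorm D ≤ C := by
          rw [hD, map_mul, mul_comm] at hzN
          exact Nat.le_of_mul_le_mul_right hzN (absNorm_pos K p hp.ne_zero)
        obtain ⟨e', he'⟩ := smooth K C T (fun w hw => (hTm w).2 (Or.inl (Or.inl hw))) D hD0 hDN
        refine ⟨z, p, e', hz0, hp.ne_zero, hzV, ?_⟩
        rw [← he', hD]; ring
    obtain ⟨n', J', e', hn', hJ', hV', hI'⟩ := main
    refine ⟨n' * n, J' * J, fun w => e' w + e w, mul_ne_zero hn' hn, mul_ne_zero hJ' hJ, ?_, ?_⟩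
    · have : ((n' * n : 𝓞 K) : K) = (n' : K) * n := by
        change algebraMap (𝓞 K) K _ = _
        simp only [map_mul]
      rw [this]; exact inV_mul a b hV' hV
    · rw [← Ideal.span_singleton_mul_span_singleton]
      simp only [pow_add, Finset.prod_mul_distrib]
      calc _ = (p * Ideal.span {n'}) * (A * Ideal.span {n}) := by ring
        _ = _ := by rw [hI, hI']; ring

lemma ideal_mod' (ha0 : a ≠ 0) (hb0 : b ≠ 0) (na : ¬IsSquare (a:K)) (nb : ¬IsSquare (b:K)) (nab : ¬IsSquare ((a*b:ℕ):K)) :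
    ∃ T : Finset (HeightOneSpectrum (𝓞 K)), ∀ I : Ideal (𝓞 K), I ≠ 0 → ∃ (n : 𝓞 K) (J : Ideal (𝓞 K))
      (s : T.powerset), n ≠ 0 ∧ J ≠ 0 ∧ inV K a b (n : K) ∧
      I * Ideal.span {n} = J ^ 2 * ∏ v ∈ s.1, v.asIdeal := by
  obtain ⟨T, hT⟩ := ideal_mod K a b ha0 hb0 na nb nab
  refine ⟨T, fun I hI => ?_⟩
  obtain ⟨n, J, e, hn, hJ, hV, h⟩ := hT I hI
  refine ⟨n, J * ∏ v ∈ T, v.asIdeal ^ (e v / 2), ⟨T.filter (fun v => e v % 2 = 1), by simp⟩, hn, ?_, hV, ?_⟩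
  · refine mul_ne_zero hJ (Finset.prod_ne_zero_iff.2 fun v _ => pow_ne_zero _ v.ne_bot)
  · rw [h, mul_pow, mul_assoc]
    congr 1
    rw [Finset.prod_filter, ← Finset.prod_pow, ← Finset.prod_mul_distrib]
    refine Finset.prod_congr rfl fun v _ => ?_
    rw [← pow_mul]
    split_ifs with hh
    · rw [← pow_succ]; congr 1; omega
    · rw [mul_one]; congr 1; omega

lemma finite_rep {A B : Type*} [Finite B] (κ : A → B) : ∃ Γ : Set A, Γ.Finite ∧ ∀ z, ∃ g ∈ Γ, κ g = κ z := by
  have := Fintype.ofFinite B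
  refine ⟨Set.range (fun b : Set.range κ => b.2.choose), Set.finite_range _, fun z => ?_⟩
  exact ⟨_, ⟨⟨κ z, z, rfl⟩, rfl⟩, (⟨z, rfl⟩ : ∃ y, κ y = κ z).choose_spec⟩

theorem finite_index (ha0 : a ≠ 0) (hb0 : b ≠ 0) (na : ¬IsSquare (a:K)) (nb : ¬IsSquare (b:K)) (nab : ¬IsSquare ((a*b:ℕ):K)) :
    ∃ Γ : Set K, Γ.Finite ∧ (∀ g ∈ Γ, g ≠ 0) ∧ ∀ z : K, z ≠ 0 → ∃ g ∈ Γ, ∃ v : K, v ≠ 0 ∧ inV K a b v ∧ z = g * v := by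
  obtain ⟨T, hT⟩ := ideal_mod' K a b ha0 hb0 na nb nab
  obtain ⟨U, hU, hUs⟩ := units_sq K
  have hT' : ∀ z : {z : 𝓞 K // z ≠ 0}, ∃ (n : 𝓞 K) (J : Ideal (𝓞 K))
      (s : T.powerset), n ≠ 0 ∧ J ≠ 0 ∧ inV K a b (n : K) ∧
      Ideal.span {z.1 * n} = J ^ 2 * ∏ v ∈ s.1, v.asIdeal := by
    intro z
    obtain ⟨n, J, s, h1, h2, h3, h4⟩ := hT (Ideal.span {z.1}) (by simpa using z.2)
    exact ⟨n, J, s, h1, h2, h3, by rw [← Ideal.span_singleton_mul_span_singleton]; exact h4⟩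
  choose n J s hn hJ hV hI using hT'
  let κ : {z : 𝓞 K // z ≠ 0} → ClassGroup (𝓞 K) × T.powerset := fun z =>
    (ClassGroup.mk0 ⟨J z, mem_nonZeroDivisors_of_ne_zero (hJ z)⟩, s z)
  obtain ⟨G, hG, hGs⟩ := finite_rep κ
  refine ⟨Set.image (fun p : {z : 𝓞 K // z ≠ 0} × (𝓞 K)ˣ => ((p.1.1 : K) * ((p.2 : 𝓞 K) : K))) (G ×ˢ U), (hG.prod hU).image _, ?_, ?_⟩
  · rintro _ ⟨⟨z, u⟩, -, rfl⟩
    refine mul_ne_zero ?_ ?_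
    · simpa using z.2
    · simp
  · have main : ∀ z : {z : 𝓞 K // z ≠ 0}, ∃ g ∈ G, ∃ u ∈ U, ∃ v : K, v ≠ 0 ∧ inV K a b v ∧ (z.1 : K) = (g.1 : K) * (u : 𝓞 K) * v := by
      intro z
      obtain ⟨g, hg, hκ⟩ := hGs z
      have h1 : s g = s z := (Prod.ext_iff.1 hκ).2
      have h2 := (Prod.ext_iff.1 hκ).1
      rw [ClassGroup.mk0_eq_mk0_iff] at h2
      obtain ⟨x, y, hx, hy, hxy⟩ := h2
      change Ideal.span {x} * J g = Ideal.span {y} * J z at hxy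
      have e : Ideal.span {x ^ 2 * (g.1 * n g)} = Ideal.span {y ^ 2 * (z.1 * n z)} := by
        rw [← Ideal.span_singleton_mul_span_singleton, ← Ideal.span_singleton_mul_span_singleton (y ^ 2), hI, hI,
          ← Ideal.span_singleton_pow, ← Ideal.span_singleton_pow, h1, ← mul_assoc, ← mul_assoc, ← mul_pow, ← mul_pow, hxy]
      rw [Ideal.span_singleton_eq_span_singleton] at e
      obtain ⟨u, hu⟩ := e
      obtain ⟨u0, hu0, w, hw⟩ := hUs u
      have hu' : (x : K) ^ 2 * ((g.1 : K) * n g) * (((u0 : 𝓞 K) : K) * ((w : 𝓞 K) : K) ^ 2) = (y : K) ^ 2 * ((z.1 : K) * n z) := by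
        have := congrArg (algebraMap (𝓞 K) K) hu
        rw [hw, Units.val_mul, Units.val_pow_eq_pow_val] at this
        simpa only [map_mul, map_pow] using this
      have hx' : (x : K) ≠ 0 := by simpa using hx
      have hy' : (y : K) ≠ 0 := by simpa using hy
      have hng : (n g : K) ≠ 0 := by simpa using hn g
      have hnz : (n z : K) ≠ 0 := by simpa using hn z
      have hw0 : ((w : 𝓞 K) : K) ≠ 0 := by simp
      refine ⟨g, hg, u0, hu0, ((x : K) * (w : 𝓞 K) / y) ^ 2 * n g * (n z : K)⁻¹, ?_, ?_, ?_⟩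
      · exact mul_ne_zero (mul_ne_zero (pow_ne_zero _ (div_ne_zero (mul_ne_zero hx' hw0) hy')) hng) (inv_ne_zero hnz)
      · exact inV_mul a b (inV_mul a b (inV_sq a b _) (hV g)) (inV_inv a b (hV z))
      · field_simp
        linear_combination -hu'
    intro z hz
    obtain ⟨p, q, hq, hpq⟩ := IsFractionRing.div_surjective (A := 𝓞 K) z
    have hq0 : q ≠ 0 := nonZeroDivisors.ne_zero hq
    have hp0 : p ≠ 0 := by rintro rfl; apply hz; rw [← hpq]; simp
    obtain ⟨g, hg, u, hu, v, hv0, hv, he⟩ := main ⟨p * q, mul_ne_zero hp0 hq0⟩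
    have hq' : (q : K) ≠ 0 := by simpa using hq0
    refine ⟨_, ⟨(g, u), ⟨hg, hu⟩, rfl⟩, v * ((q : K)⁻¹) ^ 2, ?_, inV_mul a b hv (inV_sq a b _), ?_⟩
    · exact mul_ne_zero hv0 (pow_ne_zero _ (inv_ne_zero hq'))
    · have e : (p : K) * q = (g.1 : K) * (u : 𝓞 K) * v := by
        rw [← he]
        change _ = algebraMap (𝓞 K) K _
        simp only [map_mul]
      have hpq' : (p : K) / q = z := hpq
      rw [← hpq']
      simp only
      rw [← mul_assoc, ← e]
      field_simp
end
end NSD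

namespace NSD
open NumberField IsDedekindDomain
open scoped Classical

section
universe u
variable (K : Type u) [Field K] [NumberField K]

lemma fin_sq (m : ℕ) (hm : m ≠ 0) : {q : ℕ | q.Prime ∧ IsSquare ((m * q : ℕ) : K)}.Finite := by
  have hr : ∀ q : ℕ, ∃ r : K, IsSquare ((m * q : ℕ) : K) → r ^ 2 = ((m * q : ℕ) : K) := by
    intro q
    by_cases h : IsSquare ((m * q : ℕ) : K)
    · obtain ⟨r, hr⟩ := h
      exact ⟨r, fun _ => by rw [hr, sq]⟩
    · exact ⟨0, fun h' => absurd h' h⟩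
  choose r hr using hr
  let c : ℕ → ℂ := fun q => ((Real.sqrt ((m * q : ℕ) : ℝ) : ℝ) : ℂ)
  have hc : ∀ q, c q ^ 2 = ((m * q : ℕ) : ℂ) := by
    intro q
    simp only [c]
    rw [← Complex.ofReal_pow, Real.sq_sqrt (Nat.cast_nonneg _)]
    simp
  let S : ℕ → Set (K →ₐ[ℚ] ℂ) := fun q => {σ | σ (r q) = c q}
  refine Set.Finite.of_finite_image (f := S) (Set.toFinite _) ?_
  rintro p ⟨hp, hps⟩ q ⟨hq, hqs⟩ hS
  by_contra hpq
  have hsig : ∀ q, IsSquare ((m * q : ℕ) : K) → ∀ σ : K →ₐ[ℚ] ℂ, σ (r q) = c q ∨ σ (r q) = - c q := by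
    intro q h σ
    apply sq_eq_sq_iff_eq_or_eq_neg.1
    rw [hc, ← map_pow, hr q h, map_natCast]
  have key : ∀ σ : K →ₐ[ℚ] ℂ, σ (r p * r q) = c p * c q := by
    intro σ
    have hiff : σ (r p) = c p ↔ σ (r q) = c q := by
      have : σ ∈ S p ↔ σ ∈ S q := by rw [hS]
      exact this
    rw [map_mul]
    by_cases h : σ (r p) = c p
    · rw [h, hiff.1 h]
    · rw [(hsig p hps σ).resolve_left h, (hsig q hqs σ).resolve_left (fun h' => h (hiff.2 h'))]
      ring
  have htr : algebraMap ℚ ℂ (Algebra.trace ℚ K (r p * r q)) = (Module.finrank ℚ K : ℂ) * (c p * c q) := by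
    rw [trace_eq_sum_embeddings ℂ, Finset.sum_congr rfl (fun σ _ => key σ), Finset.sum_const, Finset.card_univ, AlgHom.card, nsmul_eq_mul]
  set t := Algebra.trace ℚ K (r p * r q)
  set n := Module.finrank ℚ K
  have hn : n ≠ 0 := Module.finrank_pos.ne'
  have h2 : (t ^ 2 : ℚ) = (n : ℚ) ^ 2 * ((m : ℚ) ^ 2 * (p * q : ℕ)) := by
    have : ((t ^ 2 : ℚ) : ℂ) = (((n : ℚ) ^ 2 * ((m : ℚ) ^ 2 * (p * q : ℕ)) : ℚ) : ℂ) := by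
      push_cast
      have h3 : (t : ℂ) = n * (c p * c q) := htr
      rw [h3, mul_pow, mul_pow, hc, hc]
      push_cast
      ring
    exact_mod_cast this
  have hsq : IsSquare ((p * q : ℕ) : ℚ) := by
    refine ⟨t / (n * m), ?_⟩
    have hn' : (n : ℚ) ≠ 0 := by exact_mod_cast hn
    have hm' : (m : ℚ) ≠ 0 := by exact_mod_cast hm
    field_simp
    linear_combination -h2
  rw [Rat.isSquare_natCast_iff] at hsq
  obtain ⟨s, hs⟩ := hsq
  have d1 : p ∣ s := by
    have : p ∣ s * s := ⟨q, hs.symm⟩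
    exact (hp.dvd_mul.1 this).elim id id
  obtain ⟨s', rfl⟩ := d1
  have : q = p * (s' * s') := by
    have hp0 := hp.pos
    apply Nat.eq_of_mul_eq_mul_left hp0
    rw [hs]; ring
  exact hpq ((Nat.prime_dvd_prime_iff_eq hp hq).1 ⟨_, this⟩)

lemma exists_q (N m1 m2 : ℕ) (hN : N ≠ 0) (h1 : m1 ≠ 0) (h2 : m2 ≠ 0) : ∃ q : ℕ, q.Prime ∧ q ≡ 1 [MOD N] ∧
    ¬ IsSquare ((m1 * q : ℕ) : K) ∧ ¬ IsSquare ((m2 * q : ℕ) : K) := by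
  have fin := (fin_sq K m1 h1).union (fin_sq K m2 h2)
  obtain ⟨B, hB⟩ := fin.bddAbove
  obtain ⟨q, hq, hqB, hqN⟩ := Nat.exists_prime_gt_modEq_one B hN
  refine ⟨q, hq, hqN, fun h => ?_, fun h => ?_⟩
  · exact absurd (hB (Or.inl ⟨hq, h⟩)) (by omega)
  · exact absurd (hB (Or.inr ⟨hq, h⟩)) (by omega)

theorem exists_ab : ∃ a b : ℕ, a.Prime ∧ b.Prime ∧ a % 8 = 1 ∧ b % 8 = 1 ∧ b % a = 1 ∧ ¬ IsSquare (a : K) ∧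
    ¬ IsSquare (b : K) ∧ ¬ IsSquare ((a * b : ℕ) : K) := by
  obtain ⟨a, ha, ha8, hns, -⟩ := exists_q K 8 1 1 (by norm_num) (by norm_num) (by norm_num)
  obtain ⟨b, hb, hb8, h1, h2⟩ := exists_q K (8 * a) 1 a (by have := ha.pos; omega) (by norm_num) ha.ne_zero
  rw [one_mul] at hns h1
  refine ⟨a, b, ha, hb, ha8, hb8.of_mul_right a, ?_, hns, h1, h2⟩
  have : b % a = 1 % a := hb8.of_mul_left 8
  rw [this, Nat.mod_eq_of_lt ha.one_lt]
end
end NSD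

namespace NSD
open NumberField IsDedekindDomain
open scoped Classical

section
universe u
variable (K : Type u) [Field K]

lemma anis_iff (a : Fin 2 → K) : (∀ x : Fin 2 → K, a 0 * x 0 ^ 2 + a 1 * x 1 ^ 2 = 0 → x = 0) ↔
    (-(a 0 * a 1) ≠ 0 ∧ ¬ IsSquare (-(a 0 * a 1))) := by
  constructor
  · intro h
    have h0 : a 0 ≠ 0 := by
      intro h0
      have := congrFun (h ![1, 0] (by simp [h0])) 0
      simp at this
    have h1 : a 1 ≠ 0 := by
      intro h1
      have := congrFun (h ![0, 1] (by simp [h1])) 1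
      simp at this
    refine ⟨neg_ne_zero.2 (mul_ne_zero h0 h1), ?_⟩
    rintro ⟨r, hr⟩
    have := congrFun (h ![r, a 0] (by simp; linear_combination -a 0 * hr)) 1
    simp at this
    exact h0 this
  · rintro ⟨h0, hs⟩ x hx
    have h0' : a 0 ≠ 0 := by intro h; simp [h] at h0
    have h1' : a 1 ≠ 0 := by intro h; simp [h] at h0
    have hx1 : x 1 = 0 := by
      by_contra h1
      apply hs
      refine ⟨a 0 * x 0 / x 1, ?_⟩
      field_simp
      linear_combination -hx
    rw [hx1] at hx
    have hx0 : x 0 = 0 := by simpa [h0'] using hx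
    ext i
    fin_cases i
    · exact hx0
    · exact hx1

lemma pair_zero (d A B : K) (hd : ¬ IsSquare d) : A ^ 2 - d * B ^ 2 = 0 ↔ A = 0 ∧ B = 0 := by
  constructor
  · intro h
    have hB : B = 0 := by
      by_contra hB
      apply hd
      refine ⟨A / B, ?_⟩
      field_simp
      linear_combination -h
    subst hB
    simpa using h
  · rintro ⟨rfl, rfl⟩; ring

/-- value of the product of three norm forms -/
def frm (a b : ℕ) (x : Fin 10 → K) : K :=
  (x 4 ^ 2 - a * x 5 ^ 2) * (x 6 ^ 2 - b * x 7 ^ 2) * (x 8 ^ 2 - (a * b : ℕ) * x 9 ^ 2)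

variable [NumberField K]

lemma cert (a b : ℕ) (ha : a.Prime) (hb : b.Prime) (ha8 : a % 8 = 1) (hb8 : b % 8 = 1) (hba : b % a = 1)
    (na : ¬IsSquare (a:K)) (nb : ¬IsSquare (b:K)) (nab : ¬IsSquare ((a*b:ℕ):K)) :
    ∃ G : Finset K, ∀ α : K, (α ≠ 0 ∧ ¬ IsSquare α) ↔ ∃ x : Fin 10 → K,
      α * (x 2 ^ 2 - a * α * x 3 ^ 2) * x 0 - 1 = 0 ∧
      (α - a * x 1 ^ 2) * (α - b * x 1 ^ 2) * (α - (a * b : ℕ) * x 1 ^ 2) *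
        ∏ g ∈ G, (x 2 ^ 2 - a * α * x 3 ^ 2 - g * frm K a b x) = 0 := by
  obtain ⟨Γ, hfin, hΓ0, hΓ⟩ := finite_index K a b ha.ne_zero hb.ne_zero na nb nab
  refine ⟨hfin.toFinset.filter (fun g => ¬ inV K a b g), fun α => ⟨?_, ?_⟩⟩
  · rintro ⟨h0, hs⟩
    have easy : ∀ d : ℕ, (d : K) ≠ 0 → (d = a ∨ d = b ∨ d = a * b) → IsSquare (d * α) → ∃ x : Fin 10 → K,
      α * (x 2 ^ 2 - a * α * x 3 ^ 2) * x 0 - 1 = 0 ∧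
      (α - a * x 1 ^ 2) * (α - b * x 1 ^ 2) * (α - (a * b : ℕ) * x 1 ^ 2) *
        ∏ g ∈ hfin.toFinset.filter (fun g => ¬ inV K a b g), (x 2 ^ 2 - a * α * x 3 ^ 2 - g * frm K a b x) = 0 := by
      rintro d hd hdd ⟨r, hr⟩
      refine ⟨![α⁻¹, r / d, 1, 0, 0, 0, 0, 0, 0, 0], ?_, ?_⟩
      · simp [h0]
      · have e : α - d * (r / d) ^ 2 = 0 := by
          field_simp
          linear_combination hr
        change (α - a * (r / d) ^ 2) * (α - b * (r / d) ^ 2) * (α - (a * b : ℕ) * (r / d) ^ 2) * _ = 0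
        rcases hdd with h | h | h
        · rw [← h, e]; ring
        · rw [← h, e]; ring
        · rw [← h, e]; ring
    by_cases h1 : IsSquare ((a : K) * α)
    · exact easy a (Nat.cast_ne_zero.2 ha.ne_zero) (by simp) h1
    by_cases h2 : IsSquare ((b : K) * α)
    · exact easy b (Nat.cast_ne_zero.2 hb.ne_zero) (by simp) h2
    by_cases h3 : IsSquare (((a * b : ℕ) : K) * α)
    · exact easy (a * b) (Nat.cast_ne_zero.2 (mul_ne_zero ha.ne_zero hb.ne_zero)) (by simp) h3
    have : Fact a.Prime := ⟨ha⟩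
    have : Fact b.Prime := ⟨hb⟩
    obtain ⟨w, t, hm0, hmV⟩ := exists_notV K a b ha8 hb8 hba na nb nab α hs h1 h2 h3
    obtain ⟨g, hg, v, hv0, hv, hgv⟩ := hΓ _ hm0
    have hgV : ¬ inV K a b g := fun h => hmV (by rw [hgv]; exact inV_mul a b h hv)
    obtain ⟨x1, y1, x2, y2, x3, y3, hv⟩ := hv
    refine ⟨![(α * (w ^ 2 - a * α * t ^ 2))⁻¹, 0, w, t, x1, y1, x2, y2, x3, y3], ?_, ?_⟩
    · change α * (w ^ 2 - a * α * t ^ 2) * (α * (w ^ 2 - a * α * t ^ 2))⁻¹ - 1 = 0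
      rw [mul_inv_cancel₀ (mul_ne_zero h0 hm0), sub_self]
    · apply mul_eq_zero_of_right
      apply Finset.prod_eq_zero (i := g)
      · simp [hg, hgV]
      · change w ^ 2 - a * α * t ^ 2 - g * ((x1 ^ 2 - a * y1 ^ 2) * (x2 ^ 2 - b * y2 ^ 2) * (x3 ^ 2 - (a * b : ℕ) * y3 ^ 2)) = 0
        rw [hgv, ← hv, sub_self]
  · rintro ⟨x, hA, hB⟩
    have h0 : α ≠ 0 := by rintro rfl; simp at hA
    have hm0 : x 2 ^ 2 - a * α * x 3 ^ 2 ≠ 0 := by intro h; rw [h] at hA; simp at hA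
    refine ⟨h0, ?_⟩
    rintro ⟨r, hr⟩
    have hard : ∀ d : ℕ, ¬ IsSquare (d : K) → α - d * x 1 ^ 2 ≠ 0 := by
      intro d hd h
      have hx : x 1 ≠ 0 := by intro hx; rw [hx] at h; simp at h; exact h0 h
      apply hd
      refine ⟨r / x 1, ?_⟩
      field_simp
      linear_combination hr - h
    have hB' := (mul_eq_zero.1 hB).resolve_left
      (mul_ne_zero (mul_ne_zero (hard a na) (hard b nb)) (hard _ nab))
    obtain ⟨g, hg, hgv⟩ := Finset.prod_eq_zero_iff.1 hB'
    rw [Finset.mem_filter] at hg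
    have hfr : inV K a b (frm K a b x) := ⟨_, _, _, _, _, _, rfl⟩
    have hf0 : frm K a b x ≠ 0 := by intro h; rw [h, mul_zero, sub_zero] at hgv; exact hm0 hgv
    have hmV : inV K a b (x 2 ^ 2 - a * α * x 3 ^ 2) := by
      have := inV_form a b a (by simp) (x 2) (r * x 3)
      convert this using 1
      rw [hr]; ring
    apply hg.2
    have := inV_mul a b hmV (inV_inv a b hfr)
    convert this using 1
    rw [sub_eq_zero.1 hgv]
    field_simp
end

section
open MvPolynomial
universe u
variable (K : Type u) [Field K] [NumberField K]

theorem main : IsDiophantine {a : Fin 2 → K | ∀ x : Fin 2 → K, a 0 * x 0 ^ 2 + a 1 * x 1 ^ 2 = 0 → x = 0} := by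
  obtain ⟨a, b, ha, hb, ha8, hb8, hba, na, nb, nab⟩ := exists_ab K
  obtain ⟨G, hG⟩ := cert K a b ha hb ha8 hb8 hba na nb nab
  let z : Fin 10 → MvPolynomial (Fin 2 ⊕ Fin 10) K := fun i => X (Sum.inr i)
  let α : MvPolynomial (Fin 2 ⊕ Fin 10) K := -(X (Sum.inl 0) * X (Sum.inl 1))
  let F : MvPolynomial (Fin 2 ⊕ Fin 10) K :=
    (z 4 ^ 2 - C (a : K) * z 5 ^ 2) * (z 6 ^ 2 - C (b : K) * z 7 ^ 2) * (z 8 ^ 2 - C ((a * b : ℕ) : K) * z 9 ^ 2)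
  refine ⟨10, (α * (z 2 ^ 2 - C (a : K) * α * z 3 ^ 2) * z 0 - 1) ^ 2 - C (a : K) *
    ((α - C (a : K) * z 1 ^ 2) * (α - C (b : K) * z 1 ^ 2) * (α - C ((a * b : ℕ) : K) * z 1 ^ 2) *
        ∏ g ∈ G, (z 2 ^ 2 - C (a : K) * α * z 3 ^ 2 - C g * F)) ^ 2, fun c => ?_⟩
  refine (anis_iff K c).trans ((hG _).trans ?_)
  refine exists_congr fun x => ?_
  rw [← pair_zero K (a : K) _ _ na]
  have hz : ∀ i, eval (Sum.elim c x) (z i) = x i := fun i => by simp [z]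
  have hα : eval (Sum.elim c x) α = -(c 0 * c 1) := by simp [α]
  have hF : eval (Sum.elim c x) F = frm K a b x := by
    simp only [F, frm, map_sub, map_mul, map_pow, eval_C, hz]
  simp only [map_sub, map_mul, map_pow, map_prod, map_one, eval_C, hz, hα, hF]
end
end NSD

/-- Over a number field `K`, the set of pairs `(a₁, a₂) ∈ K²` such that
`a₁x₁² + a₂x₂² = 0` has only the trivial solution is diophantine over `K`. -/
theorem binary_anisotropic_diophantine_numberField
    (K : Type*) [Field K] [NumberField K] :
    IsDiophantine {a : Fin 2 → K |
      ∀ x : Fin 2 → K, a 0 * x 0 ^ 2 + a 1 * x 1 ^ 2 = 0 → x = 0} := by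
  exact NSD.main K
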